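/- arXiv:2508.15564 — 3 statements merged into one kernel-verified Lean document; each statement's English description precedes it below -/
import Mathlib

section
/- Let 1 ≤ p < ∞, 0 < s < 1, E ⊆ R^N open, Σ ⊆ E compact. Then cap_{s,p}(Σ; E) equals the infimum of the Gagliardo seminorm [φ]^p_{W^{s,p}(R^N)} over Lipschitz functions φ with compact support in E satisfying 0 ≤ φ ≤ 1 on R^N and φ = 1 on Σ. -/
open MeasureTheory Metric Filter
open scoped ENNReal

noncomputable section

abbrev Euc (N : ℕ) := EuclideanSpace ℝ (Fin N)

/-- The (p-th power of the) Gagliardo–Slobodeckii seminorm on `ℝ^N`. -/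
def gag (N : ℕ) (p s : ℝ) (u : Euc N → ℝ) : ℝ :=
  ∫ z : Euc N × Euc N, |u z.1 - u z.2| ^ p / ‖z.1 - z.2‖ ^ ((N : ℝ) + s * p)

/-- `u ∈ C^∞_0(Ω)`: smooth with compact support contained in `Ω`. -/
def TestOn {N : ℕ} (Ω : Set (Euc N)) (u : Euc N → ℝ) : Prop :=
  ContDiff ℝ (⊤ : ℕ∞) u ∧ HasCompactSupport u ∧ tsupport u ⊆ Ω

/-- The fractional principal frequency `λ^s_{p,q}(Ω)`. -/
def lam (N : ℕ) (p q s : ℝ) (Ω : Set (Euc N)) : ℝ :=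
  sInf { c | ∃ u : Euc N → ℝ, TestOn Ω u ∧ (∫ x in Ω, |u x| ^ q) = 1 ∧ c = gag N p s u }

/-- The homogeneous relative `(s,p)`-capacity of `A` in `E`. -/
def fcap (N : ℕ) (p s : ℝ) (A E : Set (Euc N)) : ℝ :=
  sInf { c | ∃ φ : Euc N → ℝ, TestOn E φ ∧ (∀ x ∈ A, 1 ≤ φ x) ∧ c = gag N p s φ }

/-- The fractional `s`-perimeter of a set `A ⊆ ℝ^N`. -/
def sPer (N : ℕ) (s : ℝ) (A : Set (Euc N)) : ℝ :=
  ∫ z : Euc N × Euc N,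
    |A.indicator (fun _ => (1 : ℝ)) z.1 - A.indicator (fun _ => (1 : ℝ)) z.2| /
      ‖z.1 - z.2‖ ^ ((N : ℝ) + s)

/-- An open set with smooth boundary, described as a regular sublevel set of a smooth function. -/
def SmoothBdry {N : ℕ} (O : Set (Euc N)) : Prop :=
  ∃ f : Euc N → ℝ, ContDiff ℝ (⊤ : ℕ∞) f ∧ O = {x | f x < 0} ∧ ∀ x, f x = 0 → fderiv ℝ f x ≠ 0

/-- The sharp constant in the fractional Sobolev inequality. -/
def sobConst (N : ℕ) (p s : ℝ) : ℝ :=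
  sSup {c | ∃ u : Euc N → ℝ, TestOn Set.univ u ∧ gag N p s u = 1 ∧
    c = (∫ x, |u x| ^ ((N : ℝ) * p / (N - s * p))) ^ (((N : ℝ) - s * p) / N)}

/-- Membership in `W̃^{s,p}_0(Ω)`, the closure of `C^∞_0(Ω)` in `W^{s,p}(ℝ^N)`. -/
def MemW0 (N : ℕ) (p s : ℝ) (Ω : Set (Euc N)) (V : Euc N → ℝ) : Prop :=
  ∃ u : ℕ → Euc N → ℝ, (∀ n, TestOn Ω (u n)) ∧
    Filter.Tendsto (fun n => (∫ x, |u n x - V x| ^ p) + gag N p s (fun x => u n x - V x))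
      Filter.atTop (nhds 0)

/-- The relative (local) `p`-capacity of `A` in `E`. -/
def pcap (N : ℕ) (p : ℝ) (A E : Set (Euc N)) : ℝ :=
  sInf { c | ∃ φ : Euc N → ℝ, TestOn E φ ∧ (∀ x ∈ A, 1 ≤ φ x) ∧
    c = ∫ x in E, ‖fderiv ℝ φ x‖ ^ p }

/-- The sharp constant in the local `p`-Poincaré inequality on `E`. -/
def lamLoc (N : ℕ) (p : ℝ) (E : Set (Euc N)) : ℝ :=
  sInf { c | ∃ u : Euc N → ℝ, TestOn E u ∧ (∫ x in E, |u x| ^ p) = 1 ∧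
    c = ∫ x in E, ‖fderiv ℝ u x‖ ^ p }

/-- The compact set `A ⊆ closure (B_r(x0))` is `(s,p,γ)`-negligible. -/
def Negligible (N : ℕ) (p s γ : ℝ) (x0 : Euc N) (r : ℝ) (A : Set (Euc N)) : Prop :=
  fcap N p s A (ball x0 (2 * r)) ≤ γ * fcap N p s (closedBall x0 r) (ball x0 (2 * r))

/-- The fractional `(p,γ)`-capacitary inradius of order `s` of `Ω` (valued in `ℝ≥0∞`). -/
def capInr (N : ℕ) (p s γ : ℝ) (Ω : Set (Euc N)) : ℝ≥0∞ :=
  sSup {R | ∃ r : ℝ, 0 < r ∧ R = ENNReal.ofReal r ∧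
    ∃ x0 : Euc N, Negligible N p s γ x0 r (closedBall x0 r \ Ω)}

end

noncomputable section

lemma ker_integrable (N : ℕ) (hN : 0 < N) (p s : ℝ) (hp : 1 ≤ p) (hs0 : 0 < s) (hs1 : s < 1)
    (K M : ℝ) (hK : 0 ≤ K) (hM : 0 ≤ M) :
    Integrable (fun w : Euc N => (min (K * ‖w‖) M) ^ p / ‖w‖ ^ ((N : ℝ) + s * p)) := by
  have : Nonempty (Fin N) := ⟨⟨0, hN⟩⟩
  have hp0 : 0 < p := by linarith
  refine (integrable_fun_norm_addHaar (μ := (volume : Measure (Euc N)))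
    (f := fun r : ℝ => (min (K * r) M) ^ p / r ^ ((N : ℝ) + s * p))).2 ?_
  have hmeas : Measurable (fun y : ℝ => y ^ (Module.finrank ℝ (Euc N) - 1) •
      ((min (K * y) M) ^ p / y ^ ((N : ℝ) + s * p))) := by
    simp only [smul_eq_mul]
    fun_prop
  have hdim : Module.finrank ℝ (Euc N) = N := by simp
  have hpow : ∀ y : ℝ, 0 < y → y ^ (N - 1) = y ^ ((N : ℝ) - 1) := by
    intro y hy
    rw [← Real.rpow_natCast, Nat.cast_sub hN]; simp
  have hnn : ∀ y : ℝ, 0 < y → 0 ≤ y ^ (N - 1) *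
      ((min (K * y) M) ^ p / y ^ ((N : ℝ) + s * p)) := by
    intro y hy
    have : 0 ≤ min (K * y) M := le_min (by positivity) hM
    positivity
  rw [← Set.Ioc_union_Ioi_eq_Ioi (zero_le_one (α := ℝ))]
  refine IntegrableOn.union ?_ ?_
  · have h1 : IntegrableOn (fun y : ℝ => K ^ p * y ^ (p - 1 - s * p)) (Set.Ioc 0 1) := by
      have := (intervalIntegral.intervalIntegrable_rpow' (a := 0) (b := 1)
        (r := p - 1 - s * p) (by nlinarith)).const_mul (K ^ p)
      rwa [intervalIntegrable_iff_integrableOn_Ioc_of_le zero_le_one] at this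
    refine Integrable.mono' h1 hmeas.aestronglyMeasurable ?_
    filter_upwards [ae_restrict_mem measurableSet_Ioc] with y hy
    rw [hdim, smul_eq_mul, Real.norm_of_nonneg (hnn y hy.1), hpow y hy.1]
    have hy0 := hy.1
    have h2 : (min (K * y) M) ^ p ≤ K ^ p * y ^ p := by
      rw [← Real.mul_rpow hK hy0.le]
      exact Real.rpow_le_rpow (le_min (by positivity) hM) (min_le_left _ _) hp0.le
    calc y ^ ((N : ℝ) - 1) * ((min (K * y) M) ^ p / y ^ ((N : ℝ) + s * p))
        ≤ y ^ ((N : ℝ) - 1) * ((K ^ p * y ^ p) / y ^ ((N : ℝ) + s * p)) := by gcongr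
      _ = K ^ p * (y ^ ((N : ℝ) - 1) * y ^ p / y ^ ((N : ℝ) + s * p)) := by ring
      _ = K ^ p * y ^ (p - 1 - s * p) := by
        rw [← Real.rpow_add hy0, ← Real.rpow_sub hy0]; congr 2; ring
  · have h1 : IntegrableOn (fun y : ℝ => M ^ p * y ^ (- 1 - s * p)) (Set.Ioi 1) :=
      (integrableOn_Ioi_rpow_of_lt (by nlinarith) zero_lt_one).const_mul (M ^ p)
    refine Integrable.mono' h1 hmeas.aestronglyMeasurable ?_
    filter_upwards [ae_restrict_mem measurableSet_Ioi] with y hy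
    have hy0 : 0 < y := zero_lt_one.trans hy
    rw [hdim, smul_eq_mul, Real.norm_of_nonneg (hnn y hy0), hpow y hy0]
    have h2 : (min (K * y) M) ^ p ≤ M ^ p :=
      Real.rpow_le_rpow (le_min (by positivity) hM) (min_le_right _ _) hp0.le
    calc y ^ ((N : ℝ) - 1) * ((min (K * y) M) ^ p / y ^ ((N : ℝ) + s * p))
        ≤ y ^ ((N : ℝ) - 1) * (M ^ p / y ^ ((N : ℝ) + s * p)) := by gcongr
      _ = M ^ p * (y ^ ((N : ℝ) - 1) / y ^ ((N : ℝ) + s * p)) := by ring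
      _ = M ^ p * y ^ (- 1 - s * p) := by
        rw [← Real.rpow_sub hy0]; congr 2; ring

/-- The dominating function. -/
def domF (N : ℕ) (p s K M : ℝ) (B : Set (Euc N)) (z : Euc N × Euc N) : ℝ :=
  (B.indicator (fun _ => (1 : ℝ)) z.1 + B.indicator (fun _ => (1 : ℝ)) z.2) *
    ((min (K * ‖z.1 - z.2‖) M) ^ p / ‖z.1 - z.2‖ ^ ((N : ℝ) + s * p))

lemma domF_integrable (N : ℕ) (hN : 0 < N) (p s : ℝ) (hp : 1 ≤ p) (hs0 : 0 < s) (hs1 : s < 1)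
    (K M : ℝ) (hK : 0 ≤ K) (hM : 0 ≤ M) (B : Set (Euc N)) (hB : IsCompact B) :
    Integrable (domF N p s K M B) := by
  have hk := ker_integrable N hN p s hp hs0 hs1 K M hK hM
  have hi : Integrable (B.indicator (fun _ => (1 : ℝ))) :=
    (integrable_indicator_iff hB.measurableSet).2 (integrableOn_const hB.measure_lt_top.ne)
  have h1 := hi.convolution_integrand (ContinuousLinearMap.mul ℝ ℝ) hk
  have h2 := h1.swap
  refine (h1.add h2).congr (Eventually.of_forall fun z => ?_)
  simp only [domF, Pi.add_apply, Function.comp, Prod.swap, ContinuousLinearMap.mul_apply']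
  rw [norm_sub_rev z.2 z.1]
  ring

lemma integrand_le (N : ℕ) (p s : ℝ) (hp : 1 ≤ p)
    (K M : ℝ) (B : Set (Euc N)) (u : Euc N → ℝ)
    (hu : ∀ x y, |u x - u y| ≤ K * ‖x - y‖) (huM : ∀ x y, |u x - u y| ≤ M)
    (hB : ∀ x, x ∉ B → u x = 0) (z : Euc N × Euc N) :
    |u z.1 - u z.2| ^ p / ‖z.1 - z.2‖ ^ ((N : ℝ) + s * p) ≤ domF N p s K M B z := by
  have hp0 : 0 < p := by linarith
  unfold domF
  have hm : |u z.1 - u z.2| ≤ min (K * ‖z.1 - z.2‖) M := le_min (hu _ _) (huM _ _)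
  have hm0 : 0 ≤ min (K * ‖z.1 - z.2‖) M := (abs_nonneg _).trans hm
  have h1 : |u z.1 - u z.2| ^ p / ‖z.1 - z.2‖ ^ ((N : ℝ) + s * p) ≤
      (min (K * ‖z.1 - z.2‖) M) ^ p / ‖z.1 - z.2‖ ^ ((N : ℝ) + s * p) := by
    gcongr
  have h0 : 0 ≤ (min (K * ‖z.1 - z.2‖) M) ^ p / ‖z.1 - z.2‖ ^ ((N : ℝ) + s * p) := by positivity
  by_cases ha : z.1 ∈ B <;> by_cases hb : z.2 ∈ B <;> simp only [Set.indicator, ha, hb, if_true, if_false]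
  · linarith
  · linarith
  · linarith
  · simp [hB _ ha, hB _ hb, Real.zero_rpow hp0.ne']

lemma integrand_meas (N : ℕ) (p s : ℝ) (u : Euc N → ℝ) (hu : Continuous u) :
    AEStronglyMeasurable (fun z : Euc N × Euc N =>
      |u z.1 - u z.2| ^ p / ‖z.1 - z.2‖ ^ ((N : ℝ) + s * p)) volume := by
  have := hu.measurable
  apply Measurable.aestronglyMeasurable
  fun_prop

lemma integrand_integrable (N : ℕ) (hN : 0 < N) (p s : ℝ) (hp : 1 ≤ p) (hs0 : 0 < s)
    (hs1 : s < 1) (u : Euc N → ℝ) (C : NNReal) (hu : LipschitzWith C u)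
    (hc : HasCompactSupport u) :
    Integrable (fun z : Euc N × Euc N =>
      |u z.1 - u z.2| ^ p / ‖z.1 - z.2‖ ^ ((N : ℝ) + s * p)) := by
  obtain ⟨M, hM⟩ := hc.exists_bound_of_continuous hu.continuous
  have hM0 : 0 ≤ M := (norm_nonneg _).trans (hM 0)
  refine Integrable.mono' (domF_integrable N hN p s hp hs0 hs1 C (M + M) C.2 (by linarith)
    (tsupport u) hc) (integrand_meas N p s u hu.continuous) (Eventually.of_forall fun z => ?_)
  rw [Real.norm_of_nonneg (by positivity)]
  refine integrand_le N p s hp _ _ _ u (fun x y => ?_) (fun x y => ?_)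
    (fun x hx => image_eq_zero_of_notMem_tsupport hx) z
  · simpa [Real.dist_eq, dist_eq_norm] using hu.dist_le_mul x y
  · exact (abs_sub _ _).trans (add_le_add (hM x) (hM y))

lemma mollify (N : ℕ) (φ : Euc N → ℝ) (C : NNReal) (hφ : LipschitzWith C φ)
    (δ : ℝ) (hδ : 0 < δ) :
    ∃ g : Euc N → ℝ, ContDiff ℝ (⊤ : ℕ∞) g ∧ (∀ x y, |g x - g y| ≤ C * ‖x - y‖) ∧
      (∀ x, |g x - φ x| ≤ C * δ) ∧ tsupport g ⊆ cthickening δ (tsupport φ) := by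
  let b : ContDiffBump (0 : Euc N) := ⟨δ / 2, δ, by linarith, by linarith⟩
  have hrO : b.rOut = δ := rfl
  have hli : LocallyIntegrable φ (volume : Measure (Euc N)) := hφ.continuous.locallyIntegrable
  refine ⟨convolution (b.normed volume) φ (ContinuousLinearMap.lsmul ℝ ℝ) volume,
    b.hasCompactSupport_normed.contDiff_convolution_left _ b.contDiff_normed hli, ?_, ?_, ?_⟩
  · intro x y
    have hex := b.hasCompactSupport_normed (μ := volume).convolutionExists_left
      (ContinuousLinearMap.lsmul ℝ ℝ) b.continuous_normed hli
    have hx := (hex x).integrable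
    have hy := (hex y).integrable
    rw [convolution_def, convolution_def, ← integral_sub hx hy, ← Real.norm_eq_abs]
    have : ∫ t, C * ‖x - y‖ * b.normed volume t = C * ‖x - y‖ := by
      rw [integral_const_mul, b.integral_normed, mul_one]
    rw [← this]
    refine norm_integral_le_of_norm_le (b.integrable_normed.const_mul _)
      (Eventually.of_forall fun t => ?_)
    have h1 := hφ.dist_le_mul (x - t) (y - t)
    rw [dist_sub_right, Real.dist_eq, dist_eq_norm] at h1
    have h2 := b.nonneg_normed (μ := volume) t
    simp only [ContinuousLinearMap.lsmul_apply, smul_eq_mul]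
    rw [← mul_sub, norm_mul, Real.norm_of_nonneg h2, Real.norm_eq_abs, mul_comm]
    gcongr
  · intro x
    have := b.dist_normed_convolution_le (μ := volume) (g := φ) (x₀ := x) (ε := C * δ)
      hφ.continuous.aestronglyMeasurable (fun y hy => by
        refine (hφ.dist_le_mul y x).trans ?_
        rw [mem_ball, hrO] at hy
        gcongr)
    rwa [Real.dist_eq] at this
  · refine closure_minimal ?_ isClosed_cthickening
    refine (support_convolution_subset _).trans ?_
    rintro _ ⟨a, ha, c, hc, rfl⟩
    rw [b.support_normed_eq, hrO, mem_ball, dist_zero_right] at ha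
    refine mem_cthickening_of_dist_le _ c _ _ (subset_tsupport _ hc) ?_
    simpa [dist_eq_norm] using ha.le

lemma gag_nonneg (N : ℕ) (p s : ℝ) (u : Euc N → ℝ) : 0 ≤ gag N p s u :=
  integral_nonneg fun z => by positivity

lemma dirA (N : ℕ) (hN : 0 < N) (p s : ℝ) (hp : 1 ≤ p) (hs0 : 0 < s) (hs1 : s < 1)
    (E A : Set (Euc N)) (φ : Euc N → ℝ) (hφ : TestOn E φ) (hφA : ∀ x ∈ A, 1 ≤ φ x) :
    ∃ ψ : Euc N → ℝ, ((∃ K, LipschitzWith K ψ) ∧ HasCompactSupport ψ ∧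
        tsupport ψ ⊆ E ∧ (∀ x, 0 ≤ ψ x ∧ ψ x ≤ 1) ∧ (∀ x ∈ A, ψ x = 1)) ∧
        gag N p s ψ ≤ gag N p s φ := by
  obtain ⟨h1, h2, h3⟩ := hφ
  obtain ⟨C, hC⟩ := h1.lipschitzWith_of_hasCompactSupport h2 (by simp)
  have hle : ∀ x y, |min (max (φ x) 0) 1 - min (max (φ y) 0) 1| ≤ |φ x - φ y| := fun x y =>
    (abs_min_sub_min_le_max _ _ _ _).trans (by
      simpa using (abs_max_sub_max_le_max (φ x) 0 (φ y) 0))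
  have hL : LipschitzWith C (fun x => min (max (φ x) 0) 1) :=
    LipschitzWith.of_dist_le_mul fun x y => (hle x y).trans (hC.dist_le_mul x y)
  have hsupp : Function.support (fun x => min (max (φ x) 0) 1) ⊆ Function.support φ := by
    intro x hx hx'
    apply hx
    simp [hx']
  have hcs : HasCompactSupport (fun x => min (max (φ x) 0) 1) := h2.mono hsupp
  refine ⟨fun x => min (max (φ x) 0) 1, ⟨⟨C, hL⟩, hcs, (closure_mono hsupp).trans h3,
    fun x => ⟨by positivity, min_le_right _ _⟩, fun x hx => ?_⟩, ?_⟩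
  · have := hφA x hx
    exact min_eq_right (this.trans (le_max_left _ _))
  · refine integral_mono
      (integrand_integrable N hN p s hp hs0 hs1 (fun x => min (max (φ x) 0) 1) C hL hcs)
      (integrand_integrable N hN p s hp hs0 hs1 φ C hC h2) fun z => ?_
    exact div_le_div_of_nonneg_right (Real.rpow_le_rpow (abs_nonneg _) (hle z.1 z.2)
      (by linarith)) (Real.rpow_nonneg (norm_nonneg _) _)

lemma dirB (N : ℕ) (hN : 0 < N) (p s : ℝ) (hp : 1 ≤ p) (hs0 : 0 < s) (hs1 : s < 1)
    (E A : Set (Euc N)) (hE : IsOpen E) (φ : Euc N → ℝ) (C : NNReal) (hC : LipschitzWith C φ)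
    (hcs : HasCompactSupport φ) (hsE : tsupport φ ⊆ E) (h01 : ∀ x, 0 ≤ φ x ∧ φ x ≤ 1)
    (hA : ∀ x ∈ A, φ x = 1) :
    ∃ ψ : ℕ → Euc N → ℝ, (∀ n, TestOn E (ψ n) ∧ ∀ x ∈ A, 1 ≤ ψ n x) ∧
      Tendsto (fun n => gag N p s (ψ n)) atTop (nhds (gag N p s φ)) := by
  obtain ⟨d, hd, hdE⟩ := hcs.isCompact.exists_cthickening_subset_open hE hsE
  have hC0 : (0 : ℝ) ≤ C := C.2
  -- choose the scales
  set d0 : ℝ := min d (1 / (2 * (C + 1))) with hd0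
  have hd0p : 0 < d0 := lt_min hd (by positivity)
  have hCd0 : C * d0 ≤ 1 / 2 := by
    have : d0 ≤ 1 / (2 * (C + 1)) := min_le_right _ _
    rw [le_div_iff₀ (by positivity)] at this
    nlinarith
  set r : ℕ → ℝ := fun n => d0 * (1 / ((n : ℝ) + 1)) with hr
  have hrp : ∀ n, 0 < r n := fun n => by positivity
  have hrle : ∀ n, r n ≤ d0 := fun n => by
    have : 1 / ((n : ℝ) + 1) ≤ 1 := by
      rw [div_le_one (by positivity)]; linarith [n.cast_nonneg (α := ℝ)]
    simp only [hr]; nlinarith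
  have hrt : Tendsto r atTop (nhds 0) := by
    have := (tendsto_one_div_add_atTop_nhds_zero_nat (𝕜 := ℝ)).const_mul d0
    rwa [mul_zero] at this
  choose g hg1 hg2 hg3 hg4 using fun n => mollify N φ C hC (r n) (hrp n)
  have hCr : ∀ n, C * r n ≤ 1 / 2 := fun n =>
    (mul_le_mul_of_nonneg_left (hrle n) hC0).trans hCd0
  set a : ℕ → ℝ := fun n => (1 - C * r n)⁻¹ with ha
  have ha0 : ∀ n, 0 < a n := fun n => inv_pos.2 (by linarith [hCr n])
  have ha2 : ∀ n, a n ≤ 2 := fun n => by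
    rw [ha]; exact inv_le_of_inv_le₀ (by norm_num) (by linarith [hCr n])
  have hat : Tendsto a atTop (nhds 1) := by
    have : Tendsto (fun n => 1 - C * r n) atTop (nhds 1) := by
      simpa using (hrt.const_mul (C : ℝ)).const_sub 1
    simpa using this.inv₀ one_ne_zero
  have hgt : ∀ x, Tendsto (fun n => g n x) atTop (nhds (φ x)) := fun x => by
    rw [tendsto_iff_dist_tendsto_zero]
    refine squeeze_zero (fun _ => dist_nonneg) (fun n => hg3 n x) ?_
    simpa using hrt.const_mul (C : ℝ)
  have hB : IsCompact (cthickening d (tsupport φ)) := hcs.isCompact.cthickening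
  have hsub : ∀ n, tsupport (g n) ⊆ cthickening d (tsupport φ) := fun n =>
    (hg4 n).trans (cthickening_mono ((hrle n).trans (min_le_left _ _)) _)
  have hsub' : ∀ n, tsupport (fun x => a n * g n x) ⊆ cthickening d (tsupport φ) := fun n =>
    (closure_mono (Function.support_mul_subset_right _ _)).trans (hsub n)
  refine ⟨fun n x => a n * g n x, fun n => ⟨⟨contDiff_const.mul (hg1 n),
    hB.of_isClosed_subset (isClosed_tsupport _) (hsub' n), (hsub' n).trans hdE⟩, ?_⟩, ?_⟩
  · intro x hx
    have h1 := abs_le.1 (hg3 n x)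
    rw [hA x hx] at h1
    have h2 : 0 < 1 - C * r n := by linarith [hCr n]
    simp only [ha]
    rw [inv_mul_eq_div, le_div_iff₀ h2]
    linarith
  · have hb : ∀ n x, |a n * g n x| ≤ 3 := fun n x => by
      have h1 := abs_le.1 (hg3 n x)
      have h2 := hCr n
      have h3 := h01 x
      rw [abs_mul, abs_of_pos (ha0 n)]
      have h4 : |g n x| ≤ 3 / 2 := abs_le.2 ⟨by linarith, by linarith⟩
      have := mul_le_mul (ha2 n) h4 (abs_nonneg _) (by norm_num)
      linarith
    refine tendsto_integral_of_dominated_convergence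
      (domF N p s (2 * C) (3 + 3) (cthickening d (tsupport φ))) ?_
      (domF_integrable N hN p s hp hs0 hs1 _ _ (by positivity) (by norm_num) _ hB) ?_ ?_
    · exact fun n => integrand_meas N p s (fun x => a n * g n x) (continuous_const.mul (hg1 n).continuous)
    · refine fun n => Eventually.of_forall fun z => ?_
      rw [Real.norm_of_nonneg (div_nonneg (Real.rpow_nonneg (abs_nonneg _) _)
        (Real.rpow_nonneg (norm_nonneg _) _))]
      refine integrand_le N p s hp _ _ _ (fun x => a n * g n x) (fun x y => ?_) (fun x y => ?_)
        (fun x hx => image_eq_zero_of_notMem_tsupport (f := fun x => a n * g n x)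
          fun h => hx (hsub' n h)) z
      · rw [← mul_sub, abs_mul, abs_of_pos (ha0 n), mul_assoc]
        exact mul_le_mul (ha2 n) (hg2 n x y) (abs_nonneg _) (by norm_num)
      · exact (abs_sub _ _).trans (add_le_add (hb n x) (hb n y))
    · refine Eventually.of_forall fun z => ?_
      have h1 : ∀ x, Tendsto (fun n => a n * g n x) atTop (nhds (φ x)) := fun x => by
        simpa using hat.mul (hgt x)
      exact (((h1 z.1).sub (h1 z.2)).abs.rpow_const (Or.inr (by linarith))).div_const _

end

theorem stmt6 (N : ℕ) (hN : 0 < N) (p s : ℝ) (hp : 1 ≤ p) (hs0 : 0 < s) (hs1 : s < 1)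
    (E : Set (Euc N)) (hE : IsOpen E) (A : Set (Euc N)) (hA : IsCompact A) (hAE : A ⊆ E) :
    fcap N p s A E =
      sInf { c | ∃ φ : Euc N → ℝ, (∃ K, LipschitzWith K φ) ∧ HasCompactSupport φ ∧
        tsupport φ ⊆ E ∧ (∀ x, 0 ≤ φ x ∧ φ x ≤ 1) ∧ (∀ x ∈ A, φ x = 1) ∧
        c = gag N p s φ } := by
  set T : Set ℝ := { c | ∃ φ : Euc N → ℝ, (∃ K, LipschitzWith K φ) ∧ HasCompactSupport φ ∧
        tsupport φ ⊆ E ∧ (∀ x, 0 ≤ φ x ∧ φ x ≤ 1) ∧ (∀ x ∈ A, φ x = 1) ∧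
        c = gag N p s φ } with hT
  unfold fcap
  set S : Set ℝ := { c | ∃ φ : Euc N → ℝ, TestOn E φ ∧ (∀ x ∈ A, 1 ≤ φ x) ∧
    c = gag N p s φ } with hS
  have hSb : BddBelow S := ⟨0, by rintro _ ⟨φ, -, -, rfl⟩; exact gag_nonneg N p s φ⟩
  have hTb : BddBelow T := ⟨0, by rintro _ ⟨φ, -, -, -, -, -, rfl⟩; exact gag_nonneg N p s φ⟩
  have hST : ∀ c ∈ S, ∃ c' ∈ T, c' ≤ c := by
    rintro _ ⟨φ, h1, h2, rfl⟩
    obtain ⟨ψ, ⟨a1, a2, a3, a4, a5⟩, hle⟩ := dirA N hN p s hp hs0 hs1 E A φ h1 h2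
    exact ⟨_, ⟨ψ, a1, a2, a3, a4, a5, rfl⟩, hle⟩
  have hTS : ∀ c ∈ T, S.Nonempty ∧ sInf S ≤ c := by
    rintro _ ⟨φ, ⟨C, h1⟩, h2, h3, h4, h5, rfl⟩
    obtain ⟨ψ, hψ, ht⟩ := dirB N hN p s hp hs0 hs1 E A hE φ C h1 h2 h3 h4 h5
    have hm : ∀ n, gag N p s (ψ n) ∈ S := fun n => ⟨ψ n, (hψ n).1, (hψ n).2, rfl⟩
    exact ⟨⟨_, hm 0⟩, ge_of_tendsto' ht fun n => csInf_le hSb (hm n)⟩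
  rcases T.eq_empty_or_nonempty with hT0 | hT0
  · have hS0 : S = ∅ := by
      rw [Set.eq_empty_iff_forall_notMem]
      intro c hc
      obtain ⟨c', hc', -⟩ := hST c hc
      simp [hT0] at hc'
    rw [hT0, hS0]
  · have hS0 : S.Nonempty := (hTS _ hT0.some_mem).1
    refine le_antisymm (le_csInf hT0 fun c hc => (hTS c hc).2) (le_csInf hS0 fun c hc => ?_)
    obtain ⟨c', hc', hle⟩ := hST c hc
    exact (csInf_le hTb hc').trans hle
end

section
/- Let 0 < s < 1 and E ⊆ R^N open. For every compact set Σ ⊆ E, the relative fractional 1-capacity equals cap_{s,1}(Σ; E) = inf{ P_s(O) : O ⋐ E open with smooth boundary, Σ ⊆ O }, where P_s denotes the fractional s-perimeter. In particular, if Σ is the closure of a bounded open convex set then cap_{s,1}(Σ; E) = P_s(Σ). -/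
open MeasureTheory Metric Filter
open scoped ENNReal

/-- L1 modulus of continuity. -/
noncomputable def Dm {N : ℕ} {F : Type*} [NormedAddCommGroup F] (u : Euc N → F) (h : Euc N) : ℝ≥0∞ :=
  ∫⁻ x, ‖u (x + h) - u x‖ₑ

noncomputable def wk (N : ℕ) (s : ℝ) (h : Euc N) : ℝ≥0∞ := ENNReal.ofReal (1 / ‖h‖ ^ ((N : ℝ) + s))

noncomputable def GE {N : ℕ} {F : Type*} [NormedAddCommGroup F] (s : ℝ) (u : Euc N → F) : ℝ≥0∞ :=
  ∫⁻ h, Dm u h * wk N s h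

lemma wk_meas (N : ℕ) (s : ℝ) : Measurable (wk N s) := by
  unfold wk; fun_prop

lemma Dm_meas {N : ℕ} (u : Euc N → ℝ) (hu : Measurable u) : Measurable (Dm u) := by
  unfold Dm
  apply Measurable.lintegral_prod_right'
    (f := fun p : Euc N × Euc N => ‖u (p.2 + p.1) - u p.2‖ₑ)
  fun_prop

lemma gag_aux {N : ℕ} (s : ℝ) (u : Euc N → ℝ) (hu : Measurable u) :
    ∫ z : Euc N × Euc N, |u z.1 - u z.2| / ‖z.1 - z.2‖ ^ ((N : ℝ) + s) = (GE s u).toReal := by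
  rw [integral_eq_lintegral_of_nonneg_ae (Eventually.of_forall fun z => by positivity)
    (Measurable.aestronglyMeasurable (by fun_prop))]
  congr 1
  have h1 : ∀ z : Euc N × Euc N, ENNReal.ofReal (|u z.1 - u z.2| / ‖z.1 - z.2‖ ^ ((N : ℝ) + s))
      = ‖u z.2 - u z.1‖ₑ * wk N s (z.2 - z.1) := by
    intro z
    rw [div_eq_mul_one_div, ENNReal.ofReal_mul (abs_nonneg _), wk, norm_sub_rev, abs_sub_comm,
      ← Real.norm_eq_abs, ofReal_norm]
  simp_rw [h1]
  have hw := wk_meas N s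
  rw [Measure.volume_eq_prod, lintegral_prod _ (by fun_prop)]
  have h2 : ∀ x : Euc N, ∫⁻ y, ‖u y - u x‖ₑ * wk N s (y - x)
      = ∫⁻ h, ‖u (x + h) - u x‖ₑ * wk N s h := by
    intro x
    rw [← lintegral_add_left_eq_self _ x]
    simp
  simp_rw [h2]
  rw [lintegral_lintegral_swap (by fun_prop)]
  unfold GE Dm
  refine lintegral_congr fun h => ?_
  rw [lintegral_mul_const]
  fun_prop

lemma gag_eq {N : ℕ} (s : ℝ) (u : Euc N → ℝ) (hu : Measurable u) :
    gag N 1 s u = (GE s u).toReal := by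
  rw [← gag_aux s u hu]; simp [gag]

noncomputable abbrev ind {N : ℕ} (A : Set (Euc N)) : Euc N → ℝ := A.indicator (fun _ => (1 : ℝ))

lemma ind_meas {N : ℕ} {A : Set (Euc N)} (hA : MeasurableSet A) : Measurable (ind A) :=
  measurable_const.indicator hA

lemma sPer_eq {N : ℕ} (s : ℝ) (A : Set (Euc N)) (hA : MeasurableSet A) :
    sPer N s A = (GE s (ind A)).toReal := by
  rw [← gag_aux s _ (ind_meas hA)]; rfl

lemma GE_mono {N : ℕ} {F F' : Type*} [NormedAddCommGroup F] [NormedAddCommGroup F'] (s : ℝ)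
    (u : Euc N → F) (v : Euc N → F') (h : ∀ h, Dm u h ≤ Dm v h) : GE s u ≤ GE s v :=
  lintegral_mono fun x => mul_le_mul_left (h x) _

lemma wk_fin (N : ℕ) (hN : 0 < N) (s : ℝ) (hs0 : 0 < s) (hs1 : s < 1) :
    ∫⁻ h : Euc N, ENNReal.ofReal (min 1 ‖h‖) * wk N s h < ∞ := by
  have hi : Integrable (fun h : Euc N => min 1 ‖h‖ * (1 / ‖h‖ ^ ((N : ℝ) + s))) := by
    have : Nontrivial (Euc N) := by
      have : Nonempty (Fin N) := ⟨⟨0, hN⟩⟩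
      infer_instance
    have := integrable_fun_norm_addHaar (volume : Measure (Euc N))
      (f := fun r : ℝ => min 1 r * (1 / r ^ ((N : ℝ) + s)))
    rw [this]
    rw [← Set.Ioc_union_Ioi_eq_Ioi (zero_le_one (α := ℝ))]
    refine IntegrableOn.union ?_ ?_
    · have h1 : IntegrableOn (fun r : ℝ => r ^ (-s)) (Set.Ioc 0 1) := by
        rw [← intervalIntegrable_iff_integrableOn_Ioc_of_le zero_le_one]
        exact intervalIntegral.intervalIntegrable_rpow' (by linarith)
      refine h1.congr_fun ?_ measurableSet_Ioc
      intro r hr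
      have hr0 : 0 < r := hr.1
      simp only [smul_eq_mul, finrank_euclideanSpace, Fintype.card_fin]
      rw [min_eq_right hr.2, one_div, ← Real.rpow_neg hr0.le, ← Real.rpow_natCast,
        Nat.cast_sub hN, ← Real.rpow_one_add' hr0.le, ← Real.rpow_add hr0]
      · congr 1; push_cast; ring
      · have : (1:ℝ) ≤ N := by exact_mod_cast hN
        by_contra hh; linarith
    · have h1 : IntegrableOn (fun r : ℝ => r ^ (-s-1)) (Set.Ioi 1) :=
        integrableOn_Ioi_rpow_of_lt (by linarith) one_pos
      refine h1.congr_fun ?_ measurableSet_Ioi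
      intro r hr
      have hr0 : 0 < r := lt_trans one_pos hr
      simp only [smul_eq_mul, finrank_euclideanSpace, Fintype.card_fin]
      rw [min_eq_left (le_of_lt hr), one_div, ← Real.rpow_neg hr0.le, ← Real.rpow_natCast,
        Nat.cast_sub hN, one_mul, ← Real.rpow_add hr0]
      congr 1; push_cast; ring
  have := hi.lintegral_lt_top
  refine lt_of_eq_of_lt (lintegral_congr fun h => ?_) this
  rw [ENNReal.ofReal_mul (by positivity)]; rfl

lemma GE_fin {N : ℕ} (hN : 0 < N) (s : ℝ) (hs0 : 0 < s) (hs1 : s < 1) {F : Type*}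
    [NormedAddCommGroup F] (u : Euc N → F) (C r : ℝ) (hr : 0 < r)
    (h1 : ∀ h, Dm u h ≤ ENNReal.ofReal C)
    (h2 : ∀ h, ‖h‖ ≤ r → Dm u h ≤ ENNReal.ofReal (C * ‖h‖)) : GE s u < ∞ := by
  wlog hC : 0 ≤ C generalizing C
  · refine this (max C 0) (fun h => (h1 h).trans (ENNReal.ofReal_le_ofReal (le_max_left _ _)))
      (fun h hh => (h2 h hh).trans (ENNReal.ofReal_le_ofReal ?_)) (le_max_right _ _)
    exact mul_le_mul_of_nonneg_right (le_max_left _ _) (norm_nonneg _)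
  have key : ∀ h, Dm u h ≤ ENNReal.ofReal (C * (1 + 1/r)) * ENNReal.ofReal (min 1 ‖h‖) := by
    intro h
    rw [← ENNReal.ofReal_mul (by positivity)]
    have hr' : 0 < 1 / r := by positivity
    rcases le_total 1 ‖h‖ with h3 | h3
    · rw [min_eq_left h3]
      refine (h1 h).trans (ENNReal.ofReal_le_ofReal ?_)
      nlinarith [mul_nonneg hC hr'.le]
    · rw [min_eq_right h3]
      rcases le_total ‖h‖ r with h4 | h4
      · refine (h2 h h4).trans (ENNReal.ofReal_le_ofReal ?_)
        have := mul_nonneg (mul_nonneg hC hr'.le) (norm_nonneg h)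
        nlinarith
      · refine (h1 h).trans (ENNReal.ofReal_le_ofReal ?_)
        have h5 : 1 ≤ 1 / r * ‖h‖ := by
          rw [one_div_mul_eq_div, le_div_iff₀ hr]; linarith
        have := mul_le_mul_of_nonneg_left h5 hC
        have := mul_nonneg hC (norm_nonneg h)
        nlinarith
  calc GE s u ≤ ∫⁻ h, ENNReal.ofReal (C * (1 + 1/r)) *
          (ENNReal.ofReal (min 1 ‖h‖) * wk N s h) := by
        refine lintegral_mono fun h => ?_
        rw [← mul_assoc]
        exact mul_le_mul_left (key h) _
    _ = ENNReal.ofReal (C * (1 + 1/r)) * ∫⁻ h : Euc N, ENNReal.ofReal (min 1 ‖h‖) * wk N s h := by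
        rw [lintegral_const_mul]
        have := wk_meas N s
        fun_prop
    _ < ∞ := ENNReal.mul_lt_top ENNReal.ofReal_lt_top (wk_fin N hN s hs0 hs1)

lemma GE_fin_smooth {N : ℕ} (hN : 0 < N) (s : ℝ) (hs0 : 0 < s) (hs1 : s < 1) {F : Type*}
    [NormedAddCommGroup F] [NormedSpace ℝ F] (u : Euc N → F) (hu : ContDiff ℝ (⊤ : ℕ∞) u)
    (hc : HasCompactSupport u) : GE s u < ∞ := by
  obtain ⟨L, hL⟩ := ContDiff.lipschitzWith_of_hasCompactSupport hc hu (by simp)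
  obtain ⟨M, hM⟩ := hc.exists_bound_of_continuous hu.continuous
  have hM0 : 0 ≤ M := (norm_nonneg _).trans (hM 0)
  set S := tsupport u with hS
  have hSc : IsCompact S := hc
  have hvol : volume S < ∞ := hSc.measure_lt_top
  have key : ∀ h : Euc N, ∀ b : ℝ, (∀ x, ‖u (x + h) - u x‖ ≤ b) →
      Dm u h ≤ ENNReal.ofReal b * (2 * volume S) := by
    intro h b hb
    have : ∀ x, ‖u (x + h) - u x‖ₑ ≤
        (((fun x => x + h) ⁻¹' S) ∪ S).indicator (fun _ => ENNReal.ofReal b) x := by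
      intro x
      by_cases hx : x ∈ (((fun x => x + h) ⁻¹' S) ∪ S)
      · rw [Set.indicator_of_mem hx, ← ofReal_norm]
        exact ENNReal.ofReal_le_ofReal (hb x)
      · rw [Set.mem_union, not_or] at hx
        have h1 : u (x + h) = 0 := image_eq_zero_of_notMem_tsupport hx.1
        have h2 : u x = 0 := image_eq_zero_of_notMem_tsupport hx.2
        simp [h1, h2]
    refine (lintegral_mono this).trans ?_
    have hSm : MeasurableSet S := (isClosed_tsupport u).measurableSet
    rw [lintegral_indicator (((measurable_add_const h) hSm).union hSm), setLIntegral_const]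
    gcongr
    refine (measure_union_le _ _).trans ?_
    rw [measure_preimage_add_right, two_mul]
  refine GE_fin hN s hs0 hs1 u ((2 * M + L) * (2 * volume S).toReal) 1 one_pos ?_ ?_
  · intro h
    refine (key h (2 * M + L) ?_).trans ?_
    · intro x
      have := norm_sub_le (u (x + h)) (u x)
      have := hM x; have := hM (x + h); have := L.2
      linarith [NNReal.coe_nonneg L]
    · rw [ENNReal.ofReal_mul (by positivity), ENNReal.ofReal_toReal]
      exact (ENNReal.mul_lt_top (by simp) hvol).ne
  · intro h _
    refine (key h ((2 * M + L) * ‖h‖) ?_).trans ?_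
    · intro x
      have := hL.dist_le_mul (x + h) x
      rw [dist_eq_norm, dist_eq_norm] at this
      simp only [add_sub_cancel_left] at this
      nlinarith [norm_nonneg h]
    · rw [mul_right_comm, ENNReal.ofReal_mul (p := (2 * M + L) * ‖h‖) (by positivity), ENNReal.ofReal_toReal]
      exact (ENNReal.mul_lt_top (by simp) hvol).ne


lemma mollify_s7 {N : ℕ} (E O A : Set (Euc N)) (hO : MeasurableSet O) (hb : Bornology.IsBounded O)
    (δ : ℝ) (hδ : 0 < δ) (hA : ∀ x ∈ A, ball x δ ⊆ O) (hOE : cthickening δ O ⊆ E) :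
    ∃ φ : Euc N → ℝ, TestOn E φ ∧ (∀ x ∈ A, φ x = 1) ∧ ∀ h, Dm φ h ≤ Dm (ind O) h := by
  let b : ContDiffBump (0 : Euc N) := ⟨δ / 2, δ, by positivity, by linarith⟩
  let ρ : Euc N → ℝ := b.normed volume
  have hρm : Measurable ρ := b.continuous_normed.measurable
  have hρ0 : ∀ x, 0 ≤ ρ x := b.nonneg_normed
  have hρ1 : ∫⁻ x, ENNReal.ofReal (ρ x) = 1 := by
    rw [← ofReal_integral_eq_lintegral_ofReal b.integrable_normed (Eventually.of_forall hρ0),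
      b.integral_normed, ENNReal.ofReal_one]
  have him := ind_meas hO
  have hIntO : Integrable (ind O) := by
    rw [integrable_indicator_iff hO]
    exact integrableOn_const (hb.measure_lt_top.ne)
  let φ : Euc N → ℝ := convolution ρ (ind O) (ContinuousLinearMap.lsmul ℝ ℝ) volume
  have hφ : ∀ x, φ x = ∫ t, ρ t * ind O (x - t) := fun x => rfl
  have hexists : ∀ x, Integrable (fun t => ρ t * ind O (x - t)) := by
    intro x
    refine b.integrable_normed.mul_bdd (c := 1) ?_ ?_
    · exact (him.comp (measurable_const.sub measurable_id)).aestronglyMeasurable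
    · refine Eventually.of_forall fun t => ?_
      by_cases h : x - t ∈ O <;> simp [ind, h]
  have hsupp : tsupport φ ⊆ cthickening δ O := by
    refine closure_minimal ?_ isClosed_cthickening
    intro x hx
    by_contra hx'
    apply hx
    rw [hφ]
    refine integral_eq_zero_of_ae (Eventually.of_forall fun t => ?_)
    by_cases ht : t ∈ ball (0 : Euc N) δ
    · have : x - t ∉ O := by
        intro h
        apply hx'
        refine mem_cthickening_of_dist_le x (x - t) δ O h ?_
        rw [dist_eq_norm]
        simp only [mem_ball, dist_zero_right] at ht
        simpa using ht.le
      simp [ind, this]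
    · have : ρ t = 0 := by
        have : t ∉ Function.support ρ := by
          rw [ContDiffBump.support_normed_eq]; exact ht
        simpa using this
      simp [this]
  refine ⟨φ, ⟨?_, ?_, hsupp.trans hOE⟩, ?_, ?_⟩
  · exact HasCompactSupport.contDiff_convolution_left _ b.hasCompactSupport_normed
      b.contDiff_normed hIntO.locallyIntegrable
  · exact (hb.cthickening.isCompact_closure).of_isClosed_subset (isClosed_tsupport _)
      (hsupp.trans subset_closure)
  · intro x hx
    have hxO : x ∈ O := hA x hx (mem_ball_self hδ)
    have := b.normed_convolution_eq_right (μ := volume) (g := ind O) (x₀ := x) (by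
      intro y hy
      simp [ind, hxO, hA x hx hy])
    refine this.trans ?_
    simp [ind, hxO]
  · intro h
    unfold Dm
    calc ∫⁻ x, ‖φ (x + h) - φ x‖ₑ
        ≤ ∫⁻ x, ∫⁻ t, ENNReal.ofReal (ρ t) * ‖ind O (x - t + h) - ind O (x - t)‖ₑ := by
          refine lintegral_mono fun x => ?_
          simp only []
          rw [hφ, hφ, ← integral_sub (hexists _) (hexists _)]
          refine (enorm_integral_le_lintegral_enorm _).trans (le_of_eq ?_)
          refine lintegral_congr fun t => ?_
          rw [← mul_sub, enorm_mul, Real.enorm_of_nonneg (hρ0 t), sub_add_eq_add_sub]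
      _ = ∫⁻ t, ∫⁻ x, ENNReal.ofReal (ρ t) * ‖ind O (x - t + h) - ind O (x - t)‖ₑ := by
          rw [lintegral_lintegral_swap]
          fun_prop
      _ = ∫⁻ t, ENNReal.ofReal (ρ t) * ∫⁻ x, ‖ind O (x + h) - ind O x‖ₑ := by
          refine lintegral_congr fun t => ?_
          rw [lintegral_const_mul _ (by fun_prop)]
          congr 1
          exact lintegral_sub_right_eq_self (fun x => ‖ind O (x + h) - ind O x‖ₑ) t
      _ = _ := by
          rw [lintegral_mul_const _ (by fun_prop), hρ1, one_mul]

/-- cutoff -/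
lemma cutoff {N : ℕ} (E A : Set (Euc N)) (hE : IsOpen E) (hA : IsCompact A) (hAE : A ⊆ E) :
    ∃ φ : Euc N → ℝ, TestOn E φ ∧ ∃ U, IsOpen U ∧ A ⊆ U ∧ ∀ x ∈ U, φ x = 1 := by
  obtain ⟨δ, hδ, hδE⟩ := hA.exists_cthickening_subset_open hE hAE
  obtain ⟨φ, h1, h2, -⟩ := mollify_s7 E (thickening (δ / 2) A) (thickening (δ / 4) A)
    isOpen_thickening.measurableSet (hA.isBounded.thickening) (δ / 4) (by positivity) (by
      intro x hx y hy
      rw [mem_thickening_iff] at hx ⊢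
      obtain ⟨z, hz, hz'⟩ := hx
      refine ⟨z, hz, ?_⟩
      have := dist_triangle y x z
      rw [mem_ball] at hy
      linarith) (by
      refine ((cthickening_thickening_subset (by positivity) (δ/2) A).trans
        (cthickening_mono (by linarith) A)).trans hδE)
  exact ⟨φ, h1, thickening (δ / 4) A, isOpen_thickening, self_subset_thickening (by positivity) A,
    h2⟩

lemma sPer_smul {N : ℕ} (s : ℝ) (K : Set (Euc N)) (t : ℝ) (ht : 0 < t) :
    sPer N s ((fun x => t⁻¹ • x) ⁻¹' K) = t ^ ((N : ℝ) - s) * sPer N s K := by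
  have : (volume : Measure (Euc N × Euc N)).IsAddHaarMeasure :=
    Measure.prod.instIsAddHaarMeasure volume volume
  have h := Measure.integral_comp_smul (volume : Measure (Euc N × Euc N))
    (fun z : Euc N × Euc N => |ind K z.1 - ind K z.2| / ‖z.1 - z.2‖ ^ ((N : ℝ) + s)) t⁻¹
  have h2 : ∀ z : Euc N × Euc N,
      |ind K (t⁻¹ • z).1 - ind K (t⁻¹ • z).2| / ‖(t⁻¹ • z).1 - (t⁻¹ • z).2‖ ^ ((N : ℝ) + s)
      = t ^ ((N : ℝ) + s) * (|ind ((fun x => t⁻¹ • x) ⁻¹' K) z.1 -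
        ind ((fun x => t⁻¹ • x) ⁻¹' K) z.2| / ‖z.1 - z.2‖ ^ ((N : ℝ) + s)) := by
    intro z
    rw [Prod.smul_fst, Prod.smul_snd, ← smul_sub, norm_smul,
      Real.mul_rpow (norm_nonneg _) (norm_nonneg _), Real.norm_of_nonneg (by positivity),
      Real.inv_rpow ht.le]
    have hi : ∀ x, ind ((fun x => t⁻¹ • x) ⁻¹' K) x = ind K (t⁻¹ • x) := fun x => rfl
    rw [hi, hi]
    have : t ^ ((N : ℝ) + s) ≠ 0 := by positivity
    rw [div_mul_eq_div_div, div_inv_eq_mul]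
    ring
  simp_rw [h2] at h
  rw [integral_const_mul] at h
  have h3 : Module.finrank ℝ (Euc N × Euc N) = N + N := by simp
  rw [h3] at h
  change t ^ ((N : ℝ) + s) * sPer N s _ = _ • sPer N s K at h
  have h4 : t ^ ((N : ℝ) + s) ≠ 0 := by positivity
  have h5 : |((t⁻¹ ^ (N + N))⁻¹)| = t ^ ((N : ℝ) + s) * t ^ ((N : ℝ) - s) := by
    rw [abs_of_nonneg (by positivity), inv_pow, inv_inv, ← Real.rpow_natCast, ← Real.rpow_add ht]
    congr 1; push_cast; ring
  rw [h5, smul_eq_mul, mul_assoc] at h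
  exact mul_left_cancel₀ h4 h

/-- piecewise translation counting -/
lemma orbit_count {N : ℕ} (P : Set (Euc N)) (hP : MeasurableSet P) (h : Euc N)
    (g : Euc N → ℝ≥0∞) (hg : Measurable g)
    (hdis : ∀ x ∈ P, ∀ n : ℕ, x + (n + 1) • h ∉ P)
    (hsum : ∀ x ∈ P, 1 ≤ ∑' n : ℕ, g (x + n • h)) :
    volume P ≤ ∫⁻ x in ⋃ n : ℕ, (fun x => x - n • h) ⁻¹' P, g x := by
  rw [lintegral_iUnion]
  · calc volume P = ∫⁻ x in P, 1 := by simp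
      _ ≤ ∫⁻ x in P, ∑' n : ℕ, g (x + n • h) := setLIntegral_mono' hP hsum
      _ = ∑' n : ℕ, ∫⁻ x in P, g (x + n • h) := by
          rw [lintegral_tsum]
          intro n; fun_prop
      _ ≤ _ := by
          refine ENNReal.tsum_le_tsum fun n => le_of_eq ?_
          rw [← lintegral_indicator hP, ← lintegral_indicator ((measurable_sub_const _) hP),
            ← lintegral_add_right_eq_self (((fun x => x - n • h) ⁻¹' P).indicator g) (n • h)]
          refine lintegral_congr fun x => ?_
          by_cases hx : x ∈ P <;> simp [hx]
  · exact fun n => (measurable_sub_const _) hP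
  · have key : ∀ m n : ℕ, m < n → Disjoint ((fun x : Euc N => x - m • h) ⁻¹' P)
        ((fun x : Euc N => x - n • h) ⁻¹' P) := by
      intro m n hmn
      rw [Set.disjoint_left]
      intro x hx hx'
      obtain ⟨k, rfl⟩ := Nat.exists_eq_add_of_lt hmn
      apply hdis _ hx' k
      have hx2 : x - m • h ∈ P := hx
      convert hx2 using 1
      module
    intro m n hmn
    rcases lt_or_gt_of_ne hmn with h | h
    · exact key m n h
    · exact (key n m h).symm

lemma tele_one {N : ℕ} (φ : Euc N → ℝ) (hφ : HasCompactSupport φ) (h : Euc N) (hh : h ≠ 0)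
    (x : Euc N) (hx : 1 ≤ φ x) :
    1 ≤ ∑' n : ℕ, ‖φ (x + (n + 1) • h) - φ (x + n • h)‖ₑ := by
  obtain ⟨R, hR⟩ := hφ.isCompact.isBounded.subset_closedBall (0 : Euc N)
  obtain ⟨n, hn⟩ := exists_nat_gt ((R + ‖x‖) / ‖h‖)
  have hn0 : 0 < ‖h‖ := norm_pos_iff.2 hh
  have hz : φ (x + n • h) = 0 := by
    apply image_eq_zero_of_notMem_tsupport
    intro hmem
    have := hR hmem
    simp only [mem_closedBall, dist_zero_right] at this
    rw [div_lt_iff₀ hn0] at hn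
    have h1 : ‖n • h‖ = n * ‖h‖ := by
      rw [← Nat.cast_smul_eq_nsmul ℝ, norm_smul]; simp
    have h2 : ‖n • h‖ ≤ ‖x + n • h‖ + ‖x‖ := by
      have := norm_sub_le (x + n • h) x
      simpa using this
    linarith
  have ht : ∑ i ∈ Finset.range n, (φ (x + (i + 1) • h) - φ (x + i • h)) = φ (x + n • h) - φ x := by
    rw [Finset.sum_range_sub (fun i => φ (x + i • h))]; simp
  calc (1 : ℝ≥0∞) ≤ ‖φ (x + n • h) - φ x‖ₑ := by
        rw [hz, zero_sub, enorm_neg, Real.enorm_of_nonneg (by linarith), ← ENNReal.ofReal_one]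
        exact ENNReal.ofReal_le_ofReal hx
    _ ≤ ∑ i ∈ Finset.range n, ‖φ (x + (i + 1) • h) - φ (x + i • h)‖ₑ := by
        rw [← ht]; exact enorm_sum_le _ _
    _ ≤ _ := ENNReal.sum_le_tsum _

lemma convex_between {N : ℕ} {K : Set (Euc N)} (hK : Convex ℝ K) (x h : Euc N) (n : ℕ)
    (h0 : x ∈ K) (hn : x + (n + 1) • h ∈ K) : x + h ∈ K := by
  have := hK h0 hn (a := n / (n + 1 : ℝ)) (b := 1 / (n + 1 : ℝ)) (by positivity) (by positivity)
    (by field_simp)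
  convert this using 1
  rw [← Nat.cast_smul_eq_nsmul ℝ]
  push_cast
  have h1 : (n / (n + 1 : ℝ)) = 1 - 1 / (n + 1 : ℝ) := by field_simp; ring
  have h2 : (1 / (n + 1 : ℝ)) * (n + 1 : ℝ) = 1 := by field_simp
  rw [h1, smul_add, smul_smul, h2]
  module

lemma convex_min {N : ℕ} (K : Set (Euc N)) (hKm : MeasurableSet K) (hK : Convex ℝ K)
    (φ : Euc N → ℝ) (hφ : HasCompactSupport φ) (hφm : Measurable φ) (h1 : ∀ x ∈ K, 1 ≤ φ x)
    (h : Euc N) : Dm (ind K) h ≤ Dm φ h := by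
  by_cases hh : h = 0
  · simp [hh, Dm]
  set P := K ∩ {x | x + h ∉ K} with hP
  set Q := {x | x ∉ K} ∩ {x | x + h ∈ K} with hQ
  have hsm : MeasurableSet {x : Euc N | x + h ∈ K} := (measurable_add_const h) hKm
  have hPm : MeasurableSet P := hKm.inter hsm.compl
  have hQm : MeasurableSet Q := hKm.compl.inter hsm
  have hd : Dm (ind K) h = volume P + volume Q := by
    have : ∀ x, ‖ind K (x + h) - ind K x‖ₑ = P.indicator 1 x + Q.indicator 1 x := by
      intro x
      by_cases a : x ∈ K <;> by_cases b : x + h ∈ K <;> simp [ind, hP, hQ, a, b]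
    unfold Dm
    simp_rw [this]
    rw [lintegral_add_left (measurable_one.indicator hPm), lintegral_indicator_one hPm,
      lintegral_indicator_one hQm]
  rw [hd]
  set g : Euc N → ℝ≥0∞ := fun x => ‖φ (x + h) - φ x‖ₑ with hg
  have hgm : Measurable g := by fun_prop
  have hp := orbit_count P hPm h g hgm (by
      rintro x ⟨hx, hx'⟩ n ⟨hy, -⟩
      exact hx' (convex_between hK x h n hx hy)) (by
      rintro x ⟨hx, hx'⟩
      have := tele_one φ hφ h hh x (h1 x hx)
      simpa [hg, add_smul, add_assoc] using this)
  have hq := orbit_count Q hQm (-h) g hgm (by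
      rintro x ⟨hx, hx'⟩ n ⟨-, hy⟩
      apply hx
      have hy' : (x + h) + (n + 1) • (-h) ∈ K := by
        have hy2 : x + (n + 1) • (-h) + h ∈ K := hy
        convert hy2 using 1; module
      have := convex_between hK (x + h) (-h) n hx' hy'
      simpa using this) (by
      rintro x ⟨hx, hx'⟩
      have := tele_one φ hφ (-h) (neg_ne_zero.2 hh) (x + h) (h1 _ hx')
      refine this.trans (le_of_eq ?_)
      refine tsum_congr fun n => ?_
      rw [hg]
      simp only []
      rw [enorm_sub_rev]
      congr 3 <;> module)
  refine (add_le_add hp hq).trans ?_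
  rw [← lintegral_union]
  · exact setLIntegral_le_lintegral _ _
  · exact MeasurableSet.iUnion fun n => (measurable_sub_const _) hQm
  · rw [Set.disjoint_left]
    intro x hx hx'
    simp only [Set.mem_iUnion, Set.mem_preimage] at hx hx'
    obtain ⟨n, hn, hn'⟩ := hx
    obtain ⟨m, hm, hm'⟩ := hx'
    apply hn'
    refine convex_between hK _ h (n + m) hn ?_
    have hm2 : x - m • (-h) + h ∈ K := hm'
    convert hm2 using 1
    module


lemma coarea_pt (a b : ℝ) : ‖a - b‖ₑ =
    ∫⁻ t : ℝ, ‖(if t < a then (1:ℝ) else 0) - (if t < b then (1:ℝ) else 0)‖ₑ := by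
  wlog hab : b ≤ a generalizing a b
  · rw [enorm_sub_rev, this b a (le_of_not_ge hab)]
    exact lintegral_congr fun t => enorm_sub_rev _ _
  have : ∀ t : ℝ, ‖(if t < a then (1:ℝ) else 0) - (if t < b then (1:ℝ) else 0)‖ₑ
      = (Set.Ico b a).indicator 1 t := by
    intro t
    by_cases h1 : t < a <;> by_cases h2 : t < b
    · simp [h1, h2]
    · simp [h1, h2, not_lt.1 h2]
    · exact absurd (h2.trans_le hab) h1
    · simp [h1, h2]
  simp_rw [this]
  rw [lintegral_indicator_one measurableSet_Ico, Real.volume_Ico,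
    Real.enorm_of_nonneg (by linarith)]

lemma coarea {N : ℕ} (s : ℝ) (ψ : Euc N → ℝ) (hψ : Measurable ψ) :
    GE s ψ = ∫⁻ t : ℝ, GE s (ind {x | t < ψ x}) ∧
    Measurable (fun t : ℝ => GE s (ind {x | t < ψ x})) := by
  have hi : ∀ (t : ℝ) (x : Euc N), ind {x | t < ψ x} x = if t < ψ x then (1:ℝ) else 0 := by
    intro t x; simp [ind, Set.indicator]
  unfold GE Dm
  simp_rw [hi]
  have hw := wk_meas N s
  have hm : Measurable (fun p : (ℝ × Euc N) × Euc N =>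
      ‖(if p.1.1 < ψ (p.2 + p.1.2) then (1:ℝ) else 0) - (if p.1.1 < ψ p.2 then (1:ℝ) else 0)‖ₑ) := by
    refine Measurable.enorm (Measurable.sub ?_ ?_)
    · exact Measurable.ite (measurableSet_lt (by fun_prop) (by fun_prop)) measurable_const
        measurable_const
    · exact Measurable.ite (measurableSet_lt (by fun_prop) (by fun_prop)) measurable_const
        measurable_const
  have hm2 : Measurable (fun p : ℝ × Euc N => (∫⁻ x, ‖(if p.1 < ψ (x + p.2) then (1:ℝ) else 0)
      - (if p.1 < ψ x then (1:ℝ) else 0)‖ₑ) * wk N s p.2) :=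
    (hm.lintegral_prod_right').mul (hw.comp measurable_snd)
  refine ⟨?_, hm2.lintegral_prod_right'⟩
  rw [lintegral_lintegral_swap hm2.aemeasurable]
  refine lintegral_congr fun h => ?_
  rw [lintegral_mul_const]
  · congr 1
    rw [lintegral_lintegral_swap]
    · exact lintegral_congr fun x => coarea_pt _ _
    · exact (hm.comp (f := fun p : ℝ × Euc N => ((p.1, h), p.2)) (by fun_prop)).aemeasurable
  · exact (hm.lintegral_prod_right').comp (f := fun t : ℝ => (t, h)) (by fun_prop)

lemma good_level {N : ℕ} (s : ℝ) (ψ : Euc N → ℝ) (hψ : Measurable ψ) (a b : ℝ) (hab : a < b)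
    (Z : Set ℝ) (hZ : Z.Countable) :
    ∃ t, a < t ∧ t < b ∧ t ∉ Z ∧ GE s (ind {x | t < ψ x}) ≤ GE s ψ / ENNReal.ofReal (b - a) := by
  obtain ⟨h1, h2⟩ := coarea s ψ hψ
  have hne : (volume.restrict (Set.Ioo a b)) ≠ 0 := by
    rw [Ne, Measure.restrict_eq_zero, Real.volume_Ioo]
    simp [hab]
  obtain ⟨t, ht, ht'⟩ := exists_notMem_null_le_laverage (N := Z ∪ (Set.Ioo a b)ᶜ) hne
    h2.aemeasurable (by
      rw [measure_union_null_iff]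
      refine ⟨?_, ?_⟩
      · exact le_antisymm ((Measure.restrict_apply_le _ _).trans (hZ.measure_zero _).le) bot_le
      · rw [Measure.restrict_apply measurableSet_Ioo.compl]; simp)
  simp only [Set.mem_union, not_or, Set.mem_compl_iff, not_not] at ht
  refine ⟨t, ht.2.1, ht.2.2, ht.1, ht'.trans ?_⟩
  rw [setLAverage_eq, Real.volume_Ioo, h1]
  gcongr
  exact Measure.restrict_le_self

lemma morse {N : ℕ} (φ : Euc N → ℝ) (hφ : ContDiff ℝ (⊤ : ℕ∞) φ) (r : ℝ) (hr : 0 < r) :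
    ∃ v : Euc N, ‖v‖ < r ∧ {x | fderiv ℝ φ x + innerSL ℝ v = 0}.Countable := by
  set g : Euc N → Euc N := fun x => (InnerProductSpace.toDual ℝ (Euc N)).symm (fderiv ℝ φ x) with hg
  have hgd : Differentiable ℝ g := by
    have h1 : ContDiff ℝ 1 (fderiv ℝ φ) := hφ.fderiv_right (by norm_cast)
    have h2 := h1.differentiable (by simp)
    exact ((InnerProductSpace.toDual ℝ (Euc N)).symm.toContinuousLinearEquiv.toContinuousLinearMap.differentiable).comp h2
  have hnull := addHaar_image_eq_zero_of_det_fderivWithin_eq_zero (volume : Measure (Euc N))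
    (f := g) (s := {x | (fderiv ℝ g x).det = 0}) (f' := fderiv ℝ g)
    (fun x _ => (hgd x).hasFDerivAt.hasFDerivWithinAt) (fun x hx => hx)
  have hpos : 0 < volume (ball (0 : Euc N) r) := measure_ball_pos _ _ hr
  obtain ⟨w, hw, hw'⟩ : ∃ w ∈ ball (0 : Euc N) r, w ∉ g '' {x | (fderiv ℝ g x).det = 0} := by
    by_contra hcon
    push Not at hcon
    have : volume (ball (0 : Euc N) r) ≤ 0 := hnull ▸ measure_mono hcon
    exact absurd hpos (not_lt.2 this)
  refine ⟨-w, by simpa using hw, ?_⟩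
  have hset : {x | fderiv ℝ φ x + innerSL ℝ (-w) = 0} = {x | g x = w} := by
    ext x
    simp only [Set.mem_ofPred_eq, hg]
    rw [LinearIsometryEquiv.symm_apply_eq, map_neg, add_neg_eq_zero]
    rfl
  rw [hset]
  refine (HereditarilyLindelofSpace.isLindelof _).countable_of_isDiscrete ?_
  rw [isDiscrete_iff_nhdsNE]
  intro x hx
  have hdet : (fderiv ℝ g x).det ≠ 0 := fun h => hw' ⟨x, h, hx⟩
  have hev := (hgd x).hasFDerivAt.eventually_ne (c := w)
    ⟨_, ((fderiv ℝ g x).toContinuousLinearEquivOfDetNeZero hdet).antilipschitz⟩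
  rw [← disjoint_iff, disjoint_principal_right]
  exact hev

lemma approx_level {N : ℕ} (hN : 0 < N) (s : ℝ) (hs0 : 0 < s) (hs1 : s < 1)
    (E : Set (Euc N)) (hE : IsOpen E) (A : Set (Euc N)) (φ : Euc N → ℝ) (hφ : TestOn E φ)
    (hA : ∀ x ∈ A, 1 ≤ φ x) (ε : ℝ) (hε : 0 < ε) :
    ∃ O : Set (Euc N), IsOpen O ∧ IsCompact (closure O) ∧ closure O ⊆ E ∧
          SmoothBdry O ∧ A ⊆ O ∧ sPer N s O ≤ gag N 1 s φ + ε := by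
  obtain ⟨hφs, hφc, hφE⟩ := hφ
  obtain ⟨η, ⟨hηs, hηc, hηE⟩, U, hU, hSU, hηU⟩ := cutoff E (tsupport φ) hE hφc hφE
  set W : Euc N → Euc N := fun x => η x • x with hW
  have hWs : ContDiff ℝ (⊤ : ℕ∞) W := hηs.smul contDiff_id
  have hWc : HasCompactSupport W := hηc.smul_right
  obtain ⟨R, hR⟩ := hWc.exists_bound_of_continuous hWs.continuous
  have hR0 : 0 ≤ R := (norm_nonneg _).trans (hR 0)
  have hGφ := GE_fin_smooth hN s hs0 hs1 φ hφs hφc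
  have hGW := GE_fin_smooth hN s hs0 hs1 W hWs hWc
  set g0 := (GE s φ).toReal with hg0
  set gW := (GE s W).toReal with hgW
  obtain ⟨r, hr, hr1, hr2⟩ : ∃ r > 0, (∀ τ, 0 ≤ τ → τ < r → 2 * τ * R < 1) ∧
      (∀ τ, 0 ≤ τ → τ < r → (g0 + τ * gW) / (1 - 2 * τ * R) ≤ g0 + ε) := by
    have c1 : ContinuousAt (fun τ : ℝ => 2 * τ * R) 0 := by fun_prop
    have c2 : ContinuousAt (fun τ : ℝ => (g0 + τ * gW) / (1 - 2 * τ * R)) 0 := by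
      refine ContinuousAt.div (by fun_prop) (by fun_prop) (by simp)
    have e1 := (show Tendsto _ _ _ from c1).eventually_lt_const (u := 1) (by simp)
    have e2 := (show Tendsto _ _ _ from c2).eventually_lt_const (u := g0 + ε) (by simpa using hε)
    obtain ⟨r, hr, h⟩ := Metric.eventually_nhds_iff.1 (e1.and e2)
    refine ⟨r, hr, fun τ h0 h1 => (h ?_).1, fun τ h0 h1 => (h ?_).2.le⟩ <;>
      simpa [abs_of_nonneg h0] using h1
  obtain ⟨v, hv, hZ⟩ := morse φ hφs r hr
  have hδ := hr1 ‖v‖ (norm_nonneg _) hv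
  have hfin := hr2 ‖v‖ (norm_nonneg _) hv
  set δ := ‖v‖ * R with hδdef
  have hδ0 : 0 ≤ δ := by positivity
  set ψ : Euc N → ℝ := fun x => φ x + inner ℝ v (W x) with hψ
  have hψs : ContDiff ℝ (⊤ : ℕ∞) ψ := hφs.add (contDiff_const.inner ℝ hWs)
  have hsmall : ∀ x, |inner ℝ v (W x)| ≤ δ := fun x =>
    (abs_real_inner_le_norm _ _).trans (mul_le_mul_of_nonneg_left (hR x) (norm_nonneg _))
  have hsuppE : tsupport φ ∪ tsupport η ⊆ E := Set.union_subset hφE hηE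
  have hψGE : GE s ψ ≤ GE s φ + ‖v‖ₑ * GE s W := by
    have hD : ∀ h, Dm ψ h ≤ Dm φ h + ‖v‖ₑ * Dm W h := by
      intro h
      unfold Dm
      have hφm := hφs.continuous.measurable
      have hWm := hWs.continuous.measurable
      rw [← lintegral_const_mul _ (by fun_prop), ← lintegral_add_left (by fun_prop)]
      refine lintegral_mono fun x => ?_
      have : ψ (x + h) - ψ x = (φ (x + h) - φ x) + inner ℝ v (W (x + h) - W x) := by
        simp only [hψ, inner_sub_right]; ring
      simp only []
      rw [this]
      refine (enorm_add_le _ _).trans ?_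
      gcongr
      rw [← ofReal_norm, ← ofReal_norm, ← ofReal_norm, ← ENNReal.ofReal_mul (norm_nonneg _)]
      exact ENNReal.ofReal_le_ofReal (norm_inner_le_norm _ _)
    have hDm := Dm_meas φ hφs.continuous.measurable
    have hw := wk_meas N s
    calc GE s ψ ≤ ∫⁻ h, (Dm φ h * wk N s h + ‖v‖ₑ * (Dm W h * wk N s h)) := by
          refine lintegral_mono fun h => ?_
          simp only []
          rw [← mul_assoc, ← add_mul]
          exact mul_le_mul_left (hD h) _
      _ = _ := by
          rw [lintegral_add_left (by fun_prop), lintegral_const_mul' _ _ (by simp)]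
          rfl
  obtain ⟨t, ht1, ht2, htZ, htG⟩ := good_level s ψ hψs.continuous.measurable δ (1 - δ)
    (by linarith) (ψ '' {x | fderiv ℝ φ x + innerSL ℝ v = 0}) (hZ.image _)
  have hcl : closure {x | t < ψ x} ⊆ tsupport φ ∪ tsupport η := by
    have hsub : closure {x | t < ψ x} ⊆ {x | t ≤ ψ x} :=
      closure_minimal (fun x (hx : t < ψ x) => show t ≤ ψ x from le_of_lt hx)
        (isClosed_le continuous_const hψs.continuous)
    intro x hx
    have hx' : t ≤ ψ x := hsub hx
    by_contra hcon
    rw [Set.mem_union, not_or] at hcon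
    have a1 := image_eq_zero_of_notMem_tsupport hcon.1
    have a2 := hsmall x
    have : ψ x ≤ δ := by
      simp only [hψ, a1, zero_add]; exact (le_abs_self _).trans a2
    linarith
  have hopen : IsOpen {x | t < ψ x} := isOpen_lt continuous_const hψs.continuous
  refine ⟨{x | t < ψ x}, hopen, ?_, hcl.trans hsuppE, ?_, ?_, ?_⟩
  · exact (hφc.isCompact.union hηc.isCompact).of_isClosed_subset isClosed_closure hcl
  · refine ⟨fun x => t - ψ x, contDiff_const.sub hψs, ?_, ?_⟩
    · ext x; simp
    · intro x hx hdx
      have hx' : ψ x = t := by linarith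
      have hφx : φ x ≠ 0 := by
        intro h0
        have : ψ x ≤ δ := by
          simp only [hψ, h0, zero_add]; exact (le_abs_self _).trans (hsmall x)
        linarith
      have hxU : x ∈ U := hSU (subset_tsupport _ hφx)
      have hev : ψ =ᶠ[nhds x] fun y => φ y + innerSL ℝ v y := by
        filter_upwards [hU.mem_nhds hxU] with y hy
        simp [hψ, hW, hηU y hy]
      have hder : fderiv ℝ ψ x = fderiv ℝ φ x + innerSL ℝ v := by
        rw [hev.fderiv_eq]
        exact ((hφs.differentiable (by simp) x).hasFDerivAt.add
          (innerSL ℝ v).hasFDerivAt).fderiv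
      have hd0 : fderiv ℝ ψ x = 0 := by
        rw [fderiv_const_sub] at hdx
        simpa using hdx
      exact htZ ⟨x, by rw [Set.mem_ofPred_eq, ← hder, hd0], hx'⟩
  · intro x hx
    have := hA x hx
    have := (abs_le.1 (hsmall x)).1
    simp only [Set.mem_ofPred_eq, hψ]
    linarith
  · rw [sPer_eq s _ hopen.measurableSet, gag_eq s _ hφs.continuous.measurable]
    refine le_trans ?_ hfin
    have h12 : (0:ℝ) < 1 - 2 * ‖v‖ * R := by linarith
    have hlt : GE s φ + ‖v‖ₑ * GE s W < ∞ :=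
      ENNReal.add_lt_top.2 ⟨hGφ, ENNReal.mul_lt_top (by simp) hGW⟩
    have := htG.trans (ENNReal.div_le_div_right hψGE _)
    have h2 := ENNReal.toReal_mono (ENNReal.div_lt_top hlt.ne
      (by rw [ENNReal.ofReal_ne_zero_iff]; linarith)).ne this
    rw [ENNReal.toReal_div, ENNReal.toReal_add hGφ.ne
      (ENNReal.mul_lt_top (by simp) hGW).ne, ENNReal.toReal_mul, toReal_enorm,
      ENNReal.toReal_ofReal (by linarith)] at h2
    have h3 : 1 - 2 * ‖v‖ * R = 1 - δ - δ := by rw [hδdef]; ring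
    rw [h3]
    exact h2


/-- volume of a thin tube around a regular level -/
lemma tube {N : ℕ} (f : Euc N → ℝ) (hf : ContDiff ℝ (⊤ : ℕ∞) f)
    (hreg : ∀ x, f x = 0 → fderiv ℝ f x ≠ 0) (R : ℝ) (hR : 0 < R) :
    ∃ C r0 : ℝ, 0 < r0 ∧ ∀ r, 0 < r → r ≤ r0 →
      volume (closedBall (0 : Euc N) R ∩ {x | |f x| ≤ r}) ≤ ENNReal.ofReal (C * r) := by
  set e : Fin N → Euc N := fun i => EuclideanSpace.single i (1:ℝ) with he
  set d : Fin N → Euc N → ℝ := fun i x => fderiv ℝ f x (e i) with hd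
  have hds : ∀ i, ContDiff ℝ (⊤ : ℕ∞) (d i) := by
    intro i
    exact (hf.fderiv_right (by norm_cast)).clm_apply contDiff_const
  set q : Euc N → ℝ := fun x => ∑ i, d i x ^ 2 with hq
  have hqc : Continuous q := by
    refine continuous_finsetSum _ fun i _ => ((hds i).continuous.pow 2)
  have hq0 : ∀ x, 0 ≤ q x := fun x => Finset.sum_nonneg fun i _ => sq_nonneg _
  obtain ⟨m, hm, hmB⟩ : ∃ m > 0, ∀ x ∈ closedBall (0 : Euc N) R, m ≤ f x ^ 2 + q x := by
    obtain ⟨x, hx, hmin⟩ := (isCompact_closedBall (0 : Euc N) R).exists_isMinOn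
      ⟨0, mem_closedBall_self hR.le⟩
      (f := fun x => f x ^ 2 + q x) ((hf.continuous.pow 2).add hqc).continuousOn
    refine ⟨f x ^ 2 + q x, ?_, fun y hy => hmin hy⟩
    by_contra hcon
    have h1 : f x = 0 := by
      have := sq_nonneg (f x); have := hq0 x
      exact pow_eq_zero_iff (two_ne_zero) |>.1 (by linarith)
    have h2 : q x = 0 := by
      have := sq_nonneg (f x); have := hq0 x
      linarith
    have h3 := (Finset.sum_eq_zero_iff_of_nonneg (fun i _ => sq_nonneg (d i x))).1 h2
    apply hreg x h1
    have : (fderiv ℝ f x : Euc N →ₗ[ℝ] ℝ) = 0 := by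
      refine (EuclideanSpace.basisFun (Fin N) ℝ).toBasis.ext fun i => ?_
      have := h3 i (Finset.mem_univ _)
      simpa [hd, he] using this
    ext y
    simpa using LinearMap.congr_fun this y
  let η : ContDiffBump (0 : Euc N) := ⟨R, R + 1, hR, by linarith⟩
  set p : Fin N → Euc N → ℝ := fun i x => η x * d i x with hp
  have hps : ∀ i, ContDiff ℝ (⊤ : ℕ∞) (p i) := fun i => η.contDiff.mul (hds i)
  have hpc : ∀ i, HasCompactSupport (p i) := fun i => η.hasCompactSupport.mul_right
  set dp : Fin N → Euc N → ℝ := fun i x => fderiv ℝ (p i) x (e i) with hdp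
  have hdpc : ∀ i, Continuous (dp i) := fun i =>
    ((hps i).continuous_fderiv (by simp)).clm_apply continuous_const
  have hdpcs : ∀ i, HasCompactSupport (dp i) := fun i => (hpc i).fderiv_apply ℝ (e i)
  set C1 : ℝ := ∑ i, ∫ x, |dp i x| with hC1
  refine ⟨4 / m * (Real.pi / 2 * C1), Real.sqrt (m / 2), by positivity, ?_⟩
  intro r hr hr0
  have hr2 : r ^ 2 ≤ m / 2 := by
    have := pow_le_pow_left₀ hr.le hr0 2
    rwa [Real.sq_sqrt (by positivity)] at this
  set T : Euc N → ℝ := fun x => Real.arctan (f x / r) with hT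
  have hTs : ContDiff ℝ (⊤ : ℕ∞) T := (hf.div_const r).arctan
  have hTd : ∀ i x, fderiv ℝ T x (e i) = 1 / (1 + (f x / r) ^ 2) * (d i x / r) := by
    intro i x
    have h1 : HasFDerivAt (fun y => f y / r) (r⁻¹ • fderiv ℝ f x) x := by
      simpa [div_eq_inv_mul] using
        ((hf.differentiable (by simp) x).hasFDerivAt.const_mul r⁻¹)
    rw [hT, h1.arctan.fderiv]
    simp [hd, div_eq_inv_mul]
  have hTb : ∀ x, |T x| ≤ Real.pi / 2 := fun x =>
    abs_le.2 ⟨(Real.neg_pi_div_two_lt_arctan _).le, (Real.arctan_lt_pi_div_two _).le⟩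
  have hTc : Continuous T := hTs.continuous
  have hTdc : ∀ i, Continuous (fun x => fderiv ℝ T x (e i)) := fun i =>
    (hTs.continuous_fderiv (by simp)).clm_apply continuous_const
  have hI1 : ∀ i, Integrable (fun x => fderiv ℝ T x (e i) * p i x) := fun i =>
    ((hTdc i).mul (hps i).continuous).integrable_of_hasCompactSupport (hpc i).mul_left
  have hI2 : ∀ i, Integrable (fun x => T x * dp i x) := fun i =>
    (hTc.mul (hdpc i)).integrable_of_hasCompactSupport (hdpcs i).mul_left
  have hI3 : ∀ i, Integrable (fun x => T x * p i x) := fun i =>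
    (hTc.mul (hps i).continuous).integrable_of_hasCompactSupport (hpc i).mul_left
  set J : Euc N → ℝ := fun x => ∑ i, fderiv ℝ T x (e i) * p i x with hJ
  have hJi : Integrable J := integrable_finsetSum _ fun i _ => hI1 i
  have hJle : ∫ x, J x ≤ Real.pi / 2 * C1 := by
    rw [hJ, integral_finsetSum _ (fun i _ => hI1 i), hC1, Finset.mul_sum]
    refine Finset.sum_le_sum fun i _ => ?_
    have := integral_mul_fderiv_eq_neg_fderiv_mul_of_integrable (μ := volume) (hI1 i) (hI2 i) (hI3 i)
      (fun x _ => hTs.differentiable (by simp) x) (fun x _ => (hps i).differentiable (by simp) x)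
    have h2 : ∫ x, fderiv ℝ T x (e i) * p i x = - ∫ x, T x * dp i x := by
      rw [hdp]; linarith
    rw [h2, ← integral_neg, ← integral_const_mul]
    refine integral_mono (hI2 i).neg
      (((hdpc i).integrable_of_hasCompactSupport (hdpcs i)).abs.const_mul _) fun x => ?_
    simp only [Pi.neg_apply]
    calc -(T x * dp i x) ≤ |T x * dp i x| := neg_le_abs _
      _ = |T x| * |dp i x| := abs_mul _ _
      _ ≤ _ := mul_le_mul_of_nonneg_right (hTb x) (abs_nonneg _)
  have hJeq : ∀ x, J x = 1 / (1 + (f x / r) ^ 2) / r * (η x * q x) := by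
    intro x
    simp only [hJ, hTd, hp, hq, Finset.mul_sum]
    refine Finset.sum_congr rfl fun i _ => ?_
    ring
  have hJ0 : ∀ x, 0 ≤ J x := by
    intro x
    rw [hJeq]
    have := hq0 x
    have := η.nonneg (x := x)
    positivity
  have hsub : closedBall (0 : Euc N) R ∩ {x | |f x| ≤ r} ⊆ {x | m / (4 * r) ≤ J x} := by
    rintro x ⟨hx, hfx⟩
    have hfx : |f x| ≤ r := hfx
    have hη : η x = 1 := η.one_of_mem_closedBall hx
    have hf2 : f x ^ 2 ≤ r ^ 2 := by
      rw [← sq_abs]; exact pow_le_pow_left₀ (abs_nonneg _) hfx 2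
    have hqx : m / 2 ≤ q x := by
      have := hmB x hx
      linarith
    have hfr : (f x / r) ^ 2 ≤ 1 := by
      rw [div_pow, div_le_one (by positivity)]; exact hf2
    show m / (4 * r) ≤ J x
    rw [hJeq, hη, one_mul]
    have h1 : 1 / 2 ≤ 1 / (1 + (f x / r) ^ 2) :=
      one_div_le_one_div_of_le (by positivity) (by linarith)
    calc m / (4 * r) = 1 / 2 / r * (m / 2) := by field_simp; norm_num
      _ ≤ _ := by gcongr
  have hmk := mul_meas_ge_le_integral_of_nonneg (Eventually.of_forall hJ0) hJi (m / (4 * r))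
  have hmfin : volume {x | m / (4 * r) ≤ J x} < ∞ := hJi.measure_ge_lt_top (by positivity)
  refine (measure_mono hsub).trans ?_
  rw [← ENNReal.ofReal_toReal hmfin.ne]
  refine ENNReal.ofReal_le_ofReal ?_
  change volume.real _ ≤ _
  have h5 := hmk.trans hJle
  rw [← le_div_iff₀' (by positivity)] at h5
  refine h5.trans (le_of_eq ?_)
  field_simp

lemma smooth_fin {N : ℕ} (hN : 0 < N) (s : ℝ) (hs0 : 0 < s) (hs1 : s < 1) (O : Set (Euc N))
    (hO : IsOpen O) (hc : IsCompact (closure O)) (hsm : SmoothBdry O) : GE s (ind O) < ∞ := by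
  obtain ⟨f, hf, hOf, hreg⟩ := hsm
  obtain ⟨R0, hR0⟩ := hc.isBounded.subset_closedBall (0 : Euc N)
  set R := max R0 0 + 1 with hR
  have hRpos : 0 < R := by positivity
  have hOR : ∀ x ∈ O, ∀ h : Euc N, ‖h‖ ≤ 1 → x + h ∈ closedBall (0 : Euc N) R := by
    intro x hx h hh
    have h1 := hR0 (subset_closure hx)
    simp only [mem_closedBall, dist_zero_right] at h1 ⊢
    have := norm_add_le x h
    have := le_max_left R0 0
    linarith
  obtain ⟨L, hL⟩ := (isCompact_closedBall (0 : Euc N) R).exists_bound_of_continuousOn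
    (hf.continuous_fderiv (by simp)).continuousOn
  have hlip : ∀ x ∈ closedBall (0 : Euc N) R, ∀ y ∈ closedBall (0 : Euc N) R,
      ‖f y - f x‖ ≤ (max L 1) * ‖y - x‖ := by
    intro x hx y hy
    exact Convex.norm_image_sub_le_of_norm_fderiv_le (𝕜 := ℝ)
      (fun z _ => hf.differentiable (by simp) z)
      (fun z hz => (hL z hz).trans (le_max_left _ _)) (convex_closedBall _ _) hx hy
  set M := max L 1 with hM
  have hM1 : 1 ≤ M := le_max_right _ _
  obtain ⟨C, r0, hr0, htube⟩ := tube f hf hreg R hRpos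
  have hdm : ∀ h, Dm (ind O) h ≤ volume {x | ¬ (x + h ∈ O ↔ x ∈ O)} := by
    intro h
    have hms : MeasurableSet {x | ¬ (x + h ∈ O ↔ x ∈ O)} := by
      have a := hO.measurableSet
      have b : MeasurableSet {x : Euc N | x + h ∈ O} := (measurable_add_const h) a
      exact (MeasurableSet.iff b a).compl
    rw [← lintegral_indicator_one hms]
    refine lintegral_mono fun x => ?_
    by_cases a : x ∈ O <;> by_cases b : x + h ∈ O <;> simp [ind, a, b]
  have hvO : volume O < ∞ := (measure_mono subset_closure).trans_lt hc.measure_lt_top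
  set V := 2 * volume O with hV
  have hVfin : V < ∞ := ENNReal.mul_lt_top (by simp) hvO
  refine GE_fin hN s hs0 hs1 _ (max V.toReal (C * M)) (min 1 (r0 / M)) (by positivity) ?_ ?_
  · intro h
    refine (hdm h).trans ?_
    have : {x | ¬ (x + h ∈ O ↔ x ∈ O)} ⊆ ((fun x => x + h) ⁻¹' O) ∪ O := by
      intro x hx
      have hx : ¬ (x + h ∈ O ↔ x ∈ O) := hx
      simp only [Set.mem_union, Set.mem_preimage]
      tauto
    refine (measure_mono this).trans ((measure_union_le _ _).trans ?_)
    rw [measure_preimage_add_right, ← two_mul, ← hV]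
    exact (ENNReal.ofReal_toReal hVfin.ne).ge.trans (ENNReal.ofReal_le_ofReal (le_max_left _ _))
  · intro h hh
    by_cases h0 : h = 0
    · simp [h0, Dm]
    have hhpos : 0 < ‖h‖ := norm_pos_iff.2 h0
    have hh1 : ‖h‖ ≤ 1 := hh.trans (min_le_left _ _)
    have hh2 : M * ‖h‖ ≤ r0 := by
      have := hh.trans (min_le_right _ _)
      rw [le_div_iff₀ (by positivity)] at this
      linarith
    refine (hdm h).trans ?_
    have : {x | ¬ (x + h ∈ O ↔ x ∈ O)} ⊆
        closedBall (0 : Euc N) R ∩ {x | |f x| ≤ M * ‖h‖} := by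
      intro x hx
      have hx : ¬ (x + h ∈ O ↔ x ∈ O) := hx
      have hmem : ∀ y, y ∈ O ↔ f y < 0 := fun y => by rw [hOf]; rfl
      by_cases a : x ∈ O
      · have b : x + h ∉ O := by tauto
        have x1 : x ∈ closedBall (0 : Euc N) R := by
          simpa using hOR x a 0 (by simp)
        have x2 := hOR x a h hh1
        have hl := hlip x x1 (x + h) x2
        rw [hmem] at a b
        refine ⟨x1, ?_⟩
        show |f x| ≤ _
        rw [add_sub_cancel_left, Real.norm_eq_abs] at hl
        refine le_trans ?_ hl
        rw [abs_of_neg a]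
        have := le_abs_self (f (x + h) - f x)
        linarith
      · have b : x + h ∈ O := by tauto
        have x1 : x ∈ closedBall (0 : Euc N) R := by
          simpa using hOR _ b (-h) (by simpa using hh1)
        have x2 : x + h ∈ closedBall (0 : Euc N) R := by simpa using hOR _ b 0 (by simp)
        have hl := hlip x x1 (x + h) x2
        rw [hmem] at a b
        refine ⟨x1, ?_⟩
        show |f x| ≤ _
        rw [add_sub_cancel_left, Real.norm_eq_abs] at hl
        refine le_trans ?_ hl
        rw [abs_of_nonneg (by linarith)]
        have := neg_abs_le (f (x + h) - f x)
        linarith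
    refine (measure_mono this).trans ((htube _ (by positivity) hh2).trans ?_)
    refine ENNReal.ofReal_le_ofReal ?_
    rw [← mul_assoc]
    exact mul_le_mul_of_nonneg_right (le_max_right _ _) hhpos.le


lemma fcap_bdd (N : ℕ) (s : ℝ) (A E : Set (Euc N)) : BddBelow { c | ∃ φ : Euc N → ℝ, TestOn E φ ∧
    (∀ x ∈ A, 1 ≤ φ x) ∧ c = gag N 1 s φ } := by
  refine ⟨0, ?_⟩
  rintro c ⟨φ, -, -, rfl⟩
  exact integral_nonneg fun z => by positivity

lemma fcap_ne (N : ℕ) (s : ℝ) (A E : Set (Euc N)) (hE : IsOpen E) (hA : IsCompact A) (hAE : A ⊆ E) :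
    { c | ∃ φ : Euc N → ℝ, TestOn E φ ∧ (∀ x ∈ A, 1 ≤ φ x) ∧ c = gag N 1 s φ }.Nonempty := by
  obtain ⟨φ, h1, U, -, hAU, h2⟩ := cutoff E A hE hA hAE
  exact ⟨_, φ, h1, fun x hx => (h2 x (hAU hx)).ge, rfl⟩

lemma fcap_le_of_mollify {N : ℕ} (s : ℝ) (E O A : Set (Euc N)) (hO : MeasurableSet O)
    (hb : Bornology.IsBounded O)
    (δ : ℝ) (hδ : 0 < δ) (hA : ∀ x ∈ A, ball x δ ⊆ O) (hOE : cthickening δ O ⊆ E)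
    (hfin : GE s (ind O) < ∞) : fcap N 1 s A E ≤ sPer N s O := by
  obtain ⟨φ, h1, h2, h3⟩ := mollify_s7 E O A hO hb δ hδ hA hOE
  refine (csInf_le (fcap_bdd N s A E) ⟨φ, h1, fun x hx => (h2 x hx).ge, rfl⟩).trans ?_
  rw [gag_eq s _ h1.1.continuous.measurable, sPer_eq s _ hO]
  exact ENNReal.toReal_mono hfin.ne (GE_mono s _ _ h3)

lemma part_one (N : ℕ) (hN : 0 < N) (s : ℝ) (hs0 : 0 < s) (hs1 : s < 1)
    (E : Set (Euc N)) (hE : IsOpen E) (A : Set (Euc N)) (hA : IsCompact A) (hAE : A ⊆ E) :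
      fcap N 1 s A E =
        sInf { c | ∃ O : Set (Euc N), IsOpen O ∧ IsCompact (closure O) ∧ closure O ⊆ E ∧
          SmoothBdry O ∧ A ⊆ O ∧ c = sPer N s O } := by
  apply le_antisymm
  · apply le_csInf
    · obtain ⟨c, φ, h1, h2, -⟩ := fcap_ne N s A E hE hA hAE
      obtain ⟨O, a1, a2, a3, a4, a5, -⟩ := approx_level hN s hs0 hs1 E hE A φ h1 h2 1 one_pos
      exact ⟨_, O, a1, a2, a3, a4, a5, rfl⟩
    · rintro c ⟨O, a1, a2, a3, a4, a5, rfl⟩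
      obtain ⟨δ1, hδ1, h1⟩ := hA.exists_cthickening_subset_open a1 a5
      obtain ⟨δ2, hδ2, h2⟩ := a2.exists_cthickening_subset_open hE a3
      refine fcap_le_of_mollify s E O A a1.measurableSet (a2.isBounded.subset subset_closure)
        (min δ1 δ2) (lt_min hδ1 hδ2) ?_ ?_ (smooth_fin hN s hs0 hs1 O a1 a2 a4)
      · intro x hx y hy
        refine h1 (mem_cthickening_of_dist_le y x δ1 A hx ?_)
        exact (mem_ball.1 hy).le.trans (min_le_left _ _)
      · exact ((cthickening_mono (min_le_right _ _) O).trans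
          (cthickening_subset_of_subset _ subset_closure)).trans h2
  · apply le_csInf (fcap_ne N s A E hE hA hAE)
    rintro c ⟨φ, h1, h2, rfl⟩
    refine le_of_forall_pos_le_add fun ε hε => ?_
    obtain ⟨O, a1, a2, a3, a4, a5, a6⟩ := approx_level hN s hs0 hs1 E hE A φ h1 h2 ε hε
    refine le_trans (csInf_le ⟨0, ?_⟩ ⟨O, a1, a2, a3, a4, a5, rfl⟩) a6
    rintro c ⟨O, -, -, -, -, -, rfl⟩
    exact integral_nonneg fun z => by positivity

lemma convex_fin {N : ℕ} (hN : 0 < N) (s : ℝ) (hs0 : 0 < s) (hs1 : s < 1) (C : Set (Euc N))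
    (hC : IsCompact C) (hconv : Convex ℝ C) : GE s (ind C) < ∞ := by
  obtain ⟨φ, h1, U, -, hAU, h2⟩ := cutoff Set.univ C isOpen_univ hC (Set.subset_univ _)
  exact (GE_mono s _ _ (convex_min C hC.measurableSet hconv φ h1.2.1 h1.1.continuous.measurable
    fun x hx => (h2 x (hAU hx)).ge)).trans_lt (GE_fin_smooth hN s hs0 hs1 φ h1.1 h1.2.1)

lemma sPer_trans {N : ℕ} (s : ℝ) (K : Set (Euc N)) (c : Euc N) :
    sPer N s ((fun x => x + c) ⁻¹' K) = sPer N s K := by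
  have : (volume : Measure (Euc N × Euc N)).IsAddHaarMeasure :=
    Measure.prod.instIsAddHaarMeasure volume volume
  have := integral_add_right_eq_self (μ := (volume : Measure (Euc N × Euc N)))
    (fun z : Euc N × Euc N => |ind K z.1 - ind K z.2| / ‖z.1 - z.2‖ ^ ((N : ℝ) + s)) (c, c)
  refine Eq.trans ?_ this
  refine integral_congr_ae (Eventually.of_forall fun z => ?_)
  have hi : ∀ x, ((fun x => x + c) ⁻¹' K).indicator (fun _ => (1:ℝ)) x = ind K (x + c) :=
    fun x => rfl
  simp only [hi, Prod.fst_add, Prod.snd_add, add_sub_add_right_eq_sub]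

lemma part_two (N : ℕ) (hN : 0 < N) (s : ℝ) (hs0 : 0 < s) (hs1 : s < 1)
    (E : Set (Euc N)) (hE : IsOpen E) (K : Set (Euc N)) (hKo : IsOpen K)
    (hKb : Bornology.IsBounded K) (hKc : Convex ℝ K) (hKE : closure K ⊆ E) :
      fcap N 1 s (closure K) E = sPer N s (closure K) := by
  have hC : IsCompact (closure K) := hKb.isCompact_closure
  apply le_antisymm
  · rcases K.eq_empty_or_nonempty with rfl | ⟨x0, hx0⟩
    · refine (csInf_le (fcap_bdd N s _ E) ⟨fun _ => 0, ⟨contDiff_const, ?_, ?_⟩, ?_, rfl⟩).trans ?_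
      · exact HasCompactSupport.zero
      · simp [tsupport]
      · simp
      · simp [gag, sPer]
    obtain ⟨δ2, hδ2, h2⟩ := hC.exists_cthickening_subset_open hE hKE
    obtain ⟨R0, hR0⟩ := hC.isBounded.subset_closedBall x0
    set R := max R0 0 + 1 with hR
    have hRpos : 0 < R := by positivity
    have hRb : ∀ y ∈ closure K, ‖y - x0‖ ≤ R := by
      intro y hy
      have := hR0 hy
      rw [mem_closedBall, dist_eq_norm] at this
      have := le_max_left R0 0
      linarith
    have key : ∀ t : ℝ, 1 < t → (t - 1) * R ≤ δ2 / 2 →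
        fcap N 1 s (closure K) E ≤ t ^ ((N : ℝ) - s) * sPer N s (closure K) := by
      intro t ht htR
      have ht0 : 0 < t := by linarith
      set c := x0 - t⁻¹ • x0 with hc
      set O := (fun x : Euc N => t⁻¹ • x) ⁻¹' ((fun y => y + c) ⁻¹' (closure K)) with hO
      have hper : sPer N s O = t ^ ((N : ℝ) - s) * sPer N s (closure K) := by
        rw [hO, sPer_smul s _ t ht0, sPer_trans]
      rw [← hper]
      have hOmem : ∀ x, x ∈ O ↔ t⁻¹ • x + c ∈ closure K := fun x => Iff.rfl
      have hOcl : IsClosed O :=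
        (isClosed_closure.preimage (continuous_add_const c)).preimage (continuous_const_smul t⁻¹)
      have hOsub : O ⊆ cthickening (δ2 / 2) (closure K) := by
        intro x hx
        rw [hOmem] at hx
        refine mem_cthickening_of_dist_le x _ _ _ hx ?_
        rw [dist_eq_norm]
        have e : x - (t⁻¹ • x + c) = (t - 1) • ((t⁻¹ • x + c) - x0) := by
          have hx' : x = t • (t⁻¹ • x) := by rw [smul_smul, mul_inv_cancel₀ ht0.ne', one_smul]
          have hx0' : x0 = t • (t⁻¹ • x0) := by rw [smul_smul, mul_inv_cancel₀ ht0.ne', one_smul]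
          rw [hc]
          nth_rewrite 1 [hx']
          nth_rewrite 1 [hx0']
          module
        rw [e, norm_smul, Real.norm_of_nonneg (by linarith)]
        exact (mul_le_mul_of_nonneg_left (hRb _ hx) (by linarith)).trans htR
      have hOb : Bornology.IsBounded O := hC.isBounded.cthickening.subset hOsub
      have hOconv : Convex ℝ O := (hKc.closure.translate_preimage_left c).smul_preimage t⁻¹
      have hOc : IsCompact O := Metric.isCompact_of_isClosed_isBounded hOcl hOb
      set V := (fun x : Euc N => t⁻¹ • x) ⁻¹' ((fun y => y + c) ⁻¹' K) with hV
      have hVo : IsOpen V :=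
        (hKo.preimage (continuous_add_const c)).preimage (continuous_const_smul t⁻¹)
      have hCV : closure K ⊆ V := by
        intro x hx
        have hti : 0 < t⁻¹ := by positivity
        have hti1 : t⁻¹ < 1 := inv_lt_one_of_one_lt₀ ht
        have := hKc.combo_interior_closure_mem_interior (a := 1 - t⁻¹) (b := t⁻¹)
          (by rw [hKo.interior_eq]; exact hx0) hx (by linarith) hti.le (by ring)
        rw [hKo.interior_eq] at this
        show t⁻¹ • x + c ∈ K
        convert this using 1
        rw [hc]; module
      obtain ⟨δ1, hδ1, h1⟩ := hC.exists_cthickening_subset_open hVo hCV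
      refine fcap_le_of_mollify s E O _ hOcl.measurableSet hOb (min δ1 (δ2 / 2)) (by positivity)
        ?_ ?_ (convex_fin hN s hs0 hs1 O hOc hOconv)
      · intro x hx y hy
        have : y ∈ V := by
          refine h1 (mem_cthickening_of_dist_le y x δ1 _ hx ?_)
          exact (mem_ball.1 hy).le.trans (min_le_left _ _)
        exact subset_closure (this : t⁻¹ • y + c ∈ K)
      · refine ((cthickening_mono (min_le_right _ _) O).trans
          (cthickening_subset_of_subset _ hOsub)).trans ?_
        refine (cthickening_cthickening_subset (by positivity) (by positivity) _).trans ?_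
        rw [add_halves]; exact h2
    have hlim : Tendsto (fun t : ℝ => t ^ ((N : ℝ) - s) * sPer N s (closure K)) (nhdsWithin 1 (Set.Ioi 1))
        (nhds (sPer N s (closure K))) := by
      have : ContinuousAt (fun t : ℝ => t ^ ((N : ℝ) - s) * sPer N s (closure K)) 1 :=
        (Real.continuousAt_rpow_const 1 _ (Or.inl one_ne_zero)).mul continuousAt_const
      have h := this.tendsto
      simp only [Real.one_rpow, one_mul] at h
      exact h.mono_left nhdsWithin_le_nhds
    refine ge_of_tendsto hlim ?_
    have hcont : Tendsto (fun t : ℝ => (t - 1) * R) (nhdsWithin 1 (Set.Ioi 1)) (nhds 0) := by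
      have : ContinuousAt (fun t : ℝ => (t - 1) * R) 1 := by fun_prop
      have h := this.tendsto
      simp only [sub_self, zero_mul] at h
      exact h.mono_left nhdsWithin_le_nhds
    filter_upwards [hcont.eventually_lt_const (u := δ2 / 2) (by positivity),
      self_mem_nhdsWithin] with t h1 h2
    exact key t h2 h1.le
  · apply le_csInf (fcap_ne N s _ E hE hC hKE)
    rintro c ⟨φ, h1, h2, rfl⟩
    rw [gag_eq s _ h1.1.continuous.measurable, sPer_eq s _ isClosed_closure.measurableSet]
    exact ENNReal.toReal_mono (GE_fin_smooth hN s hs0 hs1 φ h1.1 h1.2.1).ne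
      (GE_mono s _ _ (convex_min _ isClosed_closure.measurableSet hKc.closure φ h1.2.1
        h1.1.continuous.measurable h2))

theorem stmt7 (N : ℕ) (hN : 0 < N) (s : ℝ) (hs0 : 0 < s) (hs1 : s < 1)
    (E : Set (Euc N)) (hE : IsOpen E) :
    (∀ A : Set (Euc N), IsCompact A → A ⊆ E →
      fcap N 1 s A E =
        sInf { c | ∃ O : Set (Euc N), IsOpen O ∧ IsCompact (closure O) ∧ closure O ⊆ E ∧
          SmoothBdry O ∧ A ⊆ O ∧ c = sPer N s O }) ∧
    (∀ K : Set (Euc N), IsOpen K → Bornology.IsBounded K → Convex ℝ K → closure K ⊆ E →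
      fcap N 1 s (closure K) E = sPer N s (closure K)) := by
  exact ⟨fun A hA hAE => part_one N hN s hs0 hs1 E hE A hA hAE,
    fun K h1 h2 h3 h4 => part_two N hN s hs0 hs1 E hE K h1 h2 h3 h4⟩
end

section
/- Let 0 < r ≤ R < ∞ and 0 < s < 1. The infimum over φ ∈ C^∞_0(B_R) with ∫_{B_r} |φ| dx = 1 of ∬_{R^N×R^N} |φ(x)−φ(y)|/|x−y|^{N+s} dx dy equals P_s(B_r)/|B_r|, and the ball B_r is the unique optimal set (up to translations) for the corresponding Cheeger-type problem h_s(B_r; B_R). In particular, for every φ ∈ C^∞_0(B_R), the average ⨍_{B_r} |φ| dx ≤ (1/P_s(B_r)) ∬_{R^N×R^N} |φ(x)−φ(y)|/|x−y|^{N+s} dx dy, and this constant is sharp. -/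
open MeasureTheory Metric Filter
open scoped ENNReal

namespace FracIso

set_option linter.unusedSectionVars false

open scoped Topology RealInnerProductSpace

/-- the kernel, with value infinity at the origin -/
noncomputable def K {N : ℕ} (α : ℝ) (x : Euc N) : ℝ≥0∞ := (ENNReal.ofReal ‖x‖) ^ (-α)

/-- the energy density -/
noncomputable def D {N : ℕ} (α : ℝ) (u : Euc N → ℝ) (x y : Euc N) : ℝ≥0∞ :=
  ENNReal.ofReal |u x - u y| * K α (x - y)

/-- the energy -/
noncomputable def En {N : ℕ} (α : ℝ) (u : Euc N → ℝ) : ℝ≥0∞ :=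
  ∫⁻ x, ∫⁻ y, D α u x y

lemma K_anti {N : ℕ} {α : ℝ} (hα : 0 ≤ α) {x y : Euc N} (h : ‖x‖ ≤ ‖y‖) : K α y ≤ K α x := by
  unfold K
  rw [ENNReal.rpow_neg, ENNReal.rpow_neg]
  gcongr

lemma K_congr {N : ℕ} {α : ℝ} {x y : Euc N} (h : ‖x‖ = ‖y‖) : K α y = K α x := by
  unfold K; rw [h]

@[fun_prop]
lemma measurable_K {N : ℕ} (α : ℝ) : Measurable (K α : Euc N → ℝ≥0∞) := by
  unfold K; fun_prop

lemma measurable_D {N : ℕ} (α : ℝ) {u : Euc N → ℝ} (hu : Measurable u) :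
    Measurable (Function.uncurry (D α u)) := by
  unfold D Function.uncurry
  fun_prop

lemma En_mono {N : ℕ} {α : ℝ} {u v : Euc N → ℝ} (h : ∀ x y, |v x - v y| ≤ |u x - u y|) :
    En α v ≤ En α u := by
  unfold En D
  refine lintegral_mono fun x => lintegral_mono fun y => ?_
  exact mul_le_mul_left (ENNReal.ofReal_le_ofReal (h x y)) _

lemma En_congr_ae {N : ℕ} {α : ℝ} {u v : Euc N → ℝ} (h : u =ᵐ[volume] v) :
    En α u = En α v := by
  unfold En D
  refine lintegral_congr_ae ?_
  filter_upwards [h] with x hx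
  refine lintegral_congr_ae ?_
  filter_upwards [h] with y hy
  rw [hx, hy]

/-- the four point inequality -/
lemma four_pt (a a' b b' : ℝ) {k1 k2 : ℝ≥0∞} (hk : k2 ≤ k1) :
    ENNReal.ofReal |max a a' - max b b'| * k1 + ENNReal.ofReal |min a a' - min b b'| * k1
      + (ENNReal.ofReal |max a a' - min b b'| * k2 + ENNReal.ofReal |min a a' - max b b'| * k2) ≤
    ENNReal.ofReal |a - b| * k1 + ENNReal.ofReal |a' - b'| * k1
      + (ENNReal.ofReal |a - b'| * k2 + ENNReal.ofReal |a' - b| * k2) := by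
  obtain ⟨d, rfl⟩ := exists_add_of_le hk
  have h1 : |max a a' - max b b'| + |min a a' - min b b'| ≤ |a - b| + |a' - b'| := by
    rcases le_total a a' with h | h <;> rcases le_total b b' with h' | h' <;>
      simp only [max_eq_left, max_eq_right, min_eq_left, min_eq_right, h, h'] <;>
      grind
  have h2 : |max a a' - max b b'| + |min a a' - min b b'| +
      (|max a a' - min b b'| + |min a a' - max b b'|) =
      |a - b| + |a' - b'| + (|a - b'| + |a' - b|) := by
    rcases le_total a a' with h | h <;> rcases le_total b b' with h' | h' <;>
      simp only [max_eq_left, max_eq_right, min_eq_left, min_eq_right, h, h'] <;>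
      ring
  have e : ∀ p q p' q' : ℝ, ENNReal.ofReal |p| * (k2 + d) + ENNReal.ofReal |q| * (k2 + d)
      + (ENNReal.ofReal |p'| * k2 + ENNReal.ofReal |q'| * k2) =
      ENNReal.ofReal (|p| + |q| + (|p'| + |q'|)) * k2 + ENNReal.ofReal (|p| + |q|) * d := by
    intro p q p' q'
    rw [ENNReal.ofReal_add (by positivity) (by positivity), ENNReal.ofReal_add (by positivity)
      (by positivity), ENNReal.ofReal_add (by positivity) (by positivity)]
    ring
  rw [e, e, h2]
  gcongr

section refl
variable {N : ℕ}

/-- signed position relative to the bisector of `p`, `q` -/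
noncomputable def ell (p q x : Euc N) : ℝ := ⟪x - (1/2 : ℝ) • (p + q), q - p⟫

/-- reflection exchanging `p` and `q` -/
noncomputable def refl (p q x : Euc N) : Euc N := x - (2 * ell p q x / ‖q - p‖^2) • (q - p)

lemma measurePreserving_refl (p q : Euc N) : MeasurePreserving (refl p q) volume volume := by
  set m := (1/2 : ℝ) • (p + q) with hm
  have h1 : MeasurePreserving (fun x : Euc N => x - m) volume volume :=
    measurePreserving_sub_right volume m
  have h2 : MeasurePreserving ((ℝ ∙ (q - p)).reflection : Euc N → Euc N) volume volume :=
    ((ℝ ∙ (q - p)).reflection).measurePreserving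
  have h3 : MeasurePreserving (fun x : Euc N => m - x) volume volume :=
    Measure.measurePreserving_sub_left volume m
  convert h3.comp (h2.comp h1) using 1
  ext1 x
  simp only [Function.comp, Submodule.reflection_singleton_apply, refl, ell, ← hm]
  rw [real_inner_comm, ← Nat.cast_smul_eq_nsmul ℝ, smul_smul]
  have : (2 * inner ℝ (q - p) (x - m) / ‖q - p‖ ^ 2) =
    ((2:ℕ):ℝ) * (inner ℝ (q - p) (x - m) / ((‖q - p‖ : ℝ)) ^ 2) := by push_cast; ring
  rw [this]
  simp only [RCLike.ofReal_real_eq_id, id]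
  abel

variable {p q : Euc N}

lemma nsq_pos (hpq : p ≠ q) : 0 < ‖q - p‖^2 := by
  have : q - p ≠ 0 := sub_ne_zero.2 hpq.symm
  positivity

lemma ell_refl (hpq : p ≠ q) (x : Euc N) : ell p q (refl p q x) = - ell p q x := by
  have h := nsq_pos hpq
  have : ell p q (refl p q x) = ell p q x - (2 * ell p q x / ‖q - p‖^2) * ⟪q - p, q - p⟫ := by
    rw [← real_inner_smul_left]
    have e : ell p q (refl p q x) = ⟪(x - (1/2 : ℝ) • (p + q)) -
        (2 * ell p q x / ‖q - p‖^2) • (q - p), q - p⟫ := by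
      conv_lhs => rw [ell]
      rw [refl]; congr 1; abel
    rw [e, inner_sub_left]; rfl
  rw [this, real_inner_self_eq_norm_sq, div_mul_cancel₀ _ h.ne']
  ring

lemma refl_refl (hpq : p ≠ q) (x : Euc N) : refl p q (refl p q x) = x := by
  have := ell_refl hpq x
  conv_lhs => rw [refl]
  rw [this, refl, mul_neg, neg_div, neg_smul]
  abel

lemma refl_of_zero (hpq : p ≠ q) {x : Euc N} (h : ell p q x = 0) : refl p q x = x := by
  simp [refl, h]

lemma ell_left (hpq : p ≠ q) : ell p q p = - (‖q - p‖^2 / 2) := by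
  rw [ell, show p - (1/2 : ℝ) • (p + q) = (-(1/2) : ℝ) • (q - p) by module, real_inner_smul_left,
    real_inner_self_eq_norm_sq]; ring

lemma refl_left (hpq : p ≠ q) : refl p q p = q := by
  have h := nsq_pos hpq
  rw [refl, ell_left hpq]
  rw [show 2 * -(‖q - p‖ ^ 2 / 2) / ‖q - p‖ ^ 2 = -1 by
    rw [show 2 * -(‖q - p‖ ^ 2 / 2) = -‖q - p‖^2 by ring, neg_div, div_self h.ne']]
  simp

lemma norm_refl_sq (hpq : p ≠ q) (x : Euc N) :
    ‖refl p q x‖^2 = ‖x‖^2 - 2 * ell p q x / ‖q - p‖^2 * (‖q‖^2 - ‖p‖^2) := by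
  have h := nsq_pos hpq
  rw [refl, norm_sub_sq_real, real_inner_smul_right, norm_smul, mul_pow, Real.norm_eq_abs, sq_abs]
  have e1 : ⟪x, q - p⟫ = ell p q x + (‖q‖^2 - ‖p‖^2)/2 := by
    rw [ell, inner_sub_left, real_inner_smul_left]
    have : ⟪p + q, q - p⟫ = ‖q‖^2 - ‖p‖^2 := by
      rw [inner_add_left, inner_sub_right, inner_sub_right, real_inner_self_eq_norm_sq,
        real_inner_self_eq_norm_sq, real_inner_comm]; ring
    rw [this]; ring
  rw [e1]
  field_simp
  ring

lemma norm_sub_refl_sq (hpq : p ≠ q) (x y : Euc N) :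
    ‖x - refl p q y‖^2 = ‖x - y‖^2 + 4 * ell p q x * ell p q y / ‖q - p‖^2 := by
  have h := nsq_pos hpq
  have e0 : x - refl p q y = (x - y) + (2 * ell p q y / ‖q - p‖^2) • (q - p) := by
    rw [refl]; abel
  rw [e0, norm_add_sq_real, real_inner_smul_right, norm_smul, mul_pow, Real.norm_eq_abs, sq_abs]
  have e1 : ⟪x - y, q - p⟫ = ell p q x - ell p q y := by
    rw [ell, ell, ← inner_sub_left]; congr 1; abel
  rw [e1]
  field_simp
  ring

lemma norm_refl_sub_refl (hpq : p ≠ q) (x y : Euc N) : ‖refl p q x - refl p q y‖ = ‖x - y‖ := by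
  have h1 := norm_sub_refl_sq hpq (refl p q x) y
  have h2 := norm_sub_refl_sq hpq y x
  rw [ell_refl hpq] at h1
  rw [norm_sub_rev y, norm_sub_rev y] at h2
  rw [h2] at h1
  have : ‖refl p q x - refl p q y‖^2 = ‖x - y‖^2 := by rw [h1]; ring
  exact (pow_left_inj₀ (norm_nonneg _) (norm_nonneg _) two_ne_zero).1 this

lemma norm_refl_sub (hpq : p ≠ q) (x y : Euc N) : ‖refl p q x - y‖ = ‖x - refl p q y‖ := by
  rw [← norm_refl_sub_refl hpq x, refl_refl hpq]

lemma continuous_refl (hpq : p ≠ q) : Continuous (refl p q) := by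
  unfold refl ell; fun_prop

lemma measurableEmbedding_refl (hpq : p ≠ q) : MeasurableEmbedding (refl p q) :=
  (MeasurableEquiv.mk ⟨refl p q, refl p q, refl_refl hpq, refl_refl hpq⟩
    (continuous_refl hpq).measurable (continuous_refl hpq).measurable).measurableEmbedding

lemma lintegral_refl (hpq : p ≠ q) (f : Euc N → ℝ≥0∞) : ∫⁻ x, f (refl p q x) = ∫⁻ x, f x :=
  (measurePreserving_refl p q).lintegral_comp_emb (measurableEmbedding_refl hpq) f

lemma integral_refl (hpq : p ≠ q) (f : Euc N → ℝ) : ∫ x, f (refl p q x) = ∫ x, f x :=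
  (measurePreserving_refl p q).integral_comp (measurableEmbedding_refl hpq) f

end refl

/-- polarization -/
noncomputable def pol {N : ℕ} (p q : Euc N) (u : Euc N → ℝ) (x : Euc N) : ℝ :=
  if ell p q x ≤ 0 then max (u x) (u (refl p q x)) else min (u x) (u (refl p q x))

section pol
variable {N : ℕ} {p q : Euc N}

lemma pol_cases (hpq : p ≠ q) (u : Euc N → ℝ) (x : Euc N) :
    (ell p q x ≤ 0 ∧ pol p q u x = max (u x) (u (refl p q x)) ∧
      pol p q u (refl p q x) = min (u x) (u (refl p q x))) ∨
    (0 ≤ ell p q x ∧ pol p q u x = min (u x) (u (refl p q x)) ∧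
      pol p q u (refl p q x) = max (u x) (u (refl p q x))) := by
  rcases lt_trichotomy (ell p q x) 0 with h | h | h
  · left
    refine ⟨h.le, by simp [pol, h.le], ?_⟩
    rw [pol, ell_refl hpq, if_neg (by linarith), refl_refl hpq, min_comm]
  · left
    have := refl_of_zero hpq h
    refine ⟨h.le, by simp [pol, h.le], ?_⟩
    rw [this]; simp [pol, h, this]
  · right
    refine ⟨h.le, by simp [pol, h], ?_⟩
    rw [pol, ell_refl hpq, if_pos (by linarith), refl_refl hpq, max_comm]

lemma lip_pol (hpq : p ≠ q) (u : Euc N → ℝ) {L : ℝ} (hL : 0 ≤ L) (hu : ∀ x y, |u x - u y| ≤ L * ‖x - y‖) (x y : Euc N) :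
    |pol p q u x - pol p q u y| ≤ L * ‖x - y‖ := by
  have h1 := hu x y
  have h2 := hu (refl p q x) (refl p q y)
  rw [norm_refl_sub_refl hpq] at h2
  have h3 := hu x (refl p q y)
  have h4 := hu (refl p q x) y
  rw [norm_refl_sub hpq] at h4
  have key : ell p q x * ell p q y ≤ 0 → L * ‖x - refl p q y‖ ≤ L * ‖x - y‖ := by
    intro h
    refine mul_le_mul_of_nonneg_left ?_ hL
    have h5 := norm_sub_refl_sq hpq x y
    have h6 : 4 * ell p q x * ell p q y / ‖q - p‖^2 ≤ 0 :=
      div_nonpos_of_nonpos_of_nonneg (by linarith) (by positivity)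
    exact le_of_sq_le_sq (by linarith) (norm_nonneg _)
  have abs1 : ∀ {a a' b b' M : ℝ}, |a - b| ≤ M → |a' - b'| ≤ M →
      |max a a' - max b b'| ≤ M ∧ |min a a' - min b b'| ≤ M := by
    intro a a' b b' M h h'
    exact ⟨(abs_max_sub_max_le_max a a' b b').trans (max_le h h'),
      (abs_min_sub_min_le_max a a' b b').trans (max_le h h')⟩
  have abs2 : ∀ {a a' b b' M : ℝ}, |a - b| ≤ M → |a' - b'| ≤ M → |a - b'| ≤ M → |a' - b| ≤ M →
      |max a a' - min b b'| ≤ M ∧ |min a a' - max b b'| ≤ M := by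
    intro a a' b b' M h1 h2 h3 h4
    rcases le_total a a' with h | h <;> rcases le_total b b' with h' | h' <;>
      simp only [max_eq_left, max_eq_right, min_eq_left, min_eq_right, h, h'] <;>
      exact ⟨by assumption, by assumption⟩
  rcases pol_cases hpq u x with ⟨hx, e1, -⟩ | ⟨hx, e1, -⟩ <;>
  rcases pol_cases hpq u y with ⟨hy, e2, -⟩ | ⟨hy, e2, -⟩ <;> rw [e1, e2]
  · exact (abs1 h1 h2).1
  · have := key (mul_nonpos_of_nonpos_of_nonneg hx hy)
    exact (abs2 h1 h2 (h3.trans this) (h4.trans this)).1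
  · have := key (mul_nonpos_of_nonneg_of_nonpos hx hy)
    exact (abs2 h1 h2 (h3.trans this) (h4.trans this)).2
  · exact (abs1 h1 h2).2

lemma lintegral_pol (hpq : p ≠ q) (u : Euc N → ℝ) (hu : Measurable u) (hu' : Measurable (pol p q u)) {h : ℝ → ℝ≥0∞}
    (hh : Measurable h) : ∫⁻ x, h (pol p q u x) = ∫⁻ x, h (u x) := by
  have hr := (continuous_refl hpq).measurable
  have e : ∀ v : Euc N → ℝ, Measurable v → 2 * ∫⁻ x, h (v x) =
      ∫⁻ x, (h (v x) + h (v (refl p q x))) := by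
    intro v hv
    have hm : Measurable fun x => h (v x) := hh.comp hv
    rw [lintegral_add_left hm, lintegral_refl hpq (fun x => h (v x)), two_mul]
  have : 2 * ∫⁻ x, h (pol p q u x) = 2 * ∫⁻ x, h (u x) := by
    rw [e _ hu, e _ hu']
    refine lintegral_congr fun x => ?_
    rcases pol_cases hpq u x with ⟨_, e1, e2⟩ | ⟨_, e1, e2⟩ <;> rw [e1, e2] <;>
    rcases le_total (u x) (u (refl p q x)) with h | h <;> simp [h, add_comm]
  exact (ENNReal.mul_right_inj (by simp) (by simp)).1 this

lemma lint2_add (f g : Euc N → Euc N → ℝ≥0∞) (hf : Measurable (Function.uncurry f)) :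
    ∫⁻ x, ∫⁻ y, (f x y + g x y) = (∫⁻ x, ∫⁻ y, f x y) + ∫⁻ x, ∫⁻ y, g x y := by
  have hf' : Measurable fun x => ∫⁻ y, f x y := hf.lintegral_prod_right'
  rw [← lintegral_add_left hf']
  exact lintegral_congr fun x => lintegral_add_left (hf.of_uncurry_left) _

lemma En_four_aux (hpq : p ≠ q) (F : Euc N → Euc N → ℝ≥0∞) (hD : Measurable (Function.uncurry F)) :
    4 * (∫⁻ x, ∫⁻ y, F x y) = ∫⁻ x, ∫⁻ y, (F x y + F (refl p q x) (refl p q y)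
      + (F x (refl p q y) + F (refl p q x) y)) := by
  have hr := (continuous_refl hpq).measurable
  have m2 : Measurable (Function.uncurry fun x y => F (refl p q x) (refl p q y)) :=
    hD.comp (hr.prodMap hr)
  have m3 : Measurable (Function.uncurry fun x y => F x (refl p q y)) :=
    hD.comp (measurable_id.prodMap hr)
  have m12 : Measurable (Function.uncurry fun x y => F x y + F (refl p q x) (refl p q y)) :=
    hD.add m2
  rw [lint2_add (fun x y => F x y + F (refl p q x) (refl p q y)) _ m12,
    lint2_add F _ hD, lint2_add (fun x y => F x (refl p q y)) _ m3]
  have r1 : ∫⁻ x, ∫⁻ y, F (refl p q x) (refl p q y) = ∫⁻ x, ∫⁻ y, F x y := by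
    rw [lintegral_refl hpq (fun x => ∫⁻ y, F x (refl p q y))]
    exact lintegral_congr fun x => lintegral_refl hpq (fun y => F x y)
  have r2 : ∫⁻ x, ∫⁻ y, F x (refl p q y) = ∫⁻ x, ∫⁻ y, F x y :=
    lintegral_congr fun x => lintegral_refl hpq (fun y => F x y)
  have r3 : ∫⁻ x, ∫⁻ y, F (refl p q x) y = ∫⁻ x, ∫⁻ y, F x y :=
    lintegral_refl hpq (fun x => ∫⁻ y, F x y)
  rw [r1, r2, r3]
  generalize (∫⁻ x, ∫⁻ y, F x y) = A
  ring

lemma En_four (hpq : p ≠ q) {α : ℝ} {v : Euc N → ℝ} (hv : Measurable v) :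
    4 * En α v = ∫⁻ x, ∫⁻ y, (D α v x y + D α v (refl p q x) (refl p q y)
      + (D α v x (refl p q y) + D α v (refl p q x) y)) :=
  En_four_aux hpq _ (measurable_D α hv)

lemma En_pol (hpq : p ≠ q) (u : Euc N → ℝ) {α : ℝ} (hα : 0 ≤ α) (hu : Measurable u) (hu' : Measurable (pol p q u)) :
    En α (pol p q u) ≤ En α u := by
  have : 4 * En α (pol p q u) ≤ 4 * En α u := by
    rw [En_four hpq hu, En_four hpq hu']
    refine lintegral_mono fun x => lintegral_mono fun y => ?_
    unfold D
    have k1 : K α (refl p q x - refl p q y) = K α (x - y) :=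
      K_congr (norm_refl_sub_refl hpq x y).symm
    have k2 : K α (refl p q x - y) = K α (x - refl p q y) :=
      K_congr (norm_refl_sub hpq x y).symm
    have hsq := norm_sub_refl_sq hpq x y
    have hp := nsq_pos hpq
    have kk1 : 0 ≤ ell p q x * ell p q y → K α (x - refl p q y) ≤ K α (x - y) := by
      intro h
      have h6 : 0 ≤ 4 * ell p q x * ell p q y / ‖q - p‖^2 :=
        div_nonneg (by linarith) (by positivity)
      exact K_anti hα (le_of_sq_le_sq (by linarith) (norm_nonneg _))
    have kk2 : ell p q x * ell p q y ≤ 0 → K α (x - y) ≤ K α (x - refl p q y) := by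
      intro h
      have h6 : 4 * ell p q x * ell p q y / ‖q - p‖^2 ≤ 0 :=
        div_nonpos_of_nonpos_of_nonneg (by linarith) (by positivity)
      exact K_anti hα (le_of_sq_le_sq (by linarith) (norm_nonneg _))
    simp only [k1, k2]
    set a := u x
    set a' := u (refl p q x)
    set b := u y
    set b' := u (refl p q y)
    rcases pol_cases hpq u x with ⟨hx, e1, e1'⟩ | ⟨hx, e1, e1'⟩ <;>
    rcases pol_cases hpq u y with ⟨hy, e2, e2'⟩ | ⟨hy, e2, e2'⟩ <;> rw [e1, e2, e1', e2']
    · exact four_pt a a' b b' (kk1 (mul_nonneg_of_nonpos_of_nonpos hx hy))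
    · have := four_pt a a' b' b (kk2 (mul_nonpos_of_nonpos_of_nonneg hx hy))
      rw [max_comm b' b, min_comm b' b] at this
      convert this using 1 <;> ac_rfl
    · have := four_pt a' a b b' (kk2 (mul_nonpos_of_nonneg_of_nonpos hx hy))
      rw [max_comm a' a, min_comm a' a] at this
      convert this using 1 <;> ac_rfl
    · have := four_pt a a' b b' (kk1 (mul_nonneg hx hy))
      convert this using 1
      ac_rfl
  exact (ENNReal.mul_le_mul_iff_right (by simp) (by simp)).1 this

end pol

end FracIso

namespace FracIso

open scoped Topology RealInnerProductSpace

set_option linter.unusedSectionVars false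

/-- the competitor class -/
structure Cls {N : ℕ} (α L M R : ℝ) (e m V : ℝ≥0∞) (g : Euc N → ℝ) : Prop where
  lip : ∀ x y, |g x - g y| ≤ L * ‖x - y‖
  nonneg : ∀ x, 0 ≤ g x
  bdd : ∀ x, g x ≤ M
  supp : ∀ x, R < ‖x‖ → g x = 0
  en : En α g ≤ e
  mass : ∫⁻ x, ENNReal.ofReal (g x) = m
  vol : volume {x | 0 < g x} ≤ V

lemma continuous_of_lip {N : ℕ} {L : ℝ} {g : Euc N → ℝ}
    (h : ∀ x y, |g x - g y| ≤ L * ‖x - y‖) : Continuous g := by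
  refine (LipschitzWith.of_dist_le_mul (K := L.toNNReal) fun x y => ?_).continuous
  rw [Real.dist_eq, dist_eq_norm]
  refine (h x y).trans ?_
  gcongr
  exact Real.le_coe_toNNReal L

/-- second moment -/
noncomputable def Fm {N : ℕ} (g : Euc N → ℝ) : ℝ := ∫ x, g x * ‖x‖^2

section
variable {N : ℕ} {α L M R : ℝ} {e m V : ℝ≥0∞} {g : Euc N → ℝ}

lemma supp_pol {p q : Euc N} (hpq : ‖p‖ < ‖q‖) (hn : ∀ x, 0 ≤ g x)
    (hs : ∀ x, R < ‖x‖ → g x = 0) (x : Euc N) (hx : R < ‖x‖) : pol p q g x = 0 := by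
  have hne : p ≠ q := by rintro rfl; exact lt_irrefl _ hpq
  rcases pol_cases hne g x with ⟨h, e1, -⟩ | ⟨h, e1, -⟩
  · have h1 := norm_refl_sq hne x
    have h2 : 0 ≤ ‖q‖^2 - ‖p‖^2 := by nlinarith [norm_nonneg p]
    have h3 : 2 * ell p q x / ‖q - p‖^2 * (‖q‖^2 - ‖p‖^2) ≤ 0 :=
      mul_nonpos_of_nonpos_of_nonneg
        (div_nonpos_of_nonpos_of_nonneg (by linarith) (by positivity)) h2
    have h4 : ‖x‖ ≤ ‖refl p q x‖ := le_of_sq_le_sq (by linarith) (norm_nonneg _)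
    rw [e1, hs x hx, hs _ (hx.trans_le h4), max_self]
  · rw [e1, hs x hx, min_eq_left (hn _)]

lemma pol_cls (hα : 0 ≤ α) (hL : 0 ≤ L) (hg : Cls α L M R e m V g) {p q : Euc N}
    (hpq : ‖p‖ < ‖q‖) : Cls α L M R e m V (pol p q g) := by
  have hne : p ≠ q := by rintro rfl; exact lt_irrefl _ hpq
  have hlip := lip_pol hne g hL hg.lip
  have hm := (continuous_of_lip hg.lip).measurable
  have hm' := (continuous_of_lip hlip).measurable
  refine ⟨hlip, ?_, ?_, supp_pol hpq hg.nonneg hg.supp, (En_pol hne g hα hm hm').trans hg.en, ?_, ?_⟩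
  · intro x
    have h1 := hg.nonneg x
    have h2 := hg.nonneg (refl p q x)
    rcases pol_cases hne g x with ⟨h, e1, -⟩ | ⟨h, e1, -⟩ <;> rw [e1]
    · exact h1.trans (le_max_left _ _)
    · exact le_min h1 h2
  · intro x
    have h1 := hg.bdd x
    have h2 := hg.bdd (refl p q x)
    rcases pol_cases hne g x with ⟨h, e1, -⟩ | ⟨h, e1, -⟩ <;> rw [e1]
    · exact max_le h1 h2
    · exact (min_le_left _ _).trans h1
  · rw [← hg.mass]
    exact lintegral_pol hne g hm hm' ENNReal.measurable_ofReal
  · refine le_trans (le_of_eq ?_) hg.vol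
    have key := lintegral_pol hne g hm hm' (h := (Set.Ioi (0:ℝ)).indicator 1)
      (measurable_one.indicator measurableSet_Ioi)
    have e1 : ∀ v : Euc N → ℝ, Measurable v →
        ∫⁻ x, (Set.Ioi (0:ℝ)).indicator 1 (v x) = volume {x | 0 < v x} := by
      intro v hv
      rw [← lintegral_indicator_one (measurableSet_lt measurable_const hv)]
      rfl
    rw [← e1 _ hm, ← e1 _ hm', key]

lemma hcs_of_supp {f : Euc N → ℝ} (hs : ∀ x, R < ‖x‖ → f x = 0) : HasCompactSupport f := by
  refine HasCompactSupport.intro (isCompact_closedBall (0 : Euc N) R) fun x hx => hs x ?_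
  simpa using hx

lemma Fm_pol_lt (hL : 0 ≤ L) (hg : Cls α L M R e m V g) {p q : Euc N}
    (hpq : ‖p‖ < ‖q‖) (hlt : g p < g q) : Fm (pol p q g) < Fm g := by
  have hne : p ≠ q := by rintro rfl; exact lt_irrefl _ hpq
  have hcg := continuous_of_lip hg.lip
  have hcp := continuous_of_lip (lip_pol hne g hL hg.lip)
  have hcr := continuous_refl hne
  have i1 : Integrable fun x => g x * ‖x‖^2 :=
    Continuous.integrable_of_hasCompactSupport (by fun_prop)
      (hcs_of_supp hg.supp).mul_right
  have i2 : Integrable fun x => pol p q g x * ‖x‖^2 :=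
    Continuous.integrable_of_hasCompactSupport (by fun_prop)
      (hcs_of_supp (supp_pol hpq hg.nonneg hg.supp)).mul_right
  have j : ∀ f : Euc N → ℝ, Integrable f → Integrable fun x => f (refl p q x) := fun f hf =>
    (measurePreserving_refl p q).integrable_comp_of_integrable hf
  set δ : Euc N → ℝ := fun x => (g x * ‖x‖^2 + g (refl p q x) * ‖refl p q x‖^2) -
    (pol p q g x * ‖x‖^2 + pol p q g (refl p q x) * ‖refl p q x‖^2) with hδ
  have iA : Integrable fun x => g x * ‖x‖^2 - pol p q g x * ‖x‖^2 := i1.sub i2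
  have hintg : ∫ x, δ x = 2 * (Fm g - Fm (pol p q g)) := by
    have e1 : δ = fun x => (g x * ‖x‖^2 - pol p q g x * ‖x‖^2) +
        (g (refl p q x) * ‖refl p q x‖^2 - pol p q g (refl p q x) * ‖refl p q x‖^2) := by
      ext x; rw [hδ]; ring
    rw [e1, integral_add iA (j _ iA), integral_refl hne (fun x => g x * ‖x‖^2 - pol p q g x * ‖x‖^2),
      integral_sub i1 i2]
    unfold Fm; ring
  have hq : 0 < ‖q‖^2 - ‖p‖^2 := by nlinarith [norm_nonneg p]
  have hnn : 0 ≤ δ := by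
    intro x
    simp only [hδ, Pi.zero_apply]
    have h1 := norm_refl_sq hne x
    rcases pol_cases hne g x with ⟨h, e1, e2⟩ | ⟨h, e1, e2⟩ <;> rw [e1, e2]
    · have h3 : 2 * ell p q x / ‖q - p‖^2 * (‖q‖^2 - ‖p‖^2) ≤ 0 :=
        mul_nonpos_of_nonpos_of_nonneg
          (div_nonpos_of_nonpos_of_nonneg (by linarith) (by positivity)) hq.le
      rcases le_total (g x) (g (refl p q x)) with h' | h' <;> simp only [h', max_eq_left, max_eq_right, min_eq_left, min_eq_right] <;> nlinarith
    · have h3 : 0 ≤ 2 * ell p q x / ‖q - p‖^2 * (‖q‖^2 - ‖p‖^2) :=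
        mul_nonneg (div_nonneg (by linarith) (by positivity)) hq.le
      rcases le_total (g x) (g (refl p q x)) with h' | h' <;> simp only [h', max_eq_left, max_eq_right, min_eq_left, min_eq_right] <;> nlinarith
  have hδp : δ p ≠ 0 := by
    apply ne_of_gt
    simp only [hδ]
    have h1 := ell_left hne
    have h2 := nsq_pos hne
    rcases pol_cases hne g p with ⟨h, e1, e2⟩ | ⟨h, e1, e2⟩
    · rw [e1, e2, refl_left hne, max_eq_right hlt.le, min_eq_left hlt.le]
      nlinarith
    · linarith
  have hcs : HasCompactSupport δ := by
    have hb := isCompact_closedBall (0 : Euc N) R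
    refine HasCompactSupport.intro (hb.union (hb.image hcr)) fun x hx => ?_
    rw [Set.mem_union, not_or] at hx
    have h1 : R < ‖x‖ := by simpa using hx.1
    have h2 : R < ‖refl p q x‖ := by
      by_contra! h
      exact hx.2 ⟨refl p q x, by simpa using h, refl_refl hne x⟩
    have hs := supp_pol hpq hg.nonneg hg.supp
    simp only [hδ, hg.supp _ h1, hg.supp _ h2, hs _ h1, hs _ h2]
    ring
  have hcd : Continuous δ := by
    rw [hδ]; fun_prop
  have := hcd.integral_pos_of_hasCompactSupport_nonneg_nonzero (μ := volume) hcs hnn hδp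
  linarith

/-- compactness of the equi-Lipschitz class -/
lemma cls_seq_compact (g : ℕ → Euc N → ℝ)
    (hlip : ∀ n x y, |g n x - g n y| ≤ L * ‖x - y‖) (h0 : ∀ n x, 0 ≤ g n x)
    (hM : ∀ n x, g n x ≤ M) :
    ∃ (g' : Euc N → ℝ) (φ : ℕ → ℕ), StrictMono φ ∧
      ∀ x, Tendsto (fun n => g (φ n) x) atTop (𝓝 (g' x)) := by
  set T : Set C(Euc N, ℝ) := {f | (∀ x, f x ∈ Set.Icc 0 M) ∧ ∀ x y, |f x - f y| ≤ L * ‖x - y‖}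
    with hT
  have hTc : IsCompact T := by
    apply ArzelaAscoli.isCompact_of_equicontinuous
    · have : ContinuousMap.toFun '' T =
          (Set.univ.pi fun _ => Set.Icc 0 M) ∩ {f | ∀ x y, |f x - f y| ≤ L * ‖x - y‖} := by
        ext f
        constructor
        · rintro ⟨f, hf, rfl⟩
          exact ⟨fun x _ => hf.1 x, hf.2⟩
        · rintro ⟨h1, h2⟩
          exact ⟨⟨f, continuous_of_lip h2⟩, ⟨fun x => h1 x trivial, h2⟩, rfl⟩
      rw [this]
      refine (isCompact_univ_pi fun _ => isCompact_Icc).inter_right ?_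
      simp only [Set.ofPred_forall]
      refine isClosed_iInter fun x => isClosed_iInter fun y => ?_
      exact isClosed_le (by fun_prop) continuous_const
    · refine (LipschitzWith.uniformEquicontinuous (fun (f : T) => (⇑(f : C(Euc N, ℝ)))) L.toNNReal
        fun f => ?_).equicontinuous
      refine LipschitzWith.of_dist_le_mul fun x y => ?_
      rw [Real.dist_eq, dist_eq_norm]
      refine (f.2.2 x y).trans ?_
      gcongr
      exact Real.le_coe_toNNReal L
  obtain ⟨f, -, φ, hφ, hlim⟩ := hTc.isSeqCompact (x := fun n => ⟨g n, continuous_of_lip (hlip n)⟩)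
    (fun n => ⟨fun x => ⟨h0 n x, hM n x⟩, hlip n⟩)
  refine ⟨f, φ, hφ, fun x => ?_⟩
  exact ((continuous_eval_const x).tendsto f).comp hlim

lemma En_fatou {g : ℕ → Euc N → ℝ} {g' : Euc N → ℝ} (hm : ∀ n, Measurable (g n))
    (hlim : ∀ x, Tendsto (fun n => g n x) atTop (𝓝 (g' x))) (he : ∀ n, En α (g n) ≤ e) :
    En α g' ≤ e := by
  have hD : ∀ x y, D α g' x y ≤ liminf (fun n => D α (g n) x y) atTop := by
    intro x y
    by_cases hxy : x = y
    · simp [D, hxy]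
    · apply le_of_eq
      symm
      apply Tendsto.liminf_eq
      unfold D
      refine ENNReal.Tendsto.mul_const (ENNReal.tendsto_ofReal ((hlim x).sub (hlim y)).abs) ?_
      right
      unfold K
      have : 0 < ‖x - y‖ := norm_pos_iff.2 (sub_ne_zero.2 hxy)
      rw [ENNReal.ofReal_rpow_of_pos this]
      exact ENNReal.ofReal_ne_top
  calc En α g' ≤ ∫⁻ x, ∫⁻ y, liminf (fun n => D α (g n) x y) atTop :=
        lintegral_mono fun x => lintegral_mono fun y => hD x y
    _ ≤ ∫⁻ x, liminf (fun n => ∫⁻ y, D α (g n) x y) atTop := by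
        refine lintegral_mono fun x => lintegral_liminf_le fun n => ?_
        exact (measurable_D α (hm n)).of_uncurry_left
    _ ≤ liminf (fun n => ∫⁻ x, ∫⁻ y, D α (g n) x y) atTop :=
        lintegral_liminf_le fun n => (measurable_D α (hm n)).lintegral_prod_right'
    _ ≤ liminf (fun n => e) atTop := liminf_le_liminf (Eventually.of_forall fun n => he n)
    _ = e := by simp

lemma cls_closed {g : ℕ → Euc N → ℝ} {g' : Euc N → ℝ}
    (hlim : ∀ x, Tendsto (fun n => g n x) atTop (𝓝 (g' x)))
    (hg : ∀ n, Cls α L M R e m V (g n)) :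
    Cls α L M R e m V g' ∧ Tendsto (fun n => Fm (g n)) atTop (𝓝 (Fm g')) := by
  have hm : ∀ n, Measurable (g n) := fun n => (continuous_of_lip (hg n).lip).measurable
  have hbm : MeasurableSet (closedBall (0 : Euc N) R) := isClosed_closedBall.measurableSet
  have hbf : volume (closedBall (0 : Euc N) R) ≠ ⊤ := measure_closedBall_lt_top.ne
  have hs : ∀ x, R < ‖x‖ → g' x = 0 := fun x hx =>
    tendsto_nhds_unique (hlim x) (by simp [fun n => (hg n).supp x hx])
  have hlip : ∀ x y, |g' x - g' y| ≤ L * ‖x - y‖ := fun x y =>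
    le_of_tendsto ((hlim x).sub (hlim y)).abs (Eventually.of_forall fun n => (hg n).lip x y)
  refine ⟨⟨hlip, fun x => ge_of_tendsto (hlim x) (Eventually.of_forall fun n => (hg n).nonneg x),
    fun x => le_of_tendsto (hlim x) (Eventually.of_forall fun n => (hg n).bdd x), hs,
    En_fatou hm hlim fun n => (hg n).en, ?_, ?_⟩, ?_⟩
  · refine tendsto_nhds_unique (f := fun n => ∫⁻ x, ENNReal.ofReal (g n x)) (l := atTop) ?_ ?_
    · refine tendsto_lintegral_of_dominated_convergence
        ((closedBall (0 : Euc N) R).indicator fun _ => ENNReal.ofReal M)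
        (fun n => (hm n).ennreal_ofReal) (fun n => Eventually.of_forall fun x => ?_) ?_
        (Eventually.of_forall fun x => ENNReal.tendsto_ofReal (hlim x))
      · by_cases hx : x ∈ closedBall (0 : Euc N) R
        · simp only [hx, Set.indicator_of_mem]
          exact ENNReal.ofReal_le_ofReal ((hg n).bdd x)
        · simp [(hg n).supp x (by simpa using hx)]
      · rw [lintegral_indicator_const hbm]
        exact ENNReal.mul_ne_top ENNReal.ofReal_ne_top hbf
    · simp [fun n => (hg n).mass]
  · have e1 : ∀ v : Euc N → ℝ, Measurable v →
        volume {x | 0 < v x} = ∫⁻ x, {x | 0 < v x}.indicator 1 x := by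
      intro v hv
      rw [← lintegral_indicator_one (measurableSet_lt measurable_const hv)]
    rw [e1 _ (continuous_of_lip hlip).measurable]
    calc _ ≤ ∫⁻ x, liminf (fun n => {x | 0 < g n x}.indicator (1 : Euc N → ℝ≥0∞) x) atTop := by
          refine lintegral_mono fun x => ?_
          by_cases hx : 0 < g' x
          · refine le_liminf_of_le (by isBoundedDefault) ?_
            filter_upwards [(hlim x).eventually (lt_mem_nhds hx)] with n hn
            simp [Set.indicator, hx, hn]
          · simp [Set.indicator, hx]
      _ ≤ liminf (fun n => ∫⁻ x, {x | 0 < g n x}.indicator (1 : Euc N → ℝ≥0∞) x) atTop :=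
          lintegral_liminf_le fun n =>
            measurable_one.indicator (measurableSet_lt measurable_const (hm n))
      _ ≤ liminf (fun n : ℕ => V) atTop := liminf_le_liminf (Eventually.of_forall fun n => by
            simpa [← e1 _ (hm n)] using (hg n).vol)
      _ = V := by simp
  · unfold Fm
    refine tendsto_integral_of_dominated_convergence
      ((closedBall (0 : Euc N) R).indicator fun _ => M * R^2) (fun n => ?_) ?_
      (fun n => Eventually.of_forall fun x => ?_) (Eventually.of_forall fun x => (hlim x).mul_const _)
    · exact ((hm n).mul (by fun_prop)).aestronglyMeasurable
    · exact (integrable_indicator_iff hbm).2 (integrableOn_const hbf)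
    · have h0 := (hg n).nonneg x
      by_cases hx : x ∈ closedBall (0 : Euc N) R
      · simp only [hx, Set.indicator_of_mem]
        rw [Real.norm_eq_abs, abs_of_nonneg (by positivity)]
        have hx' : ‖x‖ ≤ R := by simpa using hx
        exact mul_le_mul ((hg n).bdd x) (by gcongr) (by positivity) (h0.trans ((hg n).bdd x))
      · rw [(hg n).supp x (by simpa using hx)]; simp [hx]

/-- existence of a radially nonincreasing competitor -/
theorem exists_radial (hα : 0 ≤ α) (hL : 0 ≤ L) (hg : Cls α L M R e m V g) :
    ∃ g', Cls α L M R e m V g' ∧ ∀ p q : Euc N, ‖p‖ < ‖q‖ → g' q ≤ g' p := by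
  set S : Set ℝ := Fm '' {g : Euc N → ℝ | Cls α L M R e m V g} with hS
  have hne : S.Nonempty := ⟨_, g, hg, rfl⟩
  have hbdd : BddBelow S := by
    refine ⟨0, ?_⟩
    rintro _ ⟨f, hf, rfl⟩
    exact integral_nonneg fun x => mul_nonneg (hf.nonneg x) (by positivity)
  obtain ⟨u, -, hu, huS⟩ := exists_seq_tendsto_sInf hne hbdd
  choose f hf hfu using huS
  obtain ⟨g', φ, hφ, hlim⟩ := cls_seq_compact f (fun n => (hf n).lip) (fun n => (hf n).nonneg)
    (fun n => (hf n).bdd)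
  obtain ⟨hg', hF⟩ := cls_closed hlim fun n => hf (φ n)
  have hmin : Fm g' = sInf S := by
    refine tendsto_nhds_unique hF ?_
    simp only [hfu]
    exact hu.comp hφ.tendsto_atTop
  refine ⟨g', hg', fun p q hpq => ?_⟩
  by_contra! hlt
  have h1 := Fm_pol_lt hL hg' hpq hlt
  have h2 : sInf S ≤ Fm (pol p q g') := csInf_le hbdd ⟨_, pol_cls hα hL hg' hpq, rfl⟩
  linarith

end
end FracIso

namespace FracIso

open scoped Topology RealInnerProductSpace

set_option linter.unusedSectionVars false

/-- the perimeter as an extended nonnegative number -/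
noncomputable def Per {N : ℕ} (α : ℝ) (A : Set (Euc N)) : ℝ≥0∞ :=
  En α (A.indicator fun _ => (1 : ℝ))

lemma En_eq_prod {N : ℕ} {α : ℝ} {u : Euc N → ℝ} (hu : Measurable u) :
    En α u = ∫⁻ z : Euc N × Euc N, D α u z.1 z.2 := by
  exact (lintegral_prod (fun z : Euc N × Euc N => D α u z.1 z.2)
    (measurable_D α hu).aemeasurable).symm

lemma ofReal_abs_sub {a b : ℝ} (ha : 0 ≤ a) (hb : 0 ≤ b) :
    ENNReal.ofReal |a - b| = ∫⁻ t in Set.Ioi (0:ℝ),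
      ENNReal.ofReal |(if t < a then (1:ℝ) else 0) - (if t < b then 1 else 0)| := by
  wlog hab : a ≤ b generalizing a b
  · rw [abs_sub_comm, this hb ha (le_of_not_ge hab)]
    refine lintegral_congr fun t => ?_
    rw [abs_sub_comm]
  rw [setLIntegral_congr Ioi_ae_eq_Ici]
  have : ∀ t, ENNReal.ofReal |(if t < a then (1:ℝ) else 0) - (if t < b then 1 else 0)| =
      (Set.Ico a b).indicator 1 t := by
    intro t
    simp only [Set.indicator, Set.mem_Ico]
    by_cases h1 : t < a
    · have h2 := h1.trans_le hab
      simp [h1, h2, not_le.2 h1]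
    · by_cases h2 : t < b
      · simp [h1, h2, not_lt.1 h1]
      · simp [h1, h2]
  simp only [this]
  have hI : Set.Ico a b ∩ Set.Ici 0 = Set.Ico a b :=
    Set.inter_eq_left.2 fun t ht => Set.mem_Ici.2 (ha.trans ht.1)
  rw [lintegral_indicator_one measurableSet_Ico, Measure.restrict_apply measurableSet_Ico, hI, Real.volume_Ico, abs_sub_comm,
    abs_of_nonneg (by linarith)]

lemma coarea {N : ℕ} {α : ℝ} {u : Euc N → ℝ} (hu : Measurable u) (h0 : ∀ x, 0 ≤ u x) :
    En α u = ∫⁻ t in Set.Ioi (0:ℝ), Per α {x | t < u x} := by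
  have hmeas : ∀ t, MeasurableSet {x | t < u x} := fun t => measurableSet_lt measurable_const hu
  have e1 : ∀ t, Per α {x | t < u x} = ∫⁻ z : Euc N × Euc N,
      ENNReal.ofReal |(if t < u z.1 then (1:ℝ) else 0) - (if t < u z.2 then 1 else 0)| *
        K α (z.1 - z.2) := by
    intro t
    rw [Per, En_eq_prod (measurable_const.indicator (hmeas t))]
    rfl
  simp only [e1]
  have hF : Measurable (Function.uncurry fun (t : ℝ) (z : Euc N × Euc N) =>
      ENNReal.ofReal |(if t < u z.1 then (1:ℝ) else 0) - (if t < u z.2 then 1 else 0)| *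
        K α (z.1 - z.2)) := by
    have m1 : Measurable fun w : ℝ × (Euc N × Euc N) => (if w.1 < u w.2.1 then (1:ℝ) else 0) :=
      Measurable.ite (measurableSet_lt measurable_fst (by fun_prop)) measurable_const
        measurable_const
    have m2 : Measurable fun w : ℝ × (Euc N × Euc N) => (if w.1 < u w.2.2 then (1:ℝ) else 0) :=
      Measurable.ite (measurableSet_lt measurable_fst (by fun_prop)) measurable_const
        measurable_const
    have m3 : Measurable fun w : ℝ × (Euc N × Euc N) => K α (w.2.1 - w.2.2) := by fun_prop
    exact ((m1.sub m2).abs.ennreal_ofReal).mul m3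
  rw [lintegral_lintegral_swap hF.aemeasurable, En_eq_prod hu]
  refine lintegral_congr fun z => ?_
  rw [lintegral_mul_const, ← ofReal_abs_sub (h0 _) (h0 _)]
  · rfl
  · have m1 : ∀ a : ℝ, Measurable fun t : ℝ => (if t < a then (1:ℝ) else 0) := fun a =>
      Measurable.ite measurableSet_Iio measurable_const measurable_const
    exact ((m1 _).sub (m1 _)).abs.ennreal_ofReal

lemma lint_smul {N : ℕ} {c : ℝ} (hc : 0 < c) (f : Euc N → ℝ≥0∞) :
    ∫⁻ x, f x = ENNReal.ofReal (c ^ N) * ∫⁻ x, f (c • x) := by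
  have hemb : MeasurableEmbedding fun x : Euc N => c • x :=
    (Homeomorph.smulOfNeZero c hc.ne').measurableEmbedding
  rw [← hemb.lintegral_map, Measure.map_addHaar_smul volume hc.ne', lintegral_smul_measure,
    finrank_euclideanSpace_fin, smul_eq_mul, ← mul_assoc, ← ENNReal.ofReal_mul (by positivity),
    abs_of_pos (by positivity), mul_inv_cancel₀ (by positivity)]
  simp

lemma K_smul {N : ℕ} {α c : ℝ} (hc : 0 < c) (x : Euc N) :
    K α (c • x) = ENNReal.ofReal (c ^ (-α)) * K α x := by
  unfold K
  rw [norm_smul, Real.norm_eq_abs, abs_of_pos hc, ENNReal.ofReal_mul hc.le,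
    ENNReal.mul_rpow_of_ne_top ENNReal.ofReal_ne_top ENNReal.ofReal_ne_top,
    ENNReal.ofReal_rpow_of_pos hc]

lemma En_smul {N : ℕ} {α c : ℝ} (hc : 0 < c) (u : Euc N → ℝ) :
    En α u = ENNReal.ofReal (c ^ (2 * (N:ℝ) - α)) * En α (fun x => u (c • x)) := by
  have h : ∀ x y, D α u (c • x) (c • y) =
      ENNReal.ofReal (c ^ (-α)) * D α (fun x => u (c • x)) x y := by
    intro x y
    unfold D
    rw [← smul_sub, K_smul hc]; ring
  have hc' : ENNReal.ofReal (c ^ (2 * (N:ℝ) - α)) =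
      ENNReal.ofReal (c ^ N) * (ENNReal.ofReal (c ^ N) * ENNReal.ofReal (c ^ (-α))) := by
    rw [← ENNReal.ofReal_mul (by positivity), ← ENNReal.ofReal_mul (by positivity)]
    congr 1
    rw [← Real.rpow_natCast, ← Real.rpow_add hc, ← Real.rpow_add hc]
    congr 1; ring
  have h2 : ∀ x, ∫⁻ y, D α u (c • x) y =
      (ENNReal.ofReal (c ^ N) * ENNReal.ofReal (c ^ (-α))) *
        ∫⁻ y, D α (fun x => u (c • x)) x y := by
    intro x
    rw [lint_smul hc, mul_assoc]
    congr 1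
    simp only [h]
    rw [lintegral_const_mul' _ _ ENNReal.ofReal_ne_top]
  rw [En, lint_smul hc]
  simp only [h2]
  rw [lintegral_const_mul' _ _ (ENNReal.mul_ne_top ENNReal.ofReal_ne_top ENNReal.ofReal_ne_top),
    hc', mul_assoc]
  rw [En]
  ring

lemma Per_ball {N : ℕ} {s ρ : ℝ} (hρ : 0 < ρ) :
    Per ((N:ℝ) + s) (ball (0 : Euc N) ρ) =
      ENNReal.ofReal (ρ ^ ((N:ℝ) - s)) * Per ((N:ℝ) + s) (ball (0 : Euc N) 1) := by
  rw [Per, En_smul hρ, Per]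
  congr 2
  · congr 1; ring
  · ext x
    simp only [Set.indicator, mem_ball_zero_iff, norm_smul, Real.norm_eq_abs, abs_of_pos hρ]
    congr 1
    rw [eq_iff_iff]
    constructor
    · intro h; nlinarith
    · intro h; nlinarith

lemma integrable_prof {N : ℕ} (hN : 0 < N) {s L M : ℝ} (hs0 : 0 < s) (hs1 : s < 1) (hL : 0 ≤ L)
    (hM : 0 ≤ M) :
    Integrable (fun x : Euc N => min (L * ‖x‖) M * ‖x‖ ^ (-((N:ℝ) + s))) := by
  have : Nonempty (Fin N) := ⟨⟨0, hN⟩⟩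
  have : Nontrivial (Euc N) := inferInstance
  rw [integrable_fun_norm_addHaar volume (f := fun t : ℝ => min (L * t) M * t ^ (-((N:ℝ) + s)))]
  rw [finrank_euclideanSpace_fin]
  have hm : Measurable fun y : ℝ => y ^ (N - 1) • (min (L * y) M * y ^ (-((N:ℝ) + s))) := by
    fun_prop
  have hpow : ∀ t : ℝ, 0 < t → t ^ (N - 1) * t ^ (-((N:ℝ) + s)) = t ^ (-1 - s) := by
    intro t ht
    rw [← Real.rpow_natCast, ← Real.rpow_add ht, Nat.cast_sub hN]
    congr 1; push_cast; ring
  rw [← Set.Ioc_union_Ioi_eq_Ioi (zero_le_one' ℝ)]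
  refine IntegrableOn.union ?_ ?_
  · have h1 : IntegrableOn (fun t : ℝ => L * t ^ (-s)) (Set.Ioc 0 1) := by
      have := intervalIntegral.intervalIntegrable_rpow' (a := 0) (b := 1) (r := -s) (by linarith)
      rw [intervalIntegrable_iff_integrableOn_Ioc_of_le zero_le_one] at this
      exact this.const_mul L
    refine Integrable.mono' h1 hm.aestronglyMeasurable ?_
    filter_upwards [ae_restrict_mem measurableSet_Ioc] with t ht
    have ht0 : 0 < t := ht.1
    rw [Real.norm_eq_abs, abs_of_nonneg (smul_nonneg (by positivity) (mul_nonneg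
      (le_min (by positivity) hM) (by positivity))), smul_eq_mul]
    calc t ^ (N - 1) * (min (L * t) M * t ^ (-((N:ℝ) + s)))
        ≤ t ^ (N - 1) * ((L * t) * t ^ (-((N:ℝ) + s))) := by
          gcongr; exact min_le_left _ _
      _ = L * (t ^ (N - 1) * t ^ (-((N:ℝ) + s)) * t) := by ring
      _ = L * t ^ (-s) := by
          rw [hpow t ht0]
          nth_rewrite 2 [← Real.rpow_one t]
          rw [← Real.rpow_add ht0]; ring_nf
  · have h1 : IntegrableOn (fun t : ℝ => M * t ^ (-1 - s)) (Set.Ioi 1) :=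
      (integrableOn_Ioi_rpow_of_lt (by linarith) one_pos).const_mul M
    refine Integrable.mono' h1 hm.aestronglyMeasurable ?_
    filter_upwards [ae_restrict_mem measurableSet_Ioi] with t ht
    have ht0 : 0 < t := one_pos.trans ht
    rw [Real.norm_eq_abs, abs_of_nonneg (smul_nonneg (by positivity) (mul_nonneg
      (le_min (by positivity) hM) (by positivity))), smul_eq_mul]
    calc t ^ (N - 1) * (min (L * t) M * t ^ (-((N:ℝ) + s)))
        ≤ t ^ (N - 1) * (M * t ^ (-((N:ℝ) + s))) := by
          gcongr; exact min_le_right _ _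
      _ = M * (t ^ (N - 1) * t ^ (-((N:ℝ) + s))) := by ring
      _ = M * t ^ (-1 - s) := by rw [hpow t ht0]

lemma En_lt_top {N : ℕ} (hN : 0 < N) {s L M R : ℝ} (hs0 : 0 < s) (hs1 : s < 1) (hL : 0 ≤ L)
    {u : Euc N → ℝ} (hlip : ∀ x y, |u x - u y| ≤ L * ‖x - y‖) (hM : ∀ x y, |u x - u y| ≤ M)
    (hs : ∀ x, R < ‖x‖ → u x = 0) : En ((N:ℝ) + s) u < ⊤ := by
  have hM0 : 0 ≤ M := (abs_nonneg _).trans (hM 0 0)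
  set H : Euc N → ℝ≥0∞ := fun x => ENNReal.ofReal (min (L * ‖x‖) M) * K ((N:ℝ) + s) x with hH
  have hHm : Measurable H := by rw [hH]; fun_prop
  have hHe : ∀ x, H x = ENNReal.ofReal (min (L * ‖x‖) M * ‖x‖ ^ (-((N:ℝ) + s))) := by
    intro x
    by_cases hx : x = 0
    · simp [hH, hx, hM0]
    · have : 0 < ‖x‖ := norm_pos_iff.2 hx
      simp only [hH, K]
      rw [ENNReal.ofReal_rpow_of_pos this, ENNReal.ofReal_mul (le_min (by positivity) hM0)]
  have hHi : ∫⁻ x, H x < ⊤ := by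
    simp only [hHe]
    exact (integrable_prof hN hs0 hs1 hL hM0).lintegral_lt_top
  set B := closedBall (0 : Euc N) R
  have hBm : MeasurableSet B := isClosed_closedBall.measurableSet
  have hBf : volume B < ⊤ := measure_closedBall_lt_top
  have hD : ∀ x y, D ((N:ℝ) + s) u x y ≤
      B.indicator 1 x * H (x - y) + B.indicator 1 y * H (x - y) := by
    intro x y
    have h1 : D ((N:ℝ) + s) u x y ≤ H (x - y) := by
      simp only [D, hH]
      gcongr
      exact le_min (hlip x y) (hM x y)
    by_cases hx : x ∈ B
    · simp only [hx, Set.indicator_of_mem, Pi.one_apply, one_mul]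
      exact h1.trans le_self_add
    · by_cases hy : y ∈ B
      · simp only [hy, Set.indicator_of_mem, Pi.one_apply, one_mul]
        exact h1.trans le_add_self
      · have e1 := hs x (by simpa [B] using hx)
        have e2 := hs y (by simpa [B] using hy)
        simp [D, e1, e2]
  have hind : Measurable (B.indicator (1 : Euc N → ℝ≥0∞)) := measurable_one.indicator hBm
  have m1 : Measurable (Function.uncurry fun x y => B.indicator (1 : Euc N → ℝ≥0∞) x * H (x - y)) := by
    unfold Function.uncurry; fun_prop
  have m2 : Measurable (Function.uncurry fun x y => B.indicator (1 : Euc N → ℝ≥0∞) y * H (x - y)) := by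
    unfold Function.uncurry; fun_prop
  calc En ((N:ℝ) + s) u ≤ ∫⁻ x, ∫⁻ y, (B.indicator 1 x * H (x - y) + B.indicator 1 y * H (x - y)) :=
        lintegral_mono fun x => lintegral_mono fun y => hD x y
    _ = (∫⁻ x, ∫⁻ y, B.indicator 1 x * H (x - y)) + ∫⁻ x, ∫⁻ y, B.indicator 1 y * H (x - y) :=
        lint2_add _ _ m1
    _ = volume B * (∫⁻ x, H x) + volume B * (∫⁻ x, H x) := by
        congr 1
        · have : ∀ x, ∫⁻ y, B.indicator 1 x * H (x - y) = B.indicator 1 x * ∫⁻ y, H y := by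
            intro x
            rw [lintegral_const_mul _ (by fun_prop), lintegral_sub_left_eq_self H x]
          simp only [this]
          rw [lintegral_mul_const _ hind, lintegral_indicator_one hBm]
        · rw [lintegral_lintegral_swap m2.aemeasurable]
          have : ∀ y, ∫⁻ x, B.indicator 1 y * H (x - y) = B.indicator 1 y * ∫⁻ x, H x := by
            intro y
            rw [lintegral_const_mul _ (by fun_prop), lintegral_sub_right_eq_self H y]
          simp only [this]
          rw [lintegral_mul_const _ hind, lintegral_indicator_one hBm]
    _ < ⊤ := by
        have := ENNReal.mul_lt_top hBf hHi
        exact ENNReal.add_lt_top.2 ⟨this, this⟩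

lemma Per_ball_one_lt_top {N : ℕ} (hN : 0 < N) {s : ℝ} (hs0 : 0 < s) (hs1 : s < 1) :
    Per ((N:ℝ) + s) (ball (0 : Euc N) 1) < ⊤ := by
  set u : Euc N → ℝ := fun x => max (1 - ‖x‖) 0 with hu
  have hlip : ∀ x y, |u x - u y| ≤ 1 * ‖x - y‖ := by
    intro x y
    have := abs_max_sub_max_le_max (1 - ‖x‖) 0 (1 - ‖y‖) 0
    refine this.trans (max_le ?_ (by simp))
    rw [show 1 - ‖x‖ - (1 - ‖y‖) = ‖y‖ - ‖x‖ by ring, one_mul, norm_sub_rev]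
    exact abs_norm_sub_norm_le _ _
  have h0 : ∀ x, 0 ≤ u x := fun x => le_max_right _ _
  have h1 : ∀ x, u x ≤ 1 := fun x => max_le (by linarith [norm_nonneg x]) zero_le_one
  have hfin := En_lt_top hN hs0 hs1 zero_le_one hlip (M := 1) (R := 1)
    (fun x y => abs_le.2 ⟨by linarith [h0 x, h1 y], by linarith [h0 y, h1 x]⟩)
    (fun x hx => max_eq_right (by linarith))
  rw [coarea (continuous_of_lip hlip).measurable h0] at hfin
  set P := Per ((N:ℝ) + s) (ball (0 : Euc N) 1)
  have hlow : ∫⁻ t in Set.Ioo (0:ℝ) (1/2), ENNReal.ofReal ((1/2) ^ ((N:ℝ) - s)) * P ≤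
      ∫⁻ t in Set.Ioi (0:ℝ), Per ((N:ℝ) + s) {x | t < u x} := by
    refine le_trans ?_ (lintegral_mono_set (s := Set.Ioo (0:ℝ) (1/2)) Set.Ioo_subset_Ioi_self)
    refine setLIntegral_mono' measurableSet_Ioo fun t ht => ?_
    have : {x | t < u x} = ball (0 : Euc N) (1 - t) := by
      ext x
      simp only [hu, Set.mem_ofPred_eq, mem_ball_zero_iff, lt_max_iff]
      constructor
      · rintro (h | h)
        · linarith
        · linarith [ht.1]
      · intro h; left; linarith
    rw [this, Per_ball (by linarith [ht.2])]
    gcongr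
    · have : (1:ℝ) ≤ N := by exact_mod_cast hN
      linarith
    · linarith [ht.2]
  rw [setLIntegral_const] at hlow
  by_contra h
  have hP : P = ⊤ := not_lt_top_iff.1 h
  rw [hP, ENNReal.mul_top (by simp; positivity), ENNReal.top_mul (by simp)] at hlow
  exact absurd (top_le_iff.1 hlow) hfin.ne

lemma Per_ball_one_pos {N : ℕ} (hN : 0 < N) {s : ℝ} :
    0 < Per ((N:ℝ) + s) (ball (0 : Euc N) 1) := by
  have : Nonempty (Fin N) := ⟨⟨0, hN⟩⟩
  have : Nontrivial (Euc N) := inferInstance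
  set A := ball (0 : Euc N) 1
  set B := (closedBall (0 : Euc N) 1)ᶜ
  have hAm : MeasurableSet A := isOpen_ball.measurableSet
  have hBo : IsOpen B := isClosed_closedBall.isOpen_compl
  have hBn : B.Nonempty := by
    obtain ⟨x, hx⟩ := NormedSpace.exists_lt_norm ℝ (Euc N) 1
    exact ⟨x, by simpa [B] using hx⟩
  have hmD : Measurable fun z : Euc N × Euc N => D ((N:ℝ)+s) (A.indicator fun _ => (1:ℝ)) z.1 z.2 :=
    measurable_D _ (measurable_const.indicator hAm)
  rw [Per, En_eq_prod (measurable_const.indicator hAm), lintegral_pos_iff_support hmD]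
  have hsub : A ×ˢ B ⊆ Function.support
      (fun z : Euc N × Euc N => D ((N:ℝ)+s) (A.indicator fun _ => (1:ℝ)) z.1 z.2) := by
    rintro ⟨x, y⟩ ⟨hx, hy⟩
    have hx' : x ∈ A := hx
    have hy' : y ∉ A := fun h => hy (ball_subset_closedBall h)
    have hxy : x ≠ y := by rintro rfl; exact hy' hx'
    have hpos : 0 < ‖x - y‖ := norm_pos_iff.2 (sub_ne_zero.2 hxy)
    simp only [Function.mem_support, D, K, hx', hy', Set.indicator_of_mem, not_false_eq_true,
      Set.indicator_of_notMem]
    rw [ENNReal.ofReal_rpow_of_pos hpos]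
    have : 0 < ‖x - y‖ ^ (-((N:ℝ)+s)) := by positivity
    refine mul_ne_zero (by simp) (ENNReal.ofReal_pos.2 this).ne'
  refine lt_of_lt_of_le ?_ (measure_mono hsub)
  rw [Measure.volume_eq_prod, Measure.prod_prod]
  exact ENNReal.mul_pos (isOpen_ball.measure_pos _ ⟨0, by simp⟩).ne'
    (hBo.measure_pos _ hBn).ne'

end FracIso

namespace FracIso

open scoped Topology RealInnerProductSpace

set_option linter.unusedSectionVars false

/-- the isoperimetric constant at scale `ρ` -/
noncomputable def kap (N : ℕ) (s ρ : ℝ) : ℝ≥0∞ :=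
  ENNReal.ofReal (ρ ^ (-s)) * (Per ((N:ℝ) + s) (ball (0 : Euc N) 1) / volume (ball (0 : Euc N) 1))

lemma vol_ball {N : ℕ} {ρ : ℝ} (hρ : 0 < ρ) :
    volume (ball (0 : Euc N) ρ) = ENNReal.ofReal (ρ ^ N) * volume (ball (0 : Euc N) 1) := by
  have := Measure.addHaar_ball_of_pos (volume : Measure (Euc N)) 0 hρ
  rwa [finrank_euclideanSpace_fin] at this

lemma vol_one_pos {N : ℕ} : 0 < volume (ball (0 : Euc N) 1) :=
  isOpen_ball.measure_pos _ ⟨0, by simp⟩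

lemma vol_one_ne_top {N : ℕ} : volume (ball (0 : Euc N) 1) ≠ ⊤ := measure_ball_lt_top.ne

lemma kap_ne_top {N : ℕ} (hN : 0 < N) {s ρ : ℝ} (hs0 : 0 < s) (hs1 : s < 1) : kap N s ρ ≠ ⊤ :=
  ENNReal.mul_ne_top ENNReal.ofReal_ne_top
    (ENNReal.div_ne_top (Per_ball_one_lt_top hN hs0 hs1).ne vol_one_pos.ne')

lemma kap_mul_vol {N : ℕ} {s ρ ρ' : ℝ} (hρ' : 0 < ρ') :
    kap N s ρ * volume (ball (0 : Euc N) ρ') =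
      ENNReal.ofReal (ρ ^ (-s)) * ENNReal.ofReal (ρ' ^ N) *
        Per ((N:ℝ) + s) (ball (0 : Euc N) 1) := by
  rw [kap, vol_ball hρ']
  calc _ = ENNReal.ofReal (ρ ^ (-s)) * ENNReal.ofReal (ρ' ^ N) *
      (Per ((N:ℝ) + s) (ball (0 : Euc N) 1) / volume (ball (0 : Euc N) 1) *
        volume (ball (0 : Euc N) 1)) := by ring
    _ = _ := by rw [ENNReal.div_mul_cancel vol_one_pos.ne' vol_one_ne_top]

lemma kap_mul_vol_self {N : ℕ} {s ρ : ℝ} (hρ : 0 < ρ) :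
    kap N s ρ * volume (ball (0 : Euc N) ρ) = Per ((N:ℝ) + s) (ball (0 : Euc N) ρ) := by
  rw [kap_mul_vol hρ, Per_ball hρ, ← ENNReal.ofReal_mul (by positivity)]
  congr 2
  rw [← Real.rpow_natCast, ← Real.rpow_add hρ]
  congr 1; ring

lemma kap_anti {N : ℕ} {s ρ ρ' : ℝ} (hs0 : 0 < s) (hρ : 0 < ρ) (h : ρ ≤ ρ') :
    kap N s ρ' ≤ kap N s ρ := by
  unfold kap
  gcongr ENNReal.ofReal ?_ * _
  exact Real.rpow_le_rpow_of_nonpos hρ h (by linarith)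

lemma le_of_vol_le {N : ℕ} (hN : 0 < N) {ρ ρ' : ℝ} (hρ : 0 < ρ) (hρ' : 0 < ρ')
    (h : volume (ball (0 : Euc N) ρ) ≤ volume (ball (0 : Euc N) ρ')) : ρ ≤ ρ' := by
  rw [vol_ball hρ, vol_ball hρ'] at h
  have := (ENNReal.mul_le_mul_iff_left vol_one_pos.ne' vol_one_ne_top).1 h
  rw [ENNReal.ofReal_le_ofReal_iff (by positivity)] at this
  exact le_of_pow_le_pow_left₀ hN.ne' hρ'.le this

lemma radial_ae {N : ℕ} {R : ℝ}
    {A : Set (Euc N)} (hN : 0 < N) (hrad : ∀ p q, ‖p‖ < ‖q‖ → q ∈ A → p ∈ A)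
    (hb : ∀ x ∈ A, ‖x‖ ≤ R) : ∃ ρ : ℝ, A =ᵐ[volume] ball (0 : Euc N) ρ := by
  have : Nonempty (Fin N) := ⟨⟨0, hN⟩⟩
  have : Nontrivial (Euc N) := inferInstance
  rcases A.eq_empty_or_nonempty with rfl | hne
  · exact ⟨0, by simp⟩
  set ρ := sSup (norm '' A) with hρd
  have hbdd : BddAbove (norm '' A) := ⟨R, by rintro _ ⟨x, hx, rfl⟩; exact hb x hx⟩
  have hsub : A ⊆ closedBall 0 ρ := fun x hx => by
    rw [mem_closedBall_zero_iff]
    exact le_csSup hbdd ⟨x, hx, rfl⟩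
  have hsup : ball 0 ρ ⊆ A := fun x hx => by
    rw [mem_ball_zero_iff] at hx
    obtain ⟨_, ⟨q, hq, rfl⟩, hlt⟩ := exists_lt_of_lt_csSup (hne.image norm) hx
    exact hrad x q hlt hq
  refine ⟨ρ, ?_⟩
  refine ae_eq_of_subset_of_measure_ge hsup ?_ measurableSet_ball.nullMeasurableSet ?_ |>.symm
  · calc volume A ≤ volume (closedBall (0 : Euc N) ρ) := measure_mono hsub
      _ = volume (ball (0 : Euc N) ρ) := Measure.addHaar_closedBall_eq_addHaar_ball _ _ _
  · exact (lt_of_le_of_lt (measure_mono hsub) measure_closedBall_lt_top).ne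

lemma radial_set {N : ℕ} (hN : 0 < N) {s ρ0 R : ℝ} (hs0 : 0 < s) (hρ0 : 0 < ρ0)
    {A : Set (Euc N)} (hrad : ∀ p q, ‖p‖ < ‖q‖ → q ∈ A → p ∈ A)
    (hb : ∀ x ∈ A, ‖x‖ ≤ R) (hv : volume A ≤ volume (ball (0 : Euc N) ρ0)) :
    kap N s ρ0 * volume A ≤ Per ((N:ℝ) + s) A := by
  obtain ⟨ρ, hae⟩ := radial_ae hN hrad hb
  have hPer : Per ((N:ℝ) + s) A = Per ((N:ℝ) + s) (ball (0 : Euc N) ρ) :=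
    En_congr_ae (indicator_ae_eq_of_ae_eq_set hae)
  rw [measure_congr hae] at hv ⊢
  rw [hPer]
  rcases le_or_gt ρ 0 with h0 | h0
  · rw [ball_eq_empty.2 h0]; simp
  · rw [← kap_mul_vol_self h0]
    gcongr
    exact kap_anti hs0 h0 (le_of_vol_le hN h0 hρ0 hv)

lemma Per_ball_mono {N : ℕ} (hN : 0 < N) {s ρ ρ' : ℝ} (hs1 : s < 1) (hρ : 0 < ρ) (h : ρ ≤ ρ') :
    Per ((N:ℝ) + s) (ball (0 : Euc N) ρ) ≤ Per ((N:ℝ) + s) (ball (0 : Euc N) ρ') := by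
  rw [Per_ball hρ, Per_ball (hρ.trans_le h)]
  gcongr
  have : (1:ℝ) ≤ N := by exact_mod_cast hN
  linarith

lemma le_of_Per_le {N : ℕ} (hN : 0 < N) {s ρ ρ' : ℝ} (hs0 : 0 < s) (hs1 : s < 1) (hρ : 0 < ρ)
    (hρ' : 0 < ρ')
    (h : Per ((N:ℝ) + s) (ball (0 : Euc N) ρ) ≤ Per ((N:ℝ) + s) (ball (0 : Euc N) ρ')) :
    ρ ≤ ρ' := by
  rw [Per_ball hρ, Per_ball hρ'] at h
  have := (ENNReal.mul_le_mul_iff_left (Per_ball_one_pos hN).ne'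
    (Per_ball_one_lt_top hN hs0 hs1).ne).1 h
  rw [ENNReal.ofReal_le_ofReal_iff (by positivity)] at this
  have h1 : (1:ℝ) ≤ N := by exact_mod_cast hN
  exact (Real.rpow_le_rpow_iff hρ.le hρ'.le (by linarith)).1 this

lemma radial_upper {N : ℕ} (hN : 0 < N) {s r : ℝ} (hs1 : s < 1) (hr : 0 < r)
    {A : Set (Euc N)} (hrad : ∀ p q, ‖p‖ < ‖q‖ → q ∈ A → p ∈ A)
    (hb : A ⊆ ball 0 r) : Per ((N:ℝ) + s) A ≤ Per ((N:ℝ) + s) (ball (0 : Euc N) r) := by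
  obtain ⟨ρ, hae⟩ := radial_ae (R := r) hN hrad (fun x hx => by
    have := hb hx; rw [mem_ball_zero_iff] at this; exact this.le)
  have hPer : Per ((N:ℝ) + s) A = Per ((N:ℝ) + s) (ball (0 : Euc N) ρ) :=
    En_congr_ae (indicator_ae_eq_of_ae_eq_set hae)
  rw [hPer]
  rcases le_or_gt ρ 0 with h0 | h0
  · rw [ball_eq_empty.2 h0]
    simp [Per, En, D]
  · refine Per_ball_mono hN hs1 h0 (le_of_vol_le hN h0 hr ?_)
    rw [← measure_congr hae]
    exact measure_mono hb

lemma iso_lip {N : ℕ} (hN : 0 < N) {s ρ0 L M R : ℝ} (hs0 : 0 < s) (hs1 : s < 1) (hρ0 : 0 < ρ0)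
    (hL : 0 ≤ L) {φ : Euc N → ℝ}
    (hlip : ∀ x y, |φ x - φ y| ≤ L * ‖x - y‖) (h0 : ∀ x, 0 ≤ φ x) (hM : ∀ x, φ x ≤ M)
    (hsupp : ∀ x, R < ‖x‖ → φ x = 0)
    (hv : volume {x | 0 < φ x} ≤ volume (ball (0 : Euc N) ρ0)) :
    kap N s ρ0 * ∫⁻ x, ENNReal.ofReal (φ x) ≤ En ((N:ℝ) + s) φ := by
  have hα : 0 ≤ (N:ℝ) + s := by positivity
  obtain ⟨g, hg, hrad⟩ := exists_radial (α := (N:ℝ) + s) hα hL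
    (g := φ) (M := M) (R := R) (e := En ((N:ℝ) + s) φ) (m := ∫⁻ x, ENNReal.ofReal (φ x))
    (V := volume (ball (0 : Euc N) ρ0))
    { lip := hlip, nonneg := h0, bdd := hM, supp := hsupp, en := le_rfl, mass := rfl, vol := hv }
  have hgm : Measurable g := (continuous_of_lip hg.lip).measurable
  refine le_trans ?_ hg.en
  rw [← hg.mass, coarea hgm hg.nonneg, lintegral_eq_lintegral_meas_lt _
    (Eventually.of_forall hg.nonneg) hgm.aemeasurable,
    ← lintegral_const_mul' _ _ (kap_ne_top hN hs0 hs1)]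
  refine setLIntegral_mono' measurableSet_Ioi fun t ht => ?_
  have ht0 : 0 < t := ht
  refine radial_set hN hs0 hρ0 (R := R) (fun p q hpq hq => ?_) (fun x hx => ?_) ?_
  · exact lt_of_lt_of_le hq (hrad p q hpq)
  · by_contra h
    have := hg.supp x (not_le.1 h)
    have hx' : t < g x := hx
    linarith
  · exact (measure_mono fun x (hx : t < g x) => ht0.trans hx).trans hg.vol

end FracIso

namespace FracIso

open scoped Topology RealInnerProductSpace Convolution

set_option linter.unusedSectionVars false

lemma En_conv {N : ℕ} {α : ℝ} {η u : Euc N → ℝ} (hη : Measurable η) (hη0 : ∀ x, 0 ≤ η x)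
    (hη1 : ∫⁻ x, ENNReal.ofReal (η x) = 1) (hu : Measurable u)
    (hintg : ∀ x, Integrable fun t => η t * u (x - t)) :
    En α (fun x => ∫ t, η t * u (x - t)) ≤ En α u := by
  set φ : Euc N → ℝ := fun x => ∫ t, η t * u (x - t) with hφ
  have hDm : Measurable (Function.uncurry (D α u)) := measurable_D α hu
  have h1 : ∀ x y, D α φ x y ≤ ∫⁻ t, ENNReal.ofReal (η t) * D α u (x - t) (y - t) := by
    intro x y
    have e : φ x - φ y = ∫ t, η t * (u (x - t) - u (y - t)) := by
      rw [hφ]; simp only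
      rw [← integral_sub (hintg x) (hintg y)]
      congr 1; ext t; ring
    have hb : ENNReal.ofReal |φ x - φ y| ≤
        ∫⁻ t, ENNReal.ofReal (η t) * ENNReal.ofReal |u (x - t) - u (y - t)| := by
      rw [e, ← Real.norm_eq_abs, ofReal_norm]
      refine (enorm_integral_le_lintegral_enorm _).trans (le_of_eq (lintegral_congr fun t => ?_))
      rw [← ofReal_norm, Real.norm_eq_abs, abs_mul, abs_of_nonneg (hη0 t),
        ENNReal.ofReal_mul (hη0 t)]
    calc D α φ x y ≤ (∫⁻ t, ENNReal.ofReal (η t) * ENNReal.ofReal |u (x - t) - u (y - t)|) *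
          K α (x - y) := by unfold D; gcongr
      _ = _ := by
        rw [← lintegral_mul_const _ (by fun_prop)]
        refine lintegral_congr fun t => ?_
        rw [D, sub_sub_sub_cancel_right, mul_assoc]
  have hFm : Measurable fun w : (Euc N × Euc N) × Euc N =>
      ENNReal.ofReal (η w.2) * D α u (w.1.1 - w.2) (w.1.2 - w.2) := by
    refine Measurable.mul (by fun_prop) ?_
    exact hDm.comp (f := fun w : (Euc N × Euc N) × Euc N => (w.1.1 - w.2, w.1.2 - w.2))
      (by fun_prop)
  have htr : ∀ t, ∫⁻ z : Euc N × Euc N, D α u (z.1 - t) (z.2 - t) = En α u := by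
    intro t
    have hm : Measurable fun z : Euc N × Euc N => D α u (z.1 - t) (z.2 - t) :=
      hDm.comp (f := fun z : Euc N × Euc N => (z.1 - t, z.2 - t)) (by fun_prop)
    calc _ = ∫⁻ x, ∫⁻ y, D α u (x - t) (y - t) := lintegral_prod _ hm.aemeasurable
      _ = ∫⁻ x, ∫⁻ y, D α u (x - t) y := by
        refine lintegral_congr fun x => ?_
        exact lintegral_sub_right_eq_self (fun y => D α u (x - t) y) t
      _ = En α u := lintegral_sub_right_eq_self (fun x => ∫⁻ y, D α u x y) t
  calc En α φ ≤ ∫⁻ x, ∫⁻ y, ∫⁻ t, ENNReal.ofReal (η t) * D α u (x - t) (y - t) :=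
        lintegral_mono fun x => lintegral_mono fun y => h1 x y
    _ = ∫⁻ z : Euc N × Euc N, ∫⁻ t, ENNReal.ofReal (η t) * D α u (z.1 - t) (z.2 - t) :=
        (lintegral_prod (fun z : Euc N × Euc N =>
          ∫⁻ t, ENNReal.ofReal (η t) * D α u (z.1 - t) (z.2 - t))
          hFm.lintegral_prod_right'.aemeasurable).symm
    _ = ∫⁻ t, ∫⁻ z : Euc N × Euc N, ENNReal.ofReal (η t) * D α u (z.1 - t) (z.2 - t) :=
        lintegral_lintegral_swap hFm.aemeasurable
    _ = ∫⁻ t, ENNReal.ofReal (η t) * En α u := by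
        refine lintegral_congr fun t => ?_
        rw [lintegral_const_mul' _ _ ENNReal.ofReal_ne_top, htr]
    _ = En α u := by rw [lintegral_mul_const _ (by fun_prop), hη1, one_mul]

lemma exists_moll {N : ℕ} (α : ℝ) {R0 : ℝ} {O : Set (Euc N)} (hO : MeasurableSet O)
    (hb : ∀ x ∈ O, ‖x‖ ≤ R0) :
    ∃ φ : ℕ → Euc N → ℝ, (∀ n, ∃ L, 0 ≤ L ∧ ∀ x y, |φ n x - φ n y| ≤ L * ‖x - y‖) ∧
      (∀ n x, 0 ≤ φ n x) ∧ (∀ n x, φ n x ≤ 1) ∧ (∀ n x, R0 + 1 < ‖x‖ → φ n x = 0) ∧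
      (∀ n, En α (φ n) ≤ Per α O) ∧
      ∀ᵐ x, Tendsto (fun n => φ n x) atTop (𝓝 (O.indicator (fun _ => (1:ℝ)) x)) := by
  set u : Euc N → ℝ := O.indicator (fun _ => (1:ℝ)) with hu
  have hum : Measurable u := measurable_const.indicator hO
  have hu0 : ∀ x, 0 ≤ u x := fun x => Set.indicator_nonneg (fun _ _ => zero_le_one) x
  have hu1 : ∀ x, u x ≤ 1 := fun x => Set.indicator_le_self' (fun _ _ => zero_le_one) x
  have hvO : volume O ≠ ⊤ := (lt_of_le_of_lt (measure_mono (t := closedBall (0 : Euc N) R0)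
    fun x hx => by simpa using hb x hx) measure_closedBall_lt_top).ne
  have hui : Integrable u := (integrable_indicator_iff hO).2 (integrableOn_const hvO)
  let b : ℕ → ContDiffBump (0 : Euc N) := fun n =>
    { rIn := 1 / (2 * ((n:ℝ) + 1)), rOut := 1 / ((n:ℝ) + 1), rIn_pos := by positivity,
      rIn_lt_rOut := by
        apply one_div_lt_one_div_of_lt <;> linarith [(Nat.cast_nonneg n : (0:ℝ) ≤ n)] }
  have hbo : ∀ n, (b n).rOut ≤ 1 := fun n => by
    change 1 / ((n:ℝ) + 1) ≤ 1
    rw [div_le_one (by positivity)]; linarith [(Nat.cast_nonneg n : (0:ℝ) ≤ n)]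
  set η : ℕ → Euc N → ℝ := fun n => (b n).normed volume with hη
  have hηm : ∀ n, Measurable (η n) := fun n => (b n).continuous_normed.measurable
  have hη0 : ∀ n x, 0 ≤ η n x := fun n x => (b n).nonneg_normed x
  have hηi : ∀ n, Integrable (η n) := fun n => (b n).integrable_normed
  have hη1 : ∀ n, ∫ x, η n x = 1 := fun n => (b n).integral_normed
  have hintg : ∀ n x, Integrable fun t => η n t * u (x - t) := by
    intro n x
    refine (hηi n).mono' (by fun_prop) (Eventually.of_forall fun t => ?_)
    rw [Real.norm_eq_abs, abs_of_nonneg (mul_nonneg (hη0 n t) (hu0 _))]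
    exact mul_le_of_le_one_right (hη0 n t) (hu1 _)
  have hsupp : ∀ n x, R0 + 1 < ‖x‖ → ∫ t, η n t * u (x - t) = 0 := by
    intro n x hx
    refine integral_eq_zero_of_ae (Eventually.of_forall fun t => ?_)
    by_cases ht : x - t ∈ O
    · have h1 := hb _ ht
      have : t ∉ Function.support (η n) := by
        rw [hη]; simp only
        rw [(b n).support_normed_eq, mem_ball_zero_iff, not_lt]
        have := norm_sub_norm_le x t
        linarith [hbo n]
      simp only [Function.mem_support, not_not] at this
      simp [this]
    · simp [hu, ht]
  refine ⟨fun n x => ∫ t, η n t * u (x - t), fun n => ?_, fun n x => ?_, fun n x => ?_, hsupp,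
    fun n => ?_, ?_⟩
  · have hcd : ContDiff ℝ 1 ((η n) ⋆[ContinuousLinearMap.lsmul ℝ ℝ, volume] u) := by
      exact_mod_cast (b n).hasCompactSupport_normed.contDiff_convolution_left
        (ContinuousLinearMap.lsmul ℝ ℝ) (n := 1) (b n).contDiff_normed hui.locallyIntegrable
    have hcs : HasCompactSupport ((η n) ⋆[ContinuousLinearMap.lsmul ℝ ℝ, volume] u) := by
      refine HasCompactSupport.intro (isCompact_closedBall (0 : Euc N) (R0 + 1)) fun x hx => ?_
      exact hsupp n x (by simpa using hx)
    obtain ⟨C, hC⟩ := ContDiff.lipschitzWith_of_hasCompactSupport hcs hcd one_ne_zero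
    refine ⟨C, C.2, fun x y => ?_⟩
    have := hC.dist_le_mul x y
    rw [Real.dist_eq, dist_eq_norm] at this
    exact this
  · exact integral_nonneg fun t => mul_nonneg (hη0 n t) (hu0 _)
  · rw [← hη1 n]
    refine integral_mono (hintg n x) (hηi n) fun t => ?_
    exact mul_le_of_le_one_right (hη0 n t) (hu1 _)
  · refine En_conv (hηm n) (hη0 n) ?_ hum (hintg n)
    rw [← ofReal_integral_eq_lintegral_ofReal (hηi n) (Eventually.of_forall (hη0 n)), hη1]
    simp
  · refine ContDiffBump.ae_convolution_tendsto_right_of_locallyIntegrable (φ := b) (K := 2)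
      ?_ (Eventually.of_forall fun n => ?_) hui.locallyIntegrable
    · exact tendsto_one_div_add_atTop_nhds_zero_nat
    · change 1 / ((n:ℝ) + 1) ≤ 2 * (1 / (2 * ((n:ℝ) + 1)))
      apply le_of_eq; field_simp

lemma iso_set_aux {N : ℕ} (hN : 0 < N) {s ρ0 R0 δ : ℝ} (hs0 : 0 < s) (hs1 : s < 1) (hρ0 : 0 < ρ0)
    (hδ : 0 < δ) (hδ1 : δ < 1)
    {O : Set (Euc N)} (hO : MeasurableSet O) (hb : ∀ x ∈ O, ‖x‖ ≤ R0)
    (hv : volume O < volume (ball (0 : Euc N) ρ0)) :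
    kap N s ρ0 * (ENNReal.ofReal (1 - δ) * volume O) ≤ Per ((N:ℝ) + s) O := by
  obtain ⟨φ, hlip, h0, h1, hsupp, hen, hlim⟩ := exists_moll ((N:ℝ) + s) hO hb
  have hm : ∀ n, Measurable (φ n) := fun n => by
    obtain ⟨L, hL, h⟩ := hlip n
    exact (continuous_of_lip h).measurable
  have hvol : Tendsto (fun n => volume {x | δ < φ n x}) atTop (𝓝 (volume O)) := by
    refine tendsto_measure_of_ae_tendsto_indicator atTop hO
      (fun n => measurableSet_lt measurable_const (hm n))
      (B := closedBall 0 (R0 + 1)) isClosed_closedBall.measurableSet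
      measure_closedBall_lt_top.ne (Eventually.of_forall fun n x hx => ?_) ?_
    · by_contra h
      have := hsupp n x (by simpa using h)
      have hx' : δ < φ n x := hx
      linarith
    · filter_upwards [hlim] with x hx
      by_cases hxO : x ∈ O
      · rw [Set.indicator_of_mem hxO] at hx
        filter_upwards [hx.eventually (lt_mem_nhds hδ1)] with n hn
        exact ⟨fun _ => hxO, fun _ => hn⟩
      · rw [Set.indicator_of_notMem hxO] at hx
        filter_upwards [hx.eventually (gt_mem_nhds hδ)] with n hn
        exact ⟨fun h => absurd hn (not_lt.2 (le_of_lt h)), fun h => absurd h hxO⟩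
  have hev : ∀ᶠ n in atTop, kap N s ρ0 * ∫⁻ x, ENNReal.ofReal (max (φ n x - δ) 0) ≤
      Per ((N:ℝ) + s) O := by
    filter_upwards [hvol.eventually (gt_mem_nhds hv)] with n hn
    obtain ⟨L, hL, hl⟩ := hlip n
    have hcon : ∀ x y, |max (φ n x - δ) 0 - max (φ n y - δ) 0| ≤ |φ n x - φ n y| := by
      intro x y
      refine (abs_max_sub_max_le_max _ _ _ _).trans (max_le ?_ (by simp))
      rw [sub_sub_sub_cancel_right]
    refine le_trans ?_ ((En_mono hcon).trans (hen n))
    refine iso_lip hN hs0 hs1 hρ0 hL (M := 1) (R := R0 + 1) (fun x y => (hcon x y).trans (hl x y))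
      (fun x => le_max_right _ _) (fun x => max_le (by linarith [h1 n x]) zero_le_one)
      (fun x hx => ?_) ?_
    · rw [hsupp n x hx]; exact max_eq_right (by linarith)
    · refine le_trans (measure_mono fun x (hx : 0 < max (φ n x - δ) 0) => ?_) hn.le
      rcases lt_max_iff.1 hx with h | h
      · change δ < φ n x; linarith
      · exact absurd h (lt_irrefl _)
  calc kap N s ρ0 * (ENNReal.ofReal (1 - δ) * volume O)
      = ∫⁻ x, kap N s ρ0 * O.indicator (fun _ => ENNReal.ofReal (1 - δ)) x := by
        rw [lintegral_const_mul' _ _ (kap_ne_top hN hs0 hs1), lintegral_indicator_const hO]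
    _ ≤ ∫⁻ x, liminf (fun n => kap N s ρ0 * ENNReal.ofReal (max (φ n x - δ) 0)) atTop := by
        refine lintegral_mono_ae ?_
        filter_upwards [hlim] with x hx
        have ht : Tendsto (fun n => kap N s ρ0 * ENNReal.ofReal (max (φ n x - δ) 0)) atTop
            (𝓝 (kap N s ρ0 *
              ENNReal.ofReal (max (O.indicator (fun _ => (1:ℝ)) x - δ) 0))) :=
          ENNReal.Tendsto.const_mul
            (ENNReal.tendsto_ofReal ((hx.sub_const δ).max tendsto_const_nhds))
            (Or.inr (kap_ne_top hN hs0 hs1))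
        rw [ht.liminf_eq]
        gcongr
        by_cases hxO : x ∈ O
        · simp only [hxO, Set.indicator_of_mem]
          exact ENNReal.ofReal_le_ofReal (le_max_left _ _)
        · simp [hxO]
    _ ≤ liminf (fun n => ∫⁻ x, kap N s ρ0 * ENNReal.ofReal (max (φ n x - δ) 0)) atTop := by
        refine lintegral_liminf_le fun n => ?_
        have := hm n
        fun_prop
    _ ≤ Per ((N:ℝ) + s) O := by
        refine liminf_le_of_frequently_le' (Eventually.frequently ?_)
        filter_upwards [hev] with n hn
        rwa [lintegral_const_mul' _ _ (kap_ne_top hN hs0 hs1)]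

/-- the fractional isoperimetric inequality for bounded sets -/
lemma iso_set {N : ℕ} (hN : 0 < N) {s ρ0 R0 : ℝ} (hs0 : 0 < s) (hs1 : s < 1) (hρ0 : 0 < ρ0)
    {O : Set (Euc N)} (hO : MeasurableSet O) (hb : ∀ x ∈ O, ‖x‖ ≤ R0)
    (hv : volume O ≤ volume (ball (0 : Euc N) ρ0)) :
    kap N s ρ0 * volume O ≤ Per ((N:ℝ) + s) O := by
  have hC : Per ((N:ℝ) + s) (ball (0 : Euc N) 1) / volume (ball (0 : Euc N) 1) ≠ ⊤ :=
    ENNReal.div_ne_top (Per_ball_one_lt_top hN hs0 hs1).ne vol_one_pos.ne'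
  have hvO : volume O ≠ ⊤ := (hv.trans_lt measure_ball_lt_top).ne
  have hlim : Tendsto (fun δ : ℝ => kap N s (ρ0 + δ) * (ENNReal.ofReal (1 - δ) * volume O))
      (𝓝[>] 0) (𝓝 (kap N s ρ0 * volume O)) := by
    have h1 : Tendsto (fun δ : ℝ => (ρ0 + δ) ^ (-s)) (𝓝[>] 0) (𝓝 (ρ0 ^ (-s))) := by
      have : ContinuousAt (fun δ : ℝ => (ρ0 + δ) ^ (-s)) 0 :=
        ContinuousAt.rpow_const (by fun_prop) (Or.inl (by simpa using hρ0.ne'))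
      have := this.tendsto
      simp only [add_zero] at this
      exact this.mono_left nhdsWithin_le_nhds
    have h2 : Tendsto (fun δ : ℝ => 1 - δ) (𝓝[>] 0) (𝓝 1) := by
      have : Tendsto (fun δ : ℝ => 1 - δ) (𝓝 0) (𝓝 (1 - 0)) :=
        (continuous_const.sub continuous_id).tendsto 0
      rw [sub_zero] at this
      exact this.mono_left nhdsWithin_le_nhds
    have e1 := ENNReal.Tendsto.mul_const (ENNReal.tendsto_ofReal h1) (b := _) (Or.inr hC)
    have e2 := ENNReal.Tendsto.mul_const (ENNReal.tendsto_ofReal h2) (b := _) (Or.inr hvO)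
    rw [ENNReal.ofReal_one, one_mul] at e2
    exact ENNReal.Tendsto.mul e1 (Or.inr hvO) e2 (Or.inr (kap_ne_top hN hs0 hs1))
  refine le_of_tendsto hlim ?_
  filter_upwards [Ioo_mem_nhdsGT (zero_lt_one' ℝ)] with δ hδ
  refine iso_set_aux hN hs0 hs1 (by linarith [hδ.1]) hδ.1 hδ.2 hO hb (hv.trans_lt ?_)
  refine lt_of_not_ge fun h => ?_
  have := le_of_vol_le hN (by linarith [hδ.1]) hρ0 h
  linarith [hδ.1]

end FracIso

namespace FracIso

open scoped Topology RealInnerProductSpace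

set_option linter.unusedSectionVars false

lemma exists_ball_vol {N : ℕ} (hN : 0 < N) {V : ℝ≥0∞} (h0 : V ≠ 0) (ht : V ≠ ⊤) :
    ∃ ρ : ℝ, 0 < ρ ∧ volume (ball (0 : Euc N) ρ) = V := by
  have hV : 0 < (V / volume (ball (0 : Euc N) 1)).toReal := by
    refine ENNReal.toReal_pos (ENNReal.div_ne_zero.2 ⟨h0, vol_one_ne_top⟩)
      (ENNReal.div_ne_top ht vol_one_pos.ne')
  refine ⟨(V / volume (ball (0 : Euc N) 1)).toReal ^ ((N:ℝ)⁻¹), by positivity, ?_⟩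
  rw [vol_ball (by positivity), Real.rpow_inv_natCast_pow hV.le hN.ne',
    ENNReal.ofReal_toReal (ENNReal.div_ne_top ht vol_one_pos.ne'),
    ENNReal.div_mul_cancel vol_one_pos.ne' vol_one_ne_top]

lemma vol_ne_top {N : ℕ} {R0 : ℝ} {O : Set (Euc N)} (hb : ∀ x ∈ O, ‖x‖ ≤ R0) :
    volume O ≠ ⊤ := (lt_of_le_of_lt (measure_mono (t := closedBall (0 : Euc N) R0)
    fun x hx => by simpa using hb x hx) measure_closedBall_lt_top).ne

lemma iso_cheeger {N : ℕ} (hN : 0 < N) {s r R0 : ℝ} (hs0 : 0 < s) (hs1 : s < 1) (hr : 0 < r)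
    {O : Set (Euc N)} (hO : MeasurableSet O) (hb : ∀ x ∈ O, ‖x‖ ≤ R0) :
    kap N s r * volume (O ∩ ball 0 r) ≤ Per ((N:ℝ) + s) O := by
  rcases le_or_gt (volume O) (volume (ball (0 : Euc N) r)) with h | h
  · refine le_trans ?_ (iso_set hN hs0 hs1 hr hO hb h)
    gcongr
    exact Set.inter_subset_left
  · obtain ⟨ρ, hρ, hv⟩ := exists_ball_vol hN (bot_le.trans_lt h).ne' (vol_ne_top hb)
    rw [← hv] at h
    calc kap N s r * volume (O ∩ ball 0 r) ≤ kap N s r * volume (ball (0 : Euc N) r) := by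
          gcongr; exact Set.inter_subset_right
      _ = Per ((N:ℝ) + s) (ball (0 : Euc N) r) := kap_mul_vol_self hr
      _ ≤ Per ((N:ℝ) + s) (ball (0 : Euc N) ρ) :=
          Per_ball_mono hN hs1 hr (le_of_vol_le hN hr hρ h.le)
      _ = kap N s ρ * volume O := by rw [← kap_mul_vol_self hρ, hv]
      _ ≤ _ := iso_set hN hs0 hs1 hρ hO hb hv.ge

lemma main_ineq {N : ℕ} (hN : 0 < N) {s r R0 : ℝ} (hs0 : 0 < s) (hs1 : s < 1) (hr : 0 < r)
    {φ : Euc N → ℝ} (hφ : Measurable φ) (hsupp : ∀ x, R0 < ‖x‖ → φ x = 0) :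
    kap N s r * ∫⁻ x in ball 0 r, ENNReal.ofReal |φ x| ≤ En ((N:ℝ) + s) φ := by
  refine le_trans ?_ (En_mono (v := fun x => |φ x|) fun x y => abs_abs_sub_abs_le _ _)
  have hm : Measurable fun x => |φ x| := hφ.abs
  rw [coarea hm fun x => abs_nonneg _, lintegral_eq_lintegral_meas_lt _
    (Eventually.of_forall fun x => abs_nonneg _) hm.aemeasurable,
    ← lintegral_const_mul' _ _ (kap_ne_top hN hs0 hs1)]
  refine setLIntegral_mono' measurableSet_Ioi fun t ht => ?_
  have ht0 : 0 < t := ht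
  have hms : MeasurableSet {x | t < |φ x|} := measurableSet_lt measurable_const hm
  rw [Measure.restrict_apply hms]
  refine iso_cheeger hN hs0 hs1 hr hms (R0 := R0) fun x hx => ?_
  by_contra h
  have h1 : t < |φ x| := hx
  rw [hsupp x (not_le.1 h), abs_zero] at h1
  linarith

lemma ofReal_D {N : ℕ} {α : ℝ} {u : Euc N → ℝ} (x y : Euc N) :
    ENNReal.ofReal (|u x - u y| / ‖x - y‖ ^ α) = D α u x y := by
  unfold D K
  rcases eq_or_ne x y with rfl | hxy
  · simp
  · have hpos : 0 < ‖x - y‖ := norm_pos_iff.2 (sub_ne_zero.2 hxy)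
    rw [ENNReal.ofReal_rpow_of_pos hpos, ← ENNReal.ofReal_mul (abs_nonneg _), Real.rpow_neg hpos.le,
      div_eq_mul_inv]

lemma int_eq {N : ℕ} {α : ℝ} {u : Euc N → ℝ} (hu : Measurable u) :
    ∫ z : Euc N × Euc N, |u z.1 - u z.2| / ‖z.1 - z.2‖ ^ α = (En α u).toReal := by
  rw [integral_eq_lintegral_of_nonneg_ae (Eventually.of_forall fun z => by positivity), En_eq_prod hu]
  · simp only [ofReal_D]
  · exact Measurable.aestronglyMeasurable (by fun_prop)

lemma gag_eq {N : ℕ} {s : ℝ} {u : Euc N → ℝ} (hu : Measurable u) :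
    gag N 1 s u = (En ((N:ℝ) + s) u).toReal := by
  rw [← int_eq hu, gag]
  simp only [Real.rpow_one, mul_one]

lemma sPer_eq {N : ℕ} {s : ℝ} {A : Set (Euc N)} (hA : MeasurableSet A) :
    sPer N s A = (Per ((N:ℝ) + s) A).toReal :=
  int_eq (measurable_const.indicator hA)

lemma test_facts {N : ℕ} {R : ℝ} {φ : Euc N → ℝ} (h : TestOn (ball (0 : Euc N) R) φ) :
    Continuous φ ∧ (∀ x, R < ‖x‖ → φ x = 0) ∧
    (∃ L, 0 ≤ L ∧ ∀ x y, |φ x - φ y| ≤ L * ‖x - y‖) ∧ ∃ M, ∀ x y, |φ x - φ y| ≤ M := by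
  obtain ⟨hc, hcs, hsub⟩ := h
  refine ⟨hc.continuous, fun x hx => ?_, ?_, ?_⟩
  · by_contra hne
    have := hsub (subset_tsupport φ hne)
    rw [mem_ball_zero_iff] at this
    linarith
  · obtain ⟨C, hC⟩ := ContDiff.lipschitzWith_of_hasCompactSupport hcs hc (by simp)
    refine ⟨C, C.2, fun x y => ?_⟩
    have := hC.dist_le_mul x y
    rw [Real.dist_eq, dist_eq_norm] at this
    exact this
  · obtain ⟨C, hC⟩ := hcs.exists_bound_of_continuous hc.continuous
    refine ⟨C + C, fun x y => ?_⟩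
    have h1 := hC x
    have h2 := hC y
    rw [Real.norm_eq_abs] at h1 h2
    exact (abs_sub _ _).trans (add_le_add h1 h2)

lemma test_ineq {N : ℕ} (hN : 0 < N) {s r R : ℝ} (hs0 : 0 < s) (hs1 : s < 1) (hr : 0 < r)
    {φ : Euc N → ℝ} (h : TestOn (ball (0 : Euc N) R) φ) :
    (kap N s r).toReal * ∫ x in ball (0 : Euc N) r, |φ x| ≤ gag N 1 s φ := by
  obtain ⟨hc, hsupp, ⟨L, hL, hlip⟩, M, hM⟩ := test_facts h
  rw [gag_eq hc.measurable, integral_eq_lintegral_of_nonneg_ae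
    (Eventually.of_forall fun x => abs_nonneg _) hc.abs.aestronglyMeasurable, ← ENNReal.toReal_mul]
  exact ENNReal.toReal_mono (En_lt_top hN hs0 hs1 hL hlip hM hsupp).ne
    (main_ineq hN hs0 hs1 hr hc.measurable hsupp)

lemma kap_pos {N : ℕ} (hN : 0 < N) {s r : ℝ} (hr : 0 < r) : kap N s r ≠ 0 := by
  unfold kap
  refine mul_ne_zero (ENNReal.ofReal_pos.2 (by positivity)).ne' ?_
  exact ENNReal.div_ne_zero.2 ⟨(Per_ball_one_pos hN).ne', vol_one_ne_top⟩

lemma eq_ball {N : ℕ} {r : ℝ} (hr : 0 < r) {O : Set (Euc N)} (hO : IsOpen O) (hs : SmoothBdry O)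
    (h1 : volume (O \ ball 0 r) = 0) (h2 : volume (ball 0 r \ O) = 0) : O = ball 0 r := by
  obtain ⟨f, hf, rfl, hreg⟩ := hs
  apply Set.Subset.antisymm
  · rw [← interior_closedBall (0 : Euc N) hr.ne']
    refine interior_maximal ?_ hO
    rw [← Set.sdiff_eq_empty]
    refine ((hO.sdiff isClosed_closedBall).measure_eq_zero_iff volume).1 ?_
    exact measure_mono_null (Set.sdiff_subset_sdiff_right ball_subset_closedBall) h1
  · have hle : ∀ y ∈ ball (0 : Euc N) r, f y ≤ 0 := by
      have hop : IsOpen (ball (0 : Euc N) r ∩ {y | 0 < f y}) :=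
        isOpen_ball.inter (isOpen_lt continuous_const hf.continuous)
      have hsub : ball (0 : Euc N) r ∩ {y | 0 < f y} ⊆ ball 0 r \ {x | f x < 0} :=
        fun y hy => ⟨hy.1, fun h => lt_asymm (show f y < 0 from h) hy.2⟩
      have := (hop.measure_eq_zero_iff volume).1 (measure_mono_null hsub h2)
      intro y hy
      by_contra hlt
      have hm : y ∈ ball (0 : Euc N) r ∩ {y | 0 < f y} := ⟨hy, not_le.1 hlt⟩
      rw [this] at hm
      exact hm
    intro x hx
    by_contra hxO
    have hx0 : f x = 0 := le_antisymm (hle x hx) (not_lt.1 hxO)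
    refine hreg x hx0 (IsLocalMax.fderiv_eq_zero ?_)
    filter_upwards [isOpen_ball.mem_nhds hx] with y hy
    rw [hx0]
    exact hle y hy

lemma part2 {N : ℕ} (hN : 0 < N) {s r R0 : ℝ} (hs0 : 0 < s) (hs1 : s < 1) (hr : 0 < r)
    {O : Set (Euc N)} (hO : IsOpen O) (hs : SmoothBdry O) (hb : ∀ x ∈ O, ‖x‖ ≤ R0)
    (h : sPer N s O / (volume (O ∩ ball (0 : Euc N) r)).toReal = (kap N s r).toReal) :
    O = ball 0 r := by
  have hk0 := kap_pos hN (s := s) hr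
  have hkt := kap_ne_top (ρ := r) hN hs0 hs1
  have hkpos : 0 < (kap N s r).toReal := ENNReal.toReal_pos hk0 hkt
  have hvO := vol_ne_top hb
  have hit : volume (O ∩ ball 0 r) ≠ ⊤ :=
    ((measure_mono Set.inter_subset_left).trans_lt hvO.lt_top).ne
  have hm0 : (volume (O ∩ ball (0 : Euc N) r)).toReal ≠ 0 := by
    intro h0
    rw [h0, div_zero] at h
    exact hkpos.ne h
  have hP : sPer N s O = (kap N s r).toReal * (volume (O ∩ ball (0 : Euc N) r)).toReal :=
    (div_eq_iff hm0).1 h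
  rw [sPer_eq hO.measurableSet, ← ENNReal.toReal_mul] at hP
  have hi0 : volume (O ∩ ball 0 r) ≠ 0 := fun h => hm0 (by rw [h]; simp)
  have hne : (Per ((N:ℝ) + s) O) ≠ ⊤ := by
    intro ht
    rw [ht, ENNReal.toReal_top] at hP
    exact (ENNReal.toReal_pos (mul_ne_zero hk0 hi0) (ENNReal.mul_ne_top hkt hit)).ne hP
  have hPe : Per ((N:ℝ) + s) O = kap N s r * volume (O ∩ ball 0 r) :=
    (ENNReal.toReal_eq_toReal_iff' hne (ENNReal.mul_ne_top hkt hit)).1 hP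
  have hv0 : volume O ≠ 0 := fun h => hi0 (measure_mono_null Set.inter_subset_left h)
  obtain ⟨ρ, hρ, hv⟩ := exists_ball_vol hN hv0 hvO
  have hiso : kap N s ρ * volume O ≤ kap N s r * volume (O ∩ ball 0 r) :=
    hPe ▸ iso_set hN hs0 hs1 hρ hO.measurableSet hb hv.ge
  have hrρ : r ≤ ρ := by
    have h1 : kap N s ρ * volume O ≤ kap N s r * volume O :=
      hiso.trans (by gcongr; exact Set.inter_subset_left)
    have h2 := (ENNReal.mul_le_mul_iff_left hv0 hvO).1 h1
    unfold kap at h2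
    have h3 := (ENNReal.mul_le_mul_iff_left
      (ENNReal.div_ne_zero.2 ⟨(Per_ball_one_pos hN).ne', vol_one_ne_top⟩)
      (ENNReal.div_ne_top (Per_ball_one_lt_top hN hs0 hs1).ne vol_one_pos.ne')).1 h2
    rw [ENNReal.ofReal_le_ofReal_iff (by positivity)] at h3
    exact (Real.rpow_le_rpow_iff_of_neg hρ hr (by linarith)).1 h3
  have hρr : ρ ≤ r := by
    refine le_of_Per_le hN hs0 hs1 hρ hr ?_
    rw [← kap_mul_vol_self hρ, ← kap_mul_vol_self hr, hv]
    exact hiso.trans (by gcongr; exact Set.inter_subset_right)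
  obtain rfl : ρ = r := le_antisymm hρr hrρ
  have hle : volume O ≤ volume (O ∩ ball 0 ρ) := (ENNReal.mul_le_mul_iff_right hk0 hkt).1 hiso
  have e1 : volume (O ∩ ball 0 ρ) = volume O :=
    le_antisymm (measure_mono Set.inter_subset_left) hle
  refine eq_ball hr hO hs ?_ ?_
  · rw [← Set.sdiff_inter_self_eq_sdiff, Set.inter_comm, measure_sdiff Set.inter_subset_left
      (hO.inter isOpen_ball).measurableSet.nullMeasurableSet hit, e1, tsub_self]
  · rw [← Set.sdiff_inter_self_eq_sdiff, measure_sdiff Set.inter_subset_right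
      (hO.inter isOpen_ball).measurableSet.nullMeasurableSet hit, e1, hv, tsub_self]

lemma test_exists {N : ℕ} (hN : 0 < N) {s ρ r : ℝ} (hs0 : 0 < s) (hs1 : s < 1) (hρ : 0 < ρ)
    (hρr : ρ < r) :
    ∃ φ : Euc N → ℝ, TestOn (ball (0 : Euc N) r) φ ∧ (∀ x, 0 ≤ φ x) ∧
      (volume (ball (0 : Euc N) ρ)).toReal ≤ ∫ x in ball (0 : Euc N) r, |φ x| ∧
      gag N 1 s φ ≤ (Per ((N:ℝ) + s) (ball (0 : Euc N) r)).toReal := by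
  have hr : 0 < r := hρ.trans hρr
  obtain ⟨ρ', h1, h2⟩ := exists_between hρr
  have hρ' : 0 < ρ' := hρ.trans h1
  have hd : 0 < ρ' ^ 2 - ρ ^ 2 := by nlinarith
  set φ : Euc N → ℝ := fun x => Real.smoothTransition ((ρ' ^ 2 - ‖x‖ ^ 2) / (ρ' ^ 2 - ρ ^ 2))
    with hφ
  have hcd : ContDiff ℝ (⊤ : ℕ∞) φ := by
    refine Real.smoothTransition.contDiff.comp ?_
    exact (contDiff_const.sub (contDiff_norm_sq ℝ)).div_const _
  have h0 : ∀ x, 0 ≤ φ x := fun x => Real.smoothTransition.nonneg _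
  have hle1 : ∀ x, φ x ≤ 1 := fun x => Real.smoothTransition.le_one _
  have hz : ∀ x, ρ' ≤ ‖x‖ → φ x = 0 := by
    intro x hx
    refine Real.smoothTransition.zero_of_nonpos (div_nonpos_of_nonpos_of_nonneg ?_ hd.le)
    nlinarith
  have ho : ∀ x, ‖x‖ < ρ → φ x = 1 := by
    intro x hx
    refine Real.smoothTransition.one_of_one_le ((one_le_div hd).2 ?_)
    nlinarith [norm_nonneg x]
  have hts : tsupport φ ⊆ closedBall 0 ρ' := by
    refine closure_minimal (fun x hx => ?_) isClosed_closedBall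
    rw [mem_closedBall_zero_iff]
    by_contra h
    exact hx (hz x (not_le.1 h).le)
  have hcs : HasCompactSupport φ :=
    (isCompact_closedBall (0 : Euc N) ρ').of_isClosed_subset (isClosed_tsupport φ) hts
  have htest : TestOn (ball (0 : Euc N) r) φ :=
    ⟨hcd, hcs, hts.trans (closedBall_subset_ball h2)⟩
  have hφc : Continuous φ := hcd.continuous
  have hanti : ∀ p q : Euc N, ‖p‖ < ‖q‖ → φ q ≤ φ p := by
    intro p q hpq
    refine Real.smoothTransition.monotone ?_
    gcongr
  refine ⟨φ, htest, h0, ?_, ?_⟩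
  · have hi : Integrable fun x => |φ x| := (hφc.integrable_of_hasCompactSupport hcs).abs
    calc (volume (ball (0 : Euc N) ρ)).toReal = ∫ x in ball (0 : Euc N) ρ, (1:ℝ) := by
          simp [Measure.real]
      _ = ∫ x in ball (0 : Euc N) ρ, |φ x| := by
          refine setIntegral_congr_fun measurableSet_ball fun x hx => ?_
          rw [ho x (by simpa using hx), abs_one]
      _ ≤ _ := setIntegral_mono_set hi.integrableOn (Eventually.of_forall fun x => abs_nonneg _)
          (ball_subset_ball hρr.le).eventuallyLE
  · have hPt : Per ((N:ℝ) + s) (ball (0 : Euc N) r) ≠ ⊤ := by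
      rw [Per_ball hr]
      exact ENNReal.mul_ne_top ENNReal.ofReal_ne_top (Per_ball_one_lt_top hN hs0 hs1).ne
    rw [gag_eq hφc.measurable]
    refine ENNReal.toReal_mono hPt ?_
    rw [coarea hφc.measurable h0]
    calc ∫⁻ t in Set.Ioi (0:ℝ), Per ((N:ℝ) + s) {x | t < φ x}
        ≤ ∫⁻ t in Set.Ioi (0:ℝ), (Set.Ioo (0:ℝ) 1).indicator
            (fun _ => Per ((N:ℝ) + s) (ball (0 : Euc N) r)) t := by
          refine setLIntegral_mono' measurableSet_Ioi fun t ht => ?_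
          have ht0 : 0 < t := ht
          rcases lt_or_ge t 1 with ht1 | ht1
          · rw [Set.indicator_of_mem (Set.mem_Ioo.2 ⟨ht0, ht1⟩)]
            refine radial_upper hN hs1 hr (fun p q hpq hq => ?_) (fun x hx => ?_)
            · exact lt_of_lt_of_le (show t < φ q from hq) (hanti p q hpq)
            · rw [mem_ball_zero_iff]
              by_contra h
              have hx' : t < φ x := hx
              rw [hz x (by linarith)] at hx'
              linarith
          · have : {x | t < φ x} = ∅ := by
              ext x
              simp only [Set.mem_ofPred_eq, Set.mem_empty_iff_false, iff_false, not_lt]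
              exact (hle1 x).trans ht1
            rw [this]
            simp [Per, En, D]
      _ ≤ ∫⁻ t, (Set.Ioo (0:ℝ) 1).indicator
            (fun _ => Per ((N:ℝ) + s) (ball (0 : Euc N) r)) t := setLIntegral_le_lintegral _ _
      _ = Per ((N:ℝ) + s) (ball (0 : Euc N) r) := by
          rw [lintegral_indicator_const measurableSet_Ioo]; simp

lemma gag_smul {N : ℕ} {s c : ℝ} (hc : 0 < c) (u : Euc N → ℝ) :
    gag N 1 s (fun x => c * u x) = c * gag N 1 s u := by
  unfold gag
  rw [← integral_const_mul]
  congr 1; ext z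
  rw [← mul_sub, abs_mul, abs_of_pos hc, Real.rpow_one, Real.rpow_one, mul_div_assoc]

lemma TestOn_mul {N : ℕ} {c r R : ℝ} (hR : r ≤ R) {u : Euc N → ℝ}
    (h : TestOn (ball (0 : Euc N) r) u) : TestOn (ball (0 : Euc N) R) (fun x => c * u x) := by
  obtain ⟨h1, h2, h3⟩ := h
  refine ⟨contDiff_const.mul h1, h2.mul_left, ?_⟩
  exact ((tsupport_mul_subset_right (f := fun _ => c) (g := u)).trans h3).trans (ball_subset_ball hR)

end FracIso


theorem stmt11 (N : ℕ) (hN : 0 < N) (s r R : ℝ) (hs0 : 0 < s) (hs1 : s < 1)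
    (hr : 0 < r) (hrR : r ≤ R) :
    (sInf { c | ∃ φ : Euc N → ℝ, TestOn (ball (0 : Euc N) R) φ ∧
        (∫ x in ball (0 : Euc N) r, |φ x|) = 1 ∧ c = gag N 1 s φ } =
      sPer N s (ball (0 : Euc N) r) / (volume (ball (0 : Euc N) r)).toReal) ∧
    (∀ O : Set (Euc N), IsOpen O → IsCompact (closure O) → closure O ⊆ ball (0 : Euc N) R →
      SmoothBdry O →
      sPer N s O / (volume (O ∩ ball (0 : Euc N) r)).toReal =
        sPer N s (ball (0 : Euc N) r) / (volume (ball (0 : Euc N) r)).toReal →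
      ∃ v : Euc N, O = ball v r) ∧
    (∀ φ : Euc N → ℝ, TestOn (ball (0 : Euc N) R) φ →
      (volume (ball (0 : Euc N) r)).toReal⁻¹ * ∫ x in ball (0 : Euc N) r, |φ x| ≤
        (sPer N s (ball (0 : Euc N) r))⁻¹ * gag N 1 s φ) := by
  set B := ball (0 : Euc N) r with hB
  have hk0 := FracIso.kap_pos hN (s := s) hr
  have hkt := FracIso.kap_ne_top (ρ := r) hN hs0 hs1
  have hk : 0 < (FracIso.kap N s r).toReal := ENNReal.toReal_pos hk0 hkt
  have hV : 0 < (volume B).toReal :=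
    ENNReal.toReal_pos (isOpen_ball.measure_pos _ ⟨0, by simpa [hB] using hr⟩).ne'
      measure_ball_lt_top.ne
  have hP : sPer N s B = (FracIso.kap N s r).toReal * (volume B).toReal := by
    rw [FracIso.sPer_eq measurableSet_ball, ← FracIso.kap_mul_vol_self hr, ENNReal.toReal_mul]
  have hq : sPer N s B / (volume B).toReal = (FracIso.kap N s r).toReal := by
    rw [hP, mul_div_assoc, div_self hV.ne', mul_one]
  rw [hq]
  refine ⟨?_, ?_, ?_⟩
  · have key : ∀ w, (FracIso.kap N s r).toReal < w → ∃ a ∈ { c | ∃ φ : Euc N → ℝ,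
        TestOn (ball (0 : Euc N) R) φ ∧ (∫ x in B, |φ x|) = 1 ∧ c = gag N 1 s φ }, a < w := by
      intro w hw
      have hlim : Tendsto (fun ρ : ℝ => sPer N s B / (ρ ^ N * (volume (ball (0 : Euc N) 1)).toReal))
          (nhdsWithin r (Set.Iio r)) (nhds (sPer N s B /
            (r ^ N * (volume (ball (0 : Euc N) 1)).toReal))) := by
        have h1 : 0 < (volume (ball (0 : Euc N) 1)).toReal :=
          ENNReal.toReal_pos FracIso.vol_one_pos.ne' FracIso.vol_one_ne_top
        have : ContinuousAt (fun ρ : ℝ => sPer N s B /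
            (ρ ^ N * (volume (ball (0 : Euc N) 1)).toReal)) r :=
          ContinuousAt.div (by fun_prop) (by fun_prop) (by positivity)
        exact this.tendsto.mono_left nhdsWithin_le_nhds
      have hvol : ∀ ρ : ℝ, 0 < ρ → (volume (ball (0 : Euc N) ρ)).toReal =
          ρ ^ N * (volume (ball (0 : Euc N) 1)).toReal := by
        intro ρ hρ
        rw [FracIso.vol_ball hρ, ENNReal.toReal_mul, ENNReal.toReal_ofReal (by positivity)]
      rw [← hvol r hr, hq] at hlim
      obtain ⟨ρ, hρw, hρ0, hρr⟩ := ((hlim.eventually (gt_mem_nhds hw)).and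
        (Ioo_mem_nhdsLT hr)).exists
      rw [← hvol ρ hρ0] at hρw
      obtain ⟨φ, ht, h0, hI, hg⟩ := FracIso.test_exists hN hs0 hs1 hρ0 hρr
      have hVρ : 0 < (volume (ball (0 : Euc N) ρ)).toReal :=
        ENNReal.toReal_pos (isOpen_ball.measure_pos _ ⟨0, by simpa using hρ0⟩).ne'
          measure_ball_lt_top.ne
      set I := ∫ x in ball (0 : Euc N) r, |φ x| with hId
      have hIp : 0 < I := hVρ.trans_le hI
      refine ⟨_, ⟨fun x => I⁻¹ * φ x, FracIso.TestOn_mul hrR ht, ?_, rfl⟩, ?_⟩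
      · simp only [abs_mul, abs_of_pos (inv_pos.2 hIp)]
        rw [integral_const_mul, ← hId, inv_mul_cancel₀ hIp.ne']
      · rw [FracIso.gag_smul (inv_pos.2 hIp)]
        refine lt_of_le_of_lt ?_ hρw
        rw [inv_mul_eq_div]
        rw [← FracIso.sPer_eq measurableSet_ball] at hg
        have : 0 ≤ sPer N s B := by rw [hP]; positivity
        exact div_le_div₀ this hg hVρ hI
    refine csInf_eq_of_forall_ge_of_forall_gt_exists_lt ?_ ?_ key
    · obtain ⟨a, ha, _⟩ := key _ (lt_add_one _)
      exact ⟨a, ha⟩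
    · rintro c ⟨φ, ht, hI, rfl⟩
      have := FracIso.test_ineq hN hs0 hs1 hr ht
      rwa [hI, mul_one] at this
  · intro O hO _ hsub hsm heq
    refine ⟨0, FracIso.part2 hN hs0 hs1 hr hO hsm (R0 := R) (fun x hx => ?_) heq⟩
    have := hsub (subset_closure hx)
    rw [mem_ball_zero_iff] at this
    exact this.le
  · intro φ ht
    have := FracIso.test_ineq hN hs0 hs1 hr ht
    rw [hP, mul_inv, mul_comm _ (volume B).toReal⁻¹, mul_assoc]
    refine mul_le_mul_of_nonneg_left ?_ (by positivity)
    rw [inv_mul_eq_div, le_div_iff₀ hk, mul_comm]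
    exact this
end
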